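/- arXiv:1402.1061 — 2 statements merged into one kernel-verified Lean document; each statement's English description precedes it below -/
import Mathlib

section
/- Let N ≥ 2, p > 1, p − 1 < q < p and R > 0, and let u be a strong solution of (E) on ℝ^N ∖ \overline{B}_R(0) (the complement of the closed ball of radius R centered at 0). Then there exists M ∈ ℝ such that u(x) → M as |x| → ∞. -/
open Metric Set Filter Topology MeasureTheory

/-- The vector field `x ↦ |∇u(x)|^{p-2} ∇u(x)`. -/
noncomputable def pGradField {N : ℕ} (p : ℝ) (u : EuclideanSpace ℝ (Fin N) → ℝ)
    (x : EuclideanSpace ℝ (Fin N)) : EuclideanSpace ℝ (Fin N) :=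
  ‖gradient u x‖ ^ (p - 2) • gradient u x

/-- A strong solution of `(E) : -Δ_p u + |∇u|^q = 0` on an open set `G ⊆ ℝ^N`. -/
def IsStrongSolution {N : ℕ} (p q : ℝ) (G : Set (EuclideanSpace ℝ (Fin N)))
    (u : EuclideanSpace ℝ (Fin N) → ℝ) : Prop :=
  ContDiffOn ℝ 1 u G ∧
  ContDiffOn ℝ 3 u {x | x ∈ G ∧ gradient u x ≠ 0} ∧
  ∀ x ∈ G, DifferentiableAt ℝ (pGradField p u) x ∧
    LinearMap.trace ℝ (EuclideanSpace ℝ (Fin N))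
      (fderiv ℝ (pGradField p u) x : EuclideanSpace ℝ (Fin N) →ₗ[ℝ] EuclideanSpace ℝ (Fin N))
      = ‖gradient u x‖ ^ q

/-- The `i`-th partial derivative of `f`. -/
noncomputable def partialDeriv {N : ℕ} (i : Fin N) (f : EuclideanSpace ℝ (Fin N) → ℝ)
    (x : EuclideanSpace ℝ (Fin N)) : ℝ :=
  fderiv ℝ f x (EuclideanSpace.single i 1)

section calculus

variable {N : ℕ} {f g u : EuclideanSpace ℝ (Fin N) → ℝ} {x : EuclideanSpace ℝ (Fin N)}

theorem ContDiffAt.partialDeriv {n m : WithTop ℕ∞} (hf : ContDiffAt ℝ n f x) (h : m + 1 ≤ n)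
    (i : Fin N) : ContDiffAt ℝ m (partialDeriv i f) x :=
  (hf.fderiv_right h).clm_apply contDiffAt_const

theorem fderiv_partialDeriv (hf : ContDiffAt ℝ 2 f x) (i : Fin N)
    (a : EuclideanSpace ℝ (Fin N)) :
    fderiv ℝ (partialDeriv i f) x a
      = fderiv ℝ (fderiv ℝ f) x a (EuclideanSpace.single i 1) := by
  have h : DifferentiableAt ℝ (fderiv ℝ f) x :=
    (hf.fderiv_right (m := 1) (by norm_num)).differentiableAt (by norm_num)
  have := (h.hasFDerivAt.clm_apply
    (hasFDerivAt_const (EuclideanSpace.single i (1 : ℝ)) x)).fderiv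
  change fderiv ℝ (fun y => fderiv ℝ f y (EuclideanSpace.single i 1)) x a = _
  rw [this]
  simp

theorem partialDeriv_comm (hf : ContDiffAt ℝ 2 f x) (i j : Fin N) :
    partialDeriv i (partialDeriv j f) x = partialDeriv j (partialDeriv i f) x := by
  have h := hf.isSymmSndFDerivAt (by simp)
  rw [partialDeriv, partialDeriv, fderiv_partialDeriv hf, fderiv_partialDeriv hf]
  exact h.eq _ _

theorem partialDeriv_congr (h : f =ᶠ[𝓝 x] g) (i : Fin N) :
    partialDeriv i f x = partialDeriv i g x := by
  rw [partialDeriv, partialDeriv, h.fderiv_eq]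

theorem partialDeriv_mul (hf : DifferentiableAt ℝ f x) (hg : DifferentiableAt ℝ g x)
    (i : Fin N) : partialDeriv i (fun y => f y * g y) x
      = f x * partialDeriv i g x + partialDeriv i f x * g x := by
  rw [partialDeriv, fderiv_fun_mul hf hg]
  simp [partialDeriv, mul_comm]

theorem partialDeriv_const_mul (hf : DifferentiableAt ℝ f x) (c : ℝ) (i : Fin N) :
    partialDeriv i (fun y => c * f y) x = c * partialDeriv i f x := by
  rw [partialDeriv, fderiv_const_mul hf]
  simp [partialDeriv]

theorem partialDeriv_sub (hf : DifferentiableAt ℝ f x) (hg : DifferentiableAt ℝ g x)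
    (i : Fin N) : partialDeriv i (fun y => f y - g y) x
      = partialDeriv i f x - partialDeriv i g x := by
  rw [partialDeriv, fderiv_fun_sub hf hg]
  simp [partialDeriv]

theorem partialDeriv_sum {ι : Type*} (s : Finset ι) {F : ι → EuclideanSpace ℝ (Fin N) → ℝ}
    (hF : ∀ k ∈ s, DifferentiableAt ℝ (F k) x) (i : Fin N) :
    partialDeriv i (fun y => ∑ k ∈ s, F k y) x = ∑ k ∈ s, partialDeriv i (F k) x := by
  rw [partialDeriv, fderiv_fun_sum hF]
  simp [partialDeriv]

theorem partialDeriv_rpow (hf : DifferentiableAt ℝ f x) (h0 : f x ≠ 0) (a : ℝ) (i : Fin N) :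
    partialDeriv i (fun y => f y ^ a) x = a * f x ^ (a - 1) * partialDeriv i f x := by
  rw [partialDeriv, (hf.hasFDerivAt.rpow_const (p := a) (Or.inl h0)).fderiv]
  simp [partialDeriv]

/-- The squared norm of the gradient, in coordinates. -/
noncomputable def gradSq (u : EuclideanSpace ℝ (Fin N) → ℝ) (x : EuclideanSpace ℝ (Fin N)) : ℝ :=
  ∑ j, partialDeriv j u x * partialDeriv j u x

theorem gradient_apply (u : EuclideanSpace ℝ (Fin N) → ℝ) (x : EuclideanSpace ℝ (Fin N))
    (i : Fin N) : gradient u x i = partialDeriv i u x := by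
  have := inner_gradient_left (𝕜 := ℝ) (f := u) (x := x) (y := EuclideanSpace.single i 1)
  rw [partialDeriv, ← this, EuclideanSpace.inner_single_right]
  simp

theorem gradSq_eq_norm_sq (u : EuclideanSpace ℝ (Fin N) → ℝ) (x : EuclideanSpace ℝ (Fin N)) :
    gradSq u x = ‖gradient u x‖ ^ 2 := by
  rw [EuclideanSpace.norm_sq_eq, gradSq]
  exact Finset.sum_congr rfl fun j _ => by rw [gradient_apply, Real.norm_eq_abs, sq_abs, sq]

theorem ContDiffAt.gradSq {n m : WithTop ℕ∞} (hu : ContDiffAt ℝ n u x) (h : m + 1 ≤ n) :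
    ContDiffAt ℝ m (gradSq u) x :=
  ContDiffAt.sum fun j _ => (hu.partialDeriv h j).mul (hu.partialDeriv h j)

theorem partialDeriv_gradSq (hu : ContDiffAt ℝ 2 u x) (i : Fin N) :
    partialDeriv i (gradSq u) x
      = 2 * ∑ j, partialDeriv j u x * partialDeriv i (partialDeriv j u) x := by
  have h : ∀ j, DifferentiableAt ℝ (partialDeriv j u) x := fun j =>
    (hu.partialDeriv (m := 1) (by norm_num) j).differentiableAt (by norm_num)
  change partialDeriv i (fun y => ∑ j, partialDeriv j u y * partialDeriv j u y) x = _
  rw [partialDeriv_sum _ fun j _ => (h j).fun_mul (h j), Finset.mul_sum]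
  refine Finset.sum_congr rfl fun j _ => ?_
  rw [partialDeriv_mul (h j) (h j)]
  ring

/-- Bochner's formula in coordinates. -/
theorem laplacian_gradSq (hu : ContDiffAt ℝ 3 u x) :
    ∑ i, partialDeriv i (partialDeriv i (gradSq u)) x
      = 2 * ∑ i, ∑ j, partialDeriv i (partialDeriv j u) x ^ 2
        + 2 * ∑ j, partialDeriv j u x *
            partialDeriv j (fun y => ∑ i, partialDeriv i (partialDeriv i u) y) x := by
  have h1 : ∀ j, ContDiffAt ℝ 2 (partialDeriv j u) x := fun j =>
    hu.partialDeriv (by norm_num) j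
  have h2 : ∀ i j, ContDiffAt ℝ 1 (partialDeriv i (partialDeriv j u)) x := fun i j =>
    (h1 j).partialDeriv (by norm_num) i
  have d1 : ∀ j, DifferentiableAt ℝ (partialDeriv j u) x := fun j =>
    (h1 j).differentiableAt (by norm_num)
  have d2 : ∀ i j, DifferentiableAt ℝ (partialDeriv i (partialDeriv j u)) x := fun i j =>
    (h2 i j).differentiableAt (by norm_num)
  have hnear : ∀ᶠ y in 𝓝 x, ContDiffAt ℝ 2 u y :=
    (hu.of_le (by norm_num : (2 : WithTop ℕ∞) ≤ 3)).eventually (by simp)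
  have key : ∀ i, partialDeriv i (partialDeriv i (gradSq u)) x
      = 2 * ∑ j, partialDeriv i (partialDeriv j u) x ^ 2
        + 2 * ∑ j, partialDeriv j u x * partialDeriv j (partialDeriv i (partialDeriv i u)) x := by
    intro i
    have e : partialDeriv i (gradSq u) =ᶠ[𝓝 x]
        fun y => ∑ j, 2 * (partialDeriv j u y * partialDeriv i (partialDeriv j u) y) := by
      filter_upwards [hnear] with y hy
      rw [partialDeriv_gradSq hy, Finset.mul_sum]
    rw [partialDeriv_congr e, partialDeriv_sum _ fun j _ => ((d1 j).fun_mul (d2 i j)).const_mul 2,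
      Finset.mul_sum, Finset.mul_sum, ← Finset.sum_add_distrib]
    refine Finset.sum_congr rfl fun j _ => ?_
    have e2 : partialDeriv i (partialDeriv j u) =ᶠ[𝓝 x] partialDeriv j (partialDeriv i u) := by
      filter_upwards [hnear] with y hy using partialDeriv_comm hy i j
    have e3 : partialDeriv i (partialDeriv i (partialDeriv j u)) x
        = partialDeriv j (partialDeriv i (partialDeriv i u)) x := by
      rw [partialDeriv_congr e2, partialDeriv_comm (h1 i)]
    rw [partialDeriv_const_mul ((d1 j).fun_mul (d2 i j)), partialDeriv_mul (d1 j) (d2 i j), e3]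
    ring
  rw [Finset.sum_congr rfl fun i _ => key i, Finset.sum_add_distrib, ← Finset.mul_sum,
    ← Finset.mul_sum]
  congr 2
  rw [Finset.sum_comm]
  refine Finset.sum_congr rfl fun j _ => ?_
  rw [partialDeriv_sum _ fun i _ => d2 i i, Finset.mul_sum]

/-- The equation, expanded where the gradient does not vanish. -/
theorem laplacian_eq_of_trace_eq {p q : ℝ} (hu : ContDiffAt ℝ 2 u x) (h0 : gradient u x ≠ 0)
    (hd : DifferentiableAt ℝ (pGradField p u) x)
    (htr : LinearMap.trace ℝ (EuclideanSpace ℝ (Fin N))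
      (fderiv ℝ (pGradField p u) x : EuclideanSpace ℝ (Fin N) →ₗ[ℝ] EuclideanSpace ℝ (Fin N))
      = ‖gradient u x‖ ^ q) :
    ∑ i, partialDeriv i (partialDeriv i u) x
      = gradSq u x ^ ((q - p + 2) / 2)
        - (p - 2) / 2 *
          ((∑ i, partialDeriv i (gradSq u) x * partialDeriv i u x) * gradSq u x ^ (-1 : ℝ)) := by
  have hn : 0 < ‖gradient u x‖ := norm_pos_iff.2 h0
  have hz : 0 < gradSq u x := by rw [gradSq_eq_norm_sq]; positivity
  have d1 : ∀ j, DifferentiableAt ℝ (partialDeriv j u) x := fun j =>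
    (hu.partialDeriv (m := 1) (by norm_num) j).differentiableAt (by norm_num)
  have dz : DifferentiableAt ℝ (gradSq u) x :=
    (hu.gradSq (m := 1) (by norm_num)).differentiableAt (by norm_num)
  have hpow : ∀ (y : EuclideanSpace ℝ (Fin N)) (a : ℝ),
      ‖gradient u y‖ ^ a = gradSq u y ^ (a / 2) := by
    intro y a
    rw [gradSq_eq_norm_sq, ← Real.rpow_natCast, ← Real.rpow_mul (norm_nonneg _)]
    congr 1
    push_cast
    ring
  have hdiv : ∑ i, partialDeriv i (fun y => gradSq u y ^ ((p - 2) / 2) * partialDeriv i u y) x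
      = gradSq u x ^ (q / 2) := by
    rw [← hpow, ← htr, LinearMap.trace_eq_sum_inner _ (EuclideanSpace.basisFun (Fin N) ℝ)]
    refine Finset.sum_congr rfl fun i _ => ?_
    have hc : (fun y => gradSq u y ^ ((p - 2) / 2) * partialDeriv i u y)
        = fun y => (EuclideanSpace.proj i : EuclideanSpace ℝ (Fin N) →L[ℝ] ℝ)
            (pGradField p u y) := by
      funext y
      simp [pGradField, gradient_apply, hpow]
    have hc' := ((EuclideanSpace.proj i : EuclideanSpace ℝ (Fin N) →L[ℝ] ℝ).hasFDerivAt.comp x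
      hd.hasFDerivAt).fderiv
    rw [hc, partialDeriv]
    change fderiv ℝ (⇑(EuclideanSpace.proj i : EuclideanSpace ℝ (Fin N) →L[ℝ] ℝ) ∘
      pGradField p u) x _ = _
    rw [hc']
    simp [EuclideanSpace.inner_single_left]
  have hexp : ∀ i, partialDeriv i (fun y => gradSq u y ^ ((p - 2) / 2) * partialDeriv i u y) x
      = gradSq u x ^ ((p - 2) / 2) * (partialDeriv i (partialDeriv i u) x
        + (p - 2) / 2 * (partialDeriv i (gradSq u) x * partialDeriv i u x)
          * gradSq u x ^ (-1 : ℝ)) := by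
    intro i
    rw [partialDeriv_mul (dz.rpow_const (Or.inl hz.ne')) (d1 i),
      partialDeriv_rpow dz hz.ne', sub_eq_add_neg ((p - 2) / 2) 1, Real.rpow_add hz]
    ring
  rw [Finset.sum_congr rfl fun i _ => hexp i, ← Finset.mul_sum, Finset.sum_add_distrib,
    ← Finset.sum_mul, ← Finset.mul_sum] at hdiv
  have hs : gradSq u x ^ (q / 2)
      = gradSq u x ^ ((p - 2) / 2) * gradSq u x ^ ((q - p + 2) / 2) := by
    rw [← Real.rpow_add hz]
    congr 1
    ring
  rw [hs] at hdiv
  have := mul_left_cancel₀ (Real.rpow_pos_of_pos hz _).ne' hdiv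
  linarith

/-- The identity satisfied by the squared norm of the gradient of a solution. -/
theorem bernstein_identity {p s : ℝ} (hu : ContDiffAt ℝ 3 u x) (hz : 0 < gradSq u x)
    (hE : ∀ᶠ y in 𝓝 x, ∑ i, partialDeriv i (partialDeriv i u) y
      = gradSq u y ^ s - (p - 2) / 2 *
          ((∑ i, partialDeriv i (gradSq u) y * partialDeriv i u y) * gradSq u y ^ (-1 : ℝ))) :
    ∑ i, partialDeriv i (partialDeriv i (gradSq u)) x
      + (p - 2) * (∑ i, ∑ j, partialDeriv i u x * partialDeriv j u x *
          partialDeriv i (partialDeriv j (gradSq u)) x) / gradSq u x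
      = 2 * ∑ i, ∑ j, partialDeriv i (partialDeriv j u) x ^ 2
        + 2 * s * gradSq u x ^ (s - 1) * (∑ i, partialDeriv i (gradSq u) x * partialDeriv i u x)
        - (p - 2) * ((∑ i, partialDeriv i (gradSq u) x ^ 2) / (2 * gradSq u x)
          - (∑ i, partialDeriv i (gradSq u) x * partialDeriv i u x) ^ 2 / gradSq u x ^ 2) := by
  have h1 : ∀ j, ContDiffAt ℝ 2 (partialDeriv j u) x := fun j =>
    hu.partialDeriv (by norm_num) j
  have hz2 : ContDiffAt ℝ 2 (gradSq u) x := hu.gradSq (by norm_num)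
  have d1 : ∀ j, DifferentiableAt ℝ (partialDeriv j u) x := fun j =>
    (h1 j).differentiableAt (by norm_num)
  have dz : DifferentiableAt ℝ (gradSq u) x := hz2.differentiableAt (by norm_num)
  have dz1 : ∀ j, DifferentiableAt ℝ (partialDeriv j (gradSq u)) x := fun j =>
    (hz2.partialDeriv (m := 1) (by norm_num) j).differentiableAt (by norm_num)
  have hu2 : ContDiffAt ℝ 2 u x := hu.of_le (by norm_num)
  have dr : ∀ a : ℝ, DifferentiableAt ℝ (fun y => gradSq u y ^ a) x := fun a =>
    dz.rpow_const (Or.inl hz.ne')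
  have dT : DifferentiableAt ℝ
      (fun y => ∑ i, partialDeriv i (gradSq u) y * partialDeriv i u y) x :=
    DifferentiableAt.fun_sum fun i _ => (dz1 i).fun_mul (d1 i)
  rw [laplacian_gradSq hu]
  set z := gradSq u x with hzdef
  set T := ∑ i, partialDeriv i (gradSq u) x * partialDeriv i u x with hT
  have hj : ∀ j, partialDeriv j (fun y => ∑ i, partialDeriv i (partialDeriv i u) y) x
      = s * z ^ (s - 1) * partialDeriv j (gradSq u) x - (p - 2) / 2 *
        ((∑ i, (partialDeriv i (gradSq u) x * partialDeriv j (partialDeriv i u) x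
          + partialDeriv j (partialDeriv i (gradSq u)) x * partialDeriv i u x)) / z
          - T * partialDeriv j (gradSq u) x / z ^ 2) := by
    intro j
    have hpw : z ^ (-1 - 1 : ℝ) = (z ^ 2)⁻¹ := by
      rw [show (-1 - 1 : ℝ) = -(2 : ℕ) by norm_num, Real.rpow_neg hz.le, Real.rpow_natCast]
    rw [partialDeriv_congr hE, partialDeriv_sub (dr s) ((dT.fun_mul (dr (-1))).const_mul _),
      partialDeriv_const_mul (dT.fun_mul (dr (-1))), partialDeriv_mul dT (dr (-1)),
      partialDeriv_rpow dz hz.ne', partialDeriv_rpow dz hz.ne',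
      partialDeriv_sum _ fun i _ => (dz1 i).fun_mul (d1 i),
      Finset.sum_congr rfl fun i _ => partialDeriv_mul (dz1 i) (d1 i) j, ← hT, ← hzdef, hpw,
      Real.rpow_neg_one]
    ring
  have hQ : ∑ j, partialDeriv j u x * ∑ i, (partialDeriv i (gradSq u) x *
        partialDeriv j (partialDeriv i u) x
          + partialDeriv j (partialDeriv i (gradSq u)) x * partialDeriv i u x)
      = (∑ i, partialDeriv i (gradSq u) x ^ 2) / 2
        + ∑ i, ∑ j, partialDeriv i u x * partialDeriv j u x *
          partialDeriv i (partialDeriv j (gradSq u)) x := by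
    have e : ∀ i, partialDeriv i (gradSq u) x ^ 2 / 2
        = ∑ j, partialDeriv j u x * (partialDeriv i (gradSq u) x *
            partialDeriv j (partialDeriv i u) x) := by
      intro i
      have := partialDeriv_gradSq hu2 i
      simp only [partialDeriv_comm hu2 _ i]
      rw [sq, mul_div_assoc]
      nth_rewrite 2 [this]
      rw [mul_div_cancel_left₀ _ two_ne_zero, Finset.mul_sum]
      exact Finset.sum_congr rfl fun j _ => by ring
    rw [Finset.sum_div, Finset.sum_congr rfl fun i _ => e i, Finset.sum_comm,
      ← Finset.sum_add_distrib]
    refine Finset.sum_congr rfl fun i _ => ?_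
    rw [Finset.mul_sum, ← Finset.sum_add_distrib]
    exact Finset.sum_congr rfl fun j _ => by ring
  have hfin : ∑ j, partialDeriv j u x *
      partialDeriv j (fun y => ∑ i, partialDeriv i (partialDeriv i u) y) x
      = s * z ^ (s - 1) * T - (p - 2) / 2 *
        (((∑ i, partialDeriv i (gradSq u) x ^ 2) / 2
        + ∑ i, ∑ j, partialDeriv i u x * partialDeriv j u x *
          partialDeriv i (partialDeriv j (gradSq u)) x) / z - T * T / z ^ 2) := by
    have e1 : T * T / z ^ 2
        = ∑ j, T * (partialDeriv j (gradSq u) x * partialDeriv j u x) / z ^ 2 := by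
      rw [← Finset.sum_div, ← Finset.mul_sum]
    have e2 : s * z ^ (s - 1) * T
        = ∑ j, s * z ^ (s - 1) * (partialDeriv j (gradSq u) x * partialDeriv j u x) := by
      rw [← Finset.mul_sum]
    rw [← hQ, e1, e2, Finset.sum_div, ← Finset.sum_sub_distrib, Finset.mul_sum,
      ← Finset.sum_sub_distrib]
    exact Finset.sum_congr rfl fun j _ => by rw [hj j]; ring
  rw [hfin]
  field_simp
  ring

end calculus

theorem IsLocalMax.deriv_eq_zero_and_second_deriv_nonpos {g g' : ℝ → ℝ} {g'' t : ℝ}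
    (hmax : IsLocalMax g t) (h1 : ∀ᶠ s in 𝓝 t, HasDerivAt g (g' s) s)
    (h2 : HasDerivAt g' g'' t) : g' t = 0 ∧ g'' ≤ 0 := by
  have h0 : g' t = 0 := hmax.hasDerivAt_eq_zero h1.self_of_nhds
  refine ⟨h0, ?_⟩
  by_contra! hpos
  have hd : deriv g =ᶠ[𝓝 t] g' := h1.mono fun s hs => hs.deriv
  have hdd : deriv (deriv g) t = g'' := by rw [hd.deriv_eq, h2.deriv]
  have hmin : IsLocalMin g t := isLocalMin_of_deriv_deriv_pos (by rw [hdd]; exact hpos)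
    (by rw [hd.self_of_nhds, h0]) h1.self_of_nhds.continuousAt
  have hc : g =ᶠ[𝓝 t] fun _ => g t := by
    filter_upwards [hmax, hmin] with s hs1 hs2 using le_antisymm hs1 hs2
  have hdc : deriv g =ᶠ[𝓝 t] fun _ => 0 := by
    filter_upwards [hc.eventuallyEq_nhds] with s hs
    rw [hs.deriv_eq, deriv_const]
  have : deriv (deriv g) t = 0 := by rw [hdc.deriv_eq, deriv_const]
  linarith

theorem derivs_of_isLocalMax_log_add {F F' h h' : ℝ → ℝ} {F'' h'' m : ℝ}
    (hF : ∀ᶠ s in 𝓝 0, HasDerivAt F (F' s) s) (hF' : HasDerivAt F' F'' 0)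
    (hh : ∀ s, HasDerivAt h (h' s) s) (hh' : HasDerivAt h' h'' 0)
    (hF0 : 0 < F 0) (hh0 : 0 < h 0)
    (hmax : IsLocalMax (fun s => Real.log (F s) + m * Real.log (h s)) 0) :
    F' 0 / F 0 + m * (h' 0 / h 0) = 0 ∧
      (F'' * F 0 - F' 0 * F' 0) / F 0 ^ 2 + m * ((h'' * h 0 - h' 0 * h' 0) / h 0 ^ 2) ≤ 0 := by
  have hFd := hF.self_of_nhds
  have hFpos : ∀ᶠ s in 𝓝 0, 0 < F s := hFd.continuousAt.eventually_const_lt hF0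
  have hhpos : ∀ᶠ s in 𝓝 0, 0 < h s := (hh 0).continuousAt.eventually_const_lt hh0
  refine hmax.deriv_eq_zero_and_second_deriv_nonpos
    (g' := fun s => F' s / F s + m * (h' s / h s)) ?_ ?_
  · filter_upwards [hF, hFpos, hhpos] with s h1 h2 h3
    exact (h1.log h2.ne').add (((hh s).log h3.ne').const_mul m)
  · exact (hF'.div hFd hF0.ne').add ((hh'.div (hh 0) hh0.ne').const_mul m)

theorem fderiv_of_isLocalMax_log_add {E : Type*} [NormedAddCommGroup E] [InnerProductSpace ℝ E]
    {f : E → ℝ} {x c : E} {r m : ℝ} (hf : ContDiffAt ℝ 2 f x) (hf0 : 0 < f x)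
    (hη : 0 < r ^ 2 - ‖x - c‖ ^ 2)
    (hmax : IsLocalMax (fun y => Real.log (f y) + m * Real.log (r ^ 2 - ‖y - c‖ ^ 2)) x) (e : E) :
    fderiv ℝ f x e = 2 * m * f x / (r ^ 2 - ‖x - c‖ ^ 2) * inner ℝ (x - c) e ∧
      fderiv ℝ (fderiv ℝ f) x e e ≤ 2 * m * f x / (r ^ 2 - ‖x - c‖ ^ 2) * ‖e‖ ^ 2 +
        4 * m * (m + 1) * f x / (r ^ 2 - ‖x - c‖ ^ 2) ^ 2 * inner ℝ (x - c) e ^ 2 := by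
  set η := r ^ 2 - ‖x - c‖ ^ 2 with hηdef
  set a : ℝ := inner ℝ (x - c) e with ha
  have hline : ∀ s : ℝ, HasDerivAt (fun s : ℝ => x + s • e) e s := fun s => by
    simpa using ((hasDerivAt_id s).smul_const e).const_add x
  have hx0 : x + (0 : ℝ) • e = x := by simp
  have hcont : Tendsto (fun s : ℝ => x + s • e) (𝓝 0) (𝓝 x) := by
    simpa using (hline 0).continuousAt.tendsto
  have hnear : ∀ᶠ y in 𝓝 x, ContDiffAt ℝ 2 f y := hf.eventually (by simp)
  have hF : ∀ᶠ s : ℝ in 𝓝 0, HasDerivAt (fun s : ℝ => f (x + s • e))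
      (fderiv ℝ f (x + s • e) e) s := by
    filter_upwards [hcont.eventually hnear] with s hs
    exact ((hs.differentiableAt (by norm_num)).hasFDerivAt).comp_hasDerivAt s (hline s)
  have hf2 : DifferentiableAt ℝ (fderiv ℝ f) (x + (0 : ℝ) • e) := by
    rw [hx0]
    exact (hf.fderiv_right (m := 1) (by norm_num)).differentiableAt (by norm_num)
  have hF' : HasDerivAt (fun s : ℝ => fderiv ℝ f (x + s • e) e)
      (fderiv ℝ (fderiv ℝ f) x e e) 0 := by
    have h := (hf2.hasFDerivAt).comp_hasDerivAt (0 : ℝ) (hline 0)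
    rw [hx0] at h
    simpa using h.clm_apply (hasDerivAt_const (0 : ℝ) e)
  have hexp : ∀ s : ℝ, r ^ 2 - ‖x + s • e - c‖ ^ 2 = η - 2 * s * a - s ^ 2 * ‖e‖ ^ 2 := by
    intro s
    rw [show x + s • e - c = (x - c) + s • e by abel, norm_add_sq_real, inner_smul_right,
      norm_smul, mul_pow, Real.norm_eq_abs, sq_abs]
    ring
  have hh : ∀ s : ℝ, HasDerivAt (fun s : ℝ => η - 2 * s * a - s ^ 2 * ‖e‖ ^ 2)
      (-2 * a - 2 * s * ‖e‖ ^ 2) s := by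
    intro s
    have h := ((((hasDerivAt_id s).const_mul 2).mul_const a).const_sub η).fun_sub
      (((hasDerivAt_id s).fun_pow 2).mul_const (‖e‖ ^ 2))
    exact h.congr_deriv (by simp)
  have hh' : HasDerivAt (fun s : ℝ => -2 * a - 2 * s * ‖e‖ ^ 2) (-2 * ‖e‖ ^ 2) 0 := by
    have h := (((hasDerivAt_id (0 : ℝ)).const_mul 2).mul_const (‖e‖ ^ 2)).const_sub (-2 * a)
    exact h.congr_deriv (by simp)
  have hmax' : IsLocalMax (fun s : ℝ => Real.log (f (x + s • e))
      + m * Real.log (η - 2 * s * a - s ^ 2 * ‖e‖ ^ 2)) 0 := by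
    have := hcont.eventually hmax
    filter_upwards [this] with s hs
    rw [hexp] at hs
    simpa [hηdef] using hs
  obtain ⟨h1, h2⟩ := derivs_of_isLocalMax_log_add hF hF' hh hh' (by simpa using hf0)
    (by simpa using hη) hmax'
  simp only [zero_smul, add_zero, mul_zero, zero_mul, sub_zero, ne_eq, OfNat.ofNat_ne_zero,
    not_false_eq_true, zero_pow] at h1 h2
  have h3 : fderiv ℝ f x e = 2 * m * f x / η * a := by
    field_simp at h1 ⊢
    linarith
  refine ⟨h3, ?_⟩
  rw [h3] at h2
  have h4 : (fderiv ℝ (fderiv ℝ f) x e e * f x - 2 * m * f x / η * a * (2 * m * f x / η * a))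
        / f x ^ 2 + m * ((-2 * ‖e‖ ^ 2 * η - -2 * a * (-2 * a)) / η ^ 2)
      = (fderiv ℝ (fderiv ℝ f) x e e - (2 * m * f x / η * ‖e‖ ^ 2 +
        4 * m * (m + 1) * f x / η ^ 2 * a ^ 2)) / f x := by
    field_simp
    ring
  rw [h4, div_le_iff₀ hf0, zero_mul] at h2
  linarith

theorem sum_bilin_single_sub {N : ℕ}
    (B : EuclideanSpace ℝ (Fin N) →L[ℝ] EuclideanSpace ℝ (Fin N) →L[ℝ] ℝ)
    (hB : ∀ a b, B a b = B b a) (n : EuclideanSpace ℝ (Fin N)) (hn : ‖n‖ = 1) :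
    ∑ i, B (EuclideanSpace.single i 1 - n i • n) (EuclideanSpace.single i 1 - n i • n)
      = ∑ i, B (EuclideanSpace.single i 1) (EuclideanSpace.single i 1) - B n n := by
  have hsum : ∑ i, n i • EuclideanSpace.single i (1 : ℝ) = n := by
    simpa using (EuclideanSpace.basisFun (Fin N) ℝ).sum_repr n
  have hn2 : ∑ i, n i * n i = 1 := by
    have := EuclideanSpace.real_norm_sq_eq n
    rw [hn] at this
    simp only [← sq]
    linarith
  have h1 : ∑ i, n i * B n (EuclideanSpace.single i 1) = B n n := by
    calc ∑ i, n i * B n (EuclideanSpace.single i 1)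
        = B n (∑ i, n i • EuclideanSpace.single i (1 : ℝ)) := by simp only [map_sum, map_smul, smul_eq_mul]
      _ = B n n := by rw [hsum]
  have h2 : ∀ i, B (EuclideanSpace.single i 1 - n i • n) (EuclideanSpace.single i 1 - n i • n)
      = B (EuclideanSpace.single i 1) (EuclideanSpace.single i 1)
        - 2 * (n i * B n (EuclideanSpace.single i 1)) + n i * n i * B n n := by
    intro i
    simp only [map_sub, map_smul, sub_apply, smul_apply, smul_eq_mul, hB (EuclideanSpace.single i 1) n]
    ring
  rw [Finset.sum_congr rfl fun i _ => h2 i, Finset.sum_add_distrib, Finset.sum_sub_distrib,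
    ← Finset.mul_sum, ← Finset.sum_mul, h1, hn2]
  ring

theorem trace_add_le {N : ℕ} {p α β : ℝ} (hp : 1 < p)
    (B : EuclideanSpace ℝ (Fin N) →L[ℝ] EuclideanSpace ℝ (Fin N) →L[ℝ] ℝ)
    (hB : ∀ a b, B a b = B b a) (v n : EuclideanSpace ℝ (Fin N)) (hn : ‖n‖ = 1)
    (hle : ∀ e, B e e ≤ α * ‖e‖ ^ 2 + β * inner ℝ v e ^ 2) :
    ∑ i, B (EuclideanSpace.single i 1) (EuclideanSpace.single i 1) + (p - 2) * B n n
      ≤ α * (N + (p - 2)) + β * (‖v‖ ^ 2 + (p - 2) * inner ℝ v n ^ 2) := by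
  have h1 := sum_bilin_single_sub B hB n hn
  have hn2 : ∑ i, n i ^ 2 = 1 := by rw [← EuclideanSpace.real_norm_sq_eq, hn, one_pow]
  have h2 : ∑ i, ‖EuclideanSpace.single i 1 - n i • n‖ ^ 2 = (N : ℝ) - 1 := by
    have e : ∀ i, ‖EuclideanSpace.single i 1 - n i • n‖ ^ 2 = 1 - n i ^ 2 := by
      intro i
      rw [norm_sub_sq_real, inner_smul_right, EuclideanSpace.inner_single_left, norm_smul, hn]
      simp
      ring
    simp [e, hn2]
  have h3 := sum_bilin_single_sub ((innerSL ℝ v).smulRight (innerSL ℝ v))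
    (fun a b => by simp [mul_comm]) n hn
  have hv : ∑ i, v i ^ 2 = ‖v‖ ^ 2 := (EuclideanSpace.real_norm_sq_eq v).symm
  simp only [innerSL_apply_apply, ContinuousLinearMap.smulRight_apply, smul_apply, smul_eq_mul,
    ← sq, EuclideanSpace.inner_single_right, one_mul, conj_trivial, hv] at h3
  have hs := Finset.sum_le_sum fun (i : Fin N) (_ : i ∈ Finset.univ) =>
    hle (EuclideanSpace.single i 1 - n i • n)
  rw [Finset.sum_add_distrib, ← Finset.mul_sum, ← Finset.mul_sum, h1, h2, h3] at hs
  have hnn := mul_le_mul_of_nonneg_left (hle n) (sub_pos.2 hp).le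
  rw [hn] at hnn
  linarith

theorem bernstein_inequality {N p m s z η r V w S L H T Z zs : ℝ} (hN : 1 ≤ N)
    (hm : 0 < m) (hz : 0 < z) (hη : 0 < η) (hηr : η ≤ r ^ 2) (hV : V ≤ r ^ 2)
    (hV0 : 0 ≤ V) (hw : w ^ 2 ≤ V)
    (hS : S ≤ 2 * m * z / η * (N + (p - 2))
      + 4 * m * (m + 1) * z / η ^ 2 * (V + (p - 2) * w ^ 2))
    (hid : S = 2 * H + 2 * s * (zs / z) * T - (p - 2) * (Z / (2 * z) - T ^ 2 / z ^ 2))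
    (hL : L = zs - (p - 2) / 2 * (T / z)) (hH : L ^ 2 ≤ N * H)
    (hZ : Z = (2 * m * z / η) ^ 2 * V) (hT : T ^ 2 ≤ (2 * m * z / η) ^ 2 * V * z) :
    zs ^ 2 ≤ 2 * N * (2 * m * (N + |p - 2|) + 4 * m * (m + 1) * (1 + |p - 2|)
      + 6 * m ^ 2 * |p - 2| + 4 * m ^ 2 * ((p - 2) ^ 2 + 2 * N * s ^ 2)) * (z * r ^ 2 / η ^ 2) := by
  set Y := z * r ^ 2 / η ^ 2 with hY
  set τ := T / z with hτ
  have habs : 0 ≤ |p - 2| := abs_nonneg _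
  have hY0 : 0 ≤ Y := by positivity
  have hYη : z / η ≤ Y := by
    rw [hY, div_le_div_iff₀ hη (by positivity)]
    have := mul_le_mul_of_nonneg_left hηr (mul_pos hz hη).le
    nlinarith
  have hYV : z / η ^ 2 * V ≤ Y := by
    rw [hY, div_mul_eq_mul_div]
    gcongr
  have hτ2 : τ ^ 2 ≤ 4 * m ^ 2 * Y := by
    rw [hτ, div_pow, div_le_iff₀ (by positivity)]
    calc T ^ 2 ≤ (2 * m * z / η) ^ 2 * V * z := hT
      _ = 4 * m ^ 2 * z ^ 2 * (z / η ^ 2 * V) := by ring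
      _ ≤ 4 * m ^ 2 * z ^ 2 * Y := by gcongr
      _ = _ := by ring
  have hZ1 : Z / (2 * z) ≤ 2 * m ^ 2 * Y := by
    calc Z / (2 * z) = 2 * m ^ 2 * (z / η ^ 2 * V) := by rw [hZ]; field_simp
      _ ≤ _ := by gcongr
  have hZ0 : 0 ≤ Z / (2 * z) := by rw [hZ]; positivity
  have hS1 : S ≤ (2 * m * (N + |p - 2|) + 4 * m * (m + 1) * (1 + |p - 2|)) * Y := by
    have e1 : 2 * m * z / η * (N + (p - 2)) ≤ 2 * m * (N + |p - 2|) * Y := by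
      calc 2 * m * z / η * (N + (p - 2)) ≤ 2 * m * z / η * (N + |p - 2|) := by
            gcongr; exact le_abs_self _
        _ = 2 * m * (N + |p - 2|) * (z / η) := by ring
        _ ≤ _ := by gcongr
    have e2 : V + (p - 2) * w ^ 2 ≤ V * (1 + |p - 2|) := by
      have := mul_le_mul (le_abs_self (p - 2)) hw (sq_nonneg w) habs
      linarith
    have e3 : 4 * m * (m + 1) * z / η ^ 2 * (V + (p - 2) * w ^ 2)
        ≤ 4 * m * (m + 1) * (1 + |p - 2|) * Y := by
      calc 4 * m * (m + 1) * z / η ^ 2 * (V + (p - 2) * w ^ 2)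
          ≤ 4 * m * (m + 1) * z / η ^ 2 * (V * (1 + |p - 2|)) := by gcongr
        _ = 4 * m * (m + 1) * (1 + |p - 2|) * (z / η ^ 2 * V) := by ring
        _ ≤ _ := by gcongr
    linarith
  have hid' : S = 2 * H + 2 * s * zs * τ - (p - 2) * (Z / (2 * z) - τ ^ 2) := by
    rw [hid, hτ, div_pow]
    ring
  have hlast : (p - 2) * (Z / (2 * z) - τ ^ 2) ≤ 6 * m ^ 2 * |p - 2| * Y := by
    have e : |Z / (2 * z) - τ ^ 2| ≤ 6 * m ^ 2 * Y := by
      rw [abs_le]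
      have h1 := sq_nonneg τ
      have h2 := mul_nonneg (sq_nonneg m) hY0
      constructor <;> linarith
    calc (p - 2) * (Z / (2 * z) - τ ^ 2) ≤ |p - 2| * |Z / (2 * z) - τ ^ 2| := by
          rw [← abs_mul]; exact le_abs_self _
      _ ≤ |p - 2| * (6 * m ^ 2 * Y) := by gcongr
      _ = _ := by ring
  have hN0 : 0 < N := by linarith
  have hL2 : zs ^ 2 / 2 - (p - 2) ^ 2 / 4 * τ ^ 2 ≤ N * H := by
    refine le_trans ?_ hH
    rw [hL]
    linear_combination (1 / 2) * sq_nonneg (zs - (p - 2) * τ)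
  have hmix : -(zs ^ 2) - 4 * N ^ 2 * s ^ 2 * τ ^ 2 ≤ 2 * N * (2 * s * zs * τ) := by
    linear_combination sq_nonneg (zs + 2 * N * s * τ)
  have hmain : zs ^ 2 ≤ 2 * N * S + 2 * N * ((p - 2) * (Z / (2 * z) - τ ^ 2))
      + ((p - 2) ^ 2 + 4 * N ^ 2 * s ^ 2) * τ ^ 2 := by
    rw [hid']
    linear_combination 4 * hL2 + hmix
  have f1 : ((p - 2) ^ 2 + 4 * N ^ 2 * s ^ 2) * τ ^ 2
      ≤ 2 * N * (4 * m ^ 2 * ((p - 2) ^ 2 + 2 * N * s ^ 2)) * Y := by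
    have g1 : (p - 2) ^ 2 ≤ 2 * N * (p - 2) ^ 2 := by nlinarith [sq_nonneg (p - 2)]
    calc ((p - 2) ^ 2 + 4 * N ^ 2 * s ^ 2) * τ ^ 2
        ≤ (2 * N * (p - 2) ^ 2 + 4 * N ^ 2 * s ^ 2) * (4 * m ^ 2 * Y) := by gcongr
      _ = _ := by ring
  have f2 := mul_le_mul_of_nonneg_left hS1 (by linarith : (0 : ℝ) ≤ 2 * N)
  have f3 := mul_le_mul_of_nonneg_left hlast (by linarith : (0 : ℝ) ≤ 2 * N)
  linarith

/-- The constant of the interior gradient estimate. -/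
noncomputable def bernsteinConst (N p m s : ℝ) : ℝ :=
  2 * N * (2 * m * (N + |p - 2|) + 4 * m * (m + 1) * (1 + |p - 2|)
    + 6 * m ^ 2 * |p - 2| + 4 * m ^ 2 * ((p - 2) ^ 2 + 2 * N * s ^ 2))

theorem bernsteinConst_nonneg {N p m s : ℝ} (hN : 0 ≤ N) (hm : 0 ≤ m) :
    0 ≤ bernsteinConst N p m s := by
  unfold bernsteinConst
  positivity

theorem sum_single_bilin {N : ℕ}
    (B : EuclideanSpace ℝ (Fin N) →L[ℝ] EuclideanSpace ℝ (Fin N) →L[ℝ] ℝ)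
    (a b : EuclideanSpace ℝ (Fin N)) :
    ∑ i, ∑ j, a i * b j * B (EuclideanSpace.single i 1) (EuclideanSpace.single j 1) = B a b := by
  have hsum : ∀ c : EuclideanSpace ℝ (Fin N), ∑ i, c i • EuclideanSpace.single i (1 : ℝ) = c :=
    fun c => by simpa using (EuclideanSpace.basisFun (Fin N) ℝ).sum_repr c
  conv_rhs => rw [← hsum a, ← hsum b]
  simp only [map_sum, map_smul, _root_.sum_apply, smul_apply, smul_eq_mul]
  rw [Finset.sum_comm]
  exact Finset.sum_congr rfl fun i _ => by
    rw [Finset.mul_sum]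
    exact Finset.sum_congr rfl fun j _ => by ring

theorem gradSq_rpow_mul_le_of_isLocalMax {N : ℕ} {p m s r : ℝ}
    {u : EuclideanSpace ℝ (Fin N) → ℝ} {x c : EuclideanSpace ℝ (Fin N)} (hN : 1 ≤ N)
    (hp : 1 < p) (hm : 0 < m) (hu : ContDiffAt ℝ 3 u x) (hz : 0 < gradSq u x)
    (hE : ∀ᶠ y in 𝓝 x, ∑ i, partialDeriv i (partialDeriv i u) y
      = gradSq u y ^ s - (p - 2) / 2 *
          ((∑ i, partialDeriv i (gradSq u) y * partialDeriv i u y) * gradSq u y ^ (-1 : ℝ)))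
    (hη : 0 < r ^ 2 - ‖x - c‖ ^ 2)
    (hmax : IsLocalMax
      (fun y => Real.log (gradSq u y) + m * Real.log (r ^ 2 - ‖y - c‖ ^ 2)) x) :
    gradSq u x ^ (2 * s - 1) * (r ^ 2 - ‖x - c‖ ^ 2) ^ 2
      ≤ bernsteinConst N p m s * r ^ 2 := by
  have hz2 : ContDiffAt ℝ 2 (gradSq u) x := hu.gradSq (by norm_num)
  have hline := fderiv_of_isLocalMax_log_add hz2 hz hη hmax
  have hid := bernstein_identity hu hz hE
  have hlap := hE.self_of_nhds
  set z := gradSq u x with hzdef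
  set η := r ^ 2 - ‖x - c‖ ^ 2 with hηdef
  set B := fderiv ℝ (fderiv ℝ (gradSq u)) x with hBdef
  set g := gradient u x with hg
  have hgz : z = ‖g‖ ^ 2 := gradSq_eq_norm_sq u x
  have hg0 : 0 < ‖g‖ := by
    rcases (norm_nonneg g).eq_or_lt with h | h
    · rw [← h] at hgz
      norm_num at hgz
      linarith
    · exact h
  have hsymm : ∀ a b, B a b = B b a := (hz2.isSymmSndFDerivAt (by simp)).eq
  have hpp : ∀ i j, partialDeriv i (partialDeriv j (gradSq u)) x
      = B (EuclideanSpace.single i 1) (EuclideanSpace.single j 1) := fun i j =>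
    fderiv_partialDeriv hz2 j _
  have hp1 : ∀ i, partialDeriv i (gradSq u) x = 2 * m * z / η * (x - c) i := by
    intro i
    rw [partialDeriv, (hline _).1, EuclideanSpace.inner_single_right]
    simp
  have hgi : ∀ i, partialDeriv i u x = g i := fun i => (gradient_apply u x i).symm
  have hn : ‖‖g‖⁻¹ • g‖ = 1 := norm_smul_inv_norm (norm_pos_iff.1 hg0)
  have htr := trace_add_le hp B hsymm (x - c) (‖g‖⁻¹ • g) hn fun e => (hline e).2
  have hBn : B (‖g‖⁻¹ • g) (‖g‖⁻¹ • g) = B g g / z := by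
    simp only [map_smul, smul_apply, smul_eq_mul, hgz]
    field_simp
  have hTe : ∑ i, partialDeriv i (gradSq u) x * partialDeriv i u x
      = 2 * m * z / η * inner ℝ (x - c) g := by
    rw [PiLp.inner_apply, Finset.mul_sum]
    refine Finset.sum_congr rfl fun i _ => ?_
    rw [hp1, hgi]
    simp
    ring
  have hZe : ∑ i, partialDeriv i (gradSq u) x ^ 2 = (2 * m * z / η) ^ 2 * ‖x - c‖ ^ 2 := by
    rw [EuclideanSpace.real_norm_sq_eq, Finset.mul_sum]
    exact Finset.sum_congr rfl fun i _ => by rw [hp1, mul_pow]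
  have hN' : (1 : ℝ) ≤ N := by exact_mod_cast hN
  have hQ : ∑ i, ∑ j, partialDeriv i u x * partialDeriv j u x *
      partialDeriv i (partialDeriv j (gradSq u)) x = B g g := by
    simp only [hgi, hpp]
    exact sum_single_bilin B g g
  rw [hQ] at hid
  simp only [hpp] at hid
  rw [hBn, ← mul_div_assoc, hid] at htr
  have hcs : inner ℝ (x - c) g ^ 2 ≤ ‖x - c‖ ^ 2 * z := by
    rw [hgz, ← mul_pow, ← sq_abs]
    gcongr
    exact abs_real_inner_le_norm _ _
  have hw : (inner ℝ (x - c) (‖g‖⁻¹ • g) : ℝ) ^ 2 ≤ ‖x - c‖ ^ 2 := by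
    rw [← sq_abs]
    gcongr
    simpa [hn] using abs_real_inner_le_norm (x - c) (‖g‖⁻¹ • g)
  have hsz : z ^ (s - 1) = z ^ s / z := by rw [Real.rpow_sub hz, Real.rpow_one]
  have hH : (∑ i, partialDeriv i (partialDeriv i u) x) ^ 2
      ≤ N * ∑ i, ∑ j, partialDeriv i (partialDeriv j u) x ^ 2 := by
    have h := sq_sum_le_card_mul_sum_sq (s := Finset.univ)
      (f := fun i => partialDeriv i (partialDeriv i u) x)
    rw [Finset.card_univ, Fintype.card_fin] at h
    refine h.trans (mul_le_mul_of_nonneg_left (Finset.sum_le_sum fun i _ => ?_) (by positivity))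
    exact Finset.single_le_sum (f := fun j => partialDeriv i (partialDeriv j u) x ^ 2)
      (fun j _ => sq_nonneg _) (Finset.mem_univ i)
  rw [hsz] at htr
  rw [Real.rpow_neg_one, ← div_eq_mul_inv] at hlap
  have hres := bernstein_inequality (r := r) hN' hm hz hη
    (by rw [hηdef]; linarith [sq_nonneg ‖x - c‖]) (by linarith) (sq_nonneg _) hw htr rfl hlap hH hZe
    (by rw [hTe, mul_pow, mul_assoc ((2 * m * z / η) ^ 2)]; gcongr)
  have hpow : (z ^ s) ^ 2 = z ^ (2 * s - 1) * z := by
    rw [← Real.rpow_natCast, ← Real.rpow_mul hz.le]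
    nth_rewrite 3 [← Real.rpow_one z]
    rw [← Real.rpow_add hz]
    congr 1
    push_cast
    ring
  rw [hpow, mul_div_assoc, mul_left_comm, mul_comm z] at hres
  have := le_of_mul_le_mul_right hres hz
  rw [← mul_div_assoc, le_div_iff₀ (by positivity)] at this
  exact this

theorem gradSq_rpow_mul_sq_le {N : ℕ} {p q r : ℝ} {G : Set (EuclideanSpace ℝ (Fin N))}
    {u : EuclideanSpace ℝ (Fin N) → ℝ} {c : EuclideanSpace ℝ (Fin N)} (hN : 1 ≤ N)
    (hp : 1 < p) (hq : p - 1 < q) (hG : IsOpen G) (hu : IsStrongSolution p q G u) (hr : 0 < r)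
    (hball : closedBall c r ⊆ G) :
    gradSq u c ^ (q - p + 1) * r ^ 2
      ≤ bernsteinConst N p (2 / (q - p + 1)) ((q - p + 2) / 2) := by
  obtain ⟨hu1, hu3, htr⟩ := hu
  set δ := q - p + 1 with hδ
  have hδ0 : 0 < δ := by linarith
  set m := 2 / δ with hm
  have hm0 : 0 < m := by positivity
  have hC : 0 ≤ bernsteinConst N p m ((q - p + 2) / 2) :=
    bernsteinConst_nonneg (Nat.cast_nonneg N) hm0.le
  have hnonneg : ∀ y, 0 ≤ gradSq u y := fun y => by rw [gradSq_eq_norm_sq]; positivity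
  have hzc : ∀ y ∈ G, ContinuousAt (gradSq u) y := fun y hy =>
    ((hu1.contDiffAt (hG.mem_nhds hy)).gradSq (m := 0) (by norm_num)).continuousAt
  rcases (hnonneg c).eq_or_lt with h0 | h0
  · rw [← h0, Real.zero_rpow hδ0.ne', zero_mul]
    exact hC
  have hcont : ContinuousOn (fun y => gradSq u y * (r ^ 2 - ‖y - c‖ ^ 2) ^ m)
      (closedBall c r) := by
    refine ContinuousOn.mul (fun y hy => (hzc y (hball hy)).continuousWithinAt) ?_
    exact ContinuousOn.rpow_const (by fun_prop) fun _ _ => Or.inr hm0.le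
  obtain ⟨x, hx, hxmax⟩ := (isCompact_closedBall c r).exists_isMaxOn
    ⟨c, mem_closedBall_self hr.le⟩ hcont
  have hcx : gradSq u c * (r ^ 2) ^ m ≤ gradSq u x * (r ^ 2 - ‖x - c‖ ^ 2) ^ m := by
    simpa using hxmax (mem_closedBall_self hr.le)
  have hpos : 0 < gradSq u x * (r ^ 2 - ‖x - c‖ ^ 2) ^ m := lt_of_lt_of_le (by positivity) hcx
  have hηnn : 0 ≤ r ^ 2 - ‖x - c‖ ^ 2 := by
    have : ‖x - c‖ ≤ r := by simpa [dist_eq_norm] using hx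
    have := pow_le_pow_left₀ (norm_nonneg _) this 2
    linarith
  have hη : 0 < r ^ 2 - ‖x - c‖ ^ 2 := by
    refine hηnn.lt_of_ne fun h => ?_
    rw [← h, Real.zero_rpow hm0.ne', mul_zero] at hpos
    exact hpos.false
  have hz : 0 < gradSq u x := by
    refine (hnonneg x).lt_of_ne fun h => ?_
    rw [← h, zero_mul] at hpos
    exact hpos.false
  have hxG : x ∈ G := hball hx
  have hev : ∀ᶠ y in 𝓝 x, y ∈ G ∧ 0 < gradSq u y :=
    (hG.eventually_mem hxG).and ((hzc x hxG).eventually_const_lt hz)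
  have hne : ∀ y, 0 < gradSq u y → gradient u y ≠ 0 := by
    intro y hy h
    rw [gradSq_eq_norm_sq, h] at hy
    simp at hy
  have hreg : ∀ᶠ y in 𝓝 x, ContDiffAt ℝ 3 u y := by
    filter_upwards [hev.eventually_nhds] with y hy
    exact hu3.contDiffAt (hy.mono fun w hw => ⟨hw.1, hne w hw.2⟩)
  have hηc : ContinuousAt (fun y : EuclideanSpace ℝ (Fin N) => r ^ 2 - ‖y - c‖ ^ 2) x := by
    fun_prop
  have hmax : IsLocalMax
      (fun y => Real.log (gradSq u y) + m * Real.log (r ^ 2 - ‖y - c‖ ^ 2)) x := by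
    filter_upwards [hev, hηc.eventually_const_lt hη] with y hy1 hy2
    have hyb : y ∈ closedBall c r := by
      rw [mem_closedBall, dist_eq_norm]
      exact (abs_lt_of_sq_lt_sq' (by linarith) hr.le).2.le
    have hle := hxmax hyb
    have hlog : ∀ y, 0 < gradSq u y → 0 < r ^ 2 - ‖y - c‖ ^ 2 →
        Real.log (gradSq u y * (r ^ 2 - ‖y - c‖ ^ 2) ^ m)
          = Real.log (gradSq u y) + m * Real.log (r ^ 2 - ‖y - c‖ ^ 2) := by
      intro y h1 h2
      rw [Real.log_mul h1.ne' (Real.rpow_pos_of_pos h2 m).ne', Real.log_rpow h2]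
    rw [← hlog y hy1.2 hy2, ← hlog x hz hη]
    exact Real.log_le_log (mul_pos hy1.2 (Real.rpow_pos_of_pos hy2 m)) hle
  have hE : ∀ᶠ y in 𝓝 x, ∑ i, partialDeriv i (partialDeriv i u) y
      = gradSq u y ^ ((q - p + 2) / 2) - (p - 2) / 2 *
          ((∑ i, partialDeriv i (gradSq u) y * partialDeriv i u y)
            * gradSq u y ^ (-1 : ℝ)) := by
    filter_upwards [hreg, hev] with y hy1 hy2
    exact laplacian_eq_of_trace_eq (hy1.of_le (by norm_num)) (hne y hy2.2) (htr y hy2.1).1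
      (htr y hy2.1).2
  have key := gradSq_rpow_mul_le_of_isLocalMax hN hp hm0 hreg.self_of_nhds hz hE hη hmax
  rw [show 2 * ((q - p + 2) / 2) - 1 = δ by rw [hδ]; ring] at key
  have hpw : ∀ a : ℝ, 0 ≤ a → (a ^ m) ^ δ = a ^ 2 := by
    intro a ha
    rw [← Real.rpow_mul ha, hm, div_mul_cancel₀ _ hδ0.ne', Real.rpow_two]
  have hδle := Real.rpow_le_rpow (by positivity) hcx hδ0.le
  rw [Real.mul_rpow (hnonneg c) (by positivity), Real.mul_rpow hz.le (by positivity),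
    hpw _ (by positivity), hpw _ hηnn] at hδle
  have hfin := hδle.trans key
  rw [sq (r ^ 2), ← mul_assoc] at hfin
  exact le_of_mul_le_mul_right hfin (by positivity)

theorem half_le_norm_of_mem_segment {E : Type*} [NormedAddCommGroup E] [InnerProductSpace ℝ E]
    {x y z : E} {ρ : ℝ} (hρ : 0 ≤ ρ) (hx : ρ ≤ ‖x‖) (hy : ρ ≤ ‖y‖) (hxy : 0 ≤ inner ℝ x y)
    (hz : z ∈ segment ℝ x y) : ρ / 2 ≤ ‖z‖ := by
  obtain ⟨a, b, ha, hb, hab, rfl⟩ := hz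
  refine le_of_sq_le_sq ?_ (norm_nonneg _)
  rw [norm_add_sq_real, norm_smul, norm_smul, inner_smul_left, inner_smul_right, mul_pow, mul_pow,
    Real.norm_eq_abs, Real.norm_eq_abs, sq_abs, sq_abs, conj_trivial]
  have h1 : a ^ 2 * ρ ^ 2 ≤ a ^ 2 * ‖x‖ ^ 2 := by gcongr
  have h2 : b ^ 2 * ρ ^ 2 ≤ b ^ 2 * ‖y‖ ^ 2 := by gcongr
  have h3 : 0 ≤ a * (b * inner ℝ x y) := by positivity
  have h4 : 1 / 4 * ρ ^ 2 ≤ (a ^ 2 + b ^ 2) * ρ ^ 2 := by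
    gcongr
    nlinarith [sq_nonneg (a - b), hab]
  linarith

theorem exists_norm_eq_inner_nonneg {N : ℕ} (hN : 2 ≤ N) {ρ : ℝ} (hρ : 0 ≤ ρ)
    (x y : EuclideanSpace ℝ (Fin N)) :
    ∃ w : EuclideanSpace ℝ (Fin N), ‖w‖ = ρ ∧ 0 ≤ inner ℝ x w ∧ 0 ≤ inner ℝ w y := by
  have hker : LinearMap.ker (innerSL ℝ x : EuclideanSpace ℝ (Fin N) →ₗ[ℝ] ℝ) ≠ ⊥ :=
    LinearMap.ker_ne_bot_of_finrank_lt (by simp; omega)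
  obtain ⟨v, hv, hv0⟩ := Submodule.exists_mem_ne_zero_of_ne_bot hker
  have hxv : inner ℝ x v = 0 := by simpa using hv
  have hvn : ‖v‖ ≠ 0 := norm_ne_zero_iff.2 hv0
  have hscal : ‖(ρ * ‖v‖⁻¹) • v‖ = ρ := by
    rw [norm_smul, norm_mul, norm_inv, norm_norm, Real.norm_of_nonneg hρ, mul_assoc,
      inv_mul_cancel₀ hvn, mul_one]
  have hc : 0 ≤ ρ * ‖v‖⁻¹ := by positivity
  rcases le_total 0 (inner ℝ v y) with h | h
  · refine ⟨(ρ * ‖v‖⁻¹) • v, hscal, ?_, ?_⟩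
    · rw [inner_smul_right, hxv, mul_zero]
    · rw [inner_smul_left, conj_trivial]
      exact mul_nonneg hc h
  · refine ⟨-((ρ * ‖v‖⁻¹) • v), by rw [norm_neg, hscal], ?_, ?_⟩
    · rw [inner_neg_right, inner_smul_right, hxv, mul_zero, neg_zero]
    · rw [inner_neg_left, inner_smul_left, conj_trivial]
      exact neg_nonneg.2 (mul_nonpos_of_nonneg_of_nonpos hc h)

theorem exists_tendsto_of_norm_fderiv_le {N : ℕ} (hN : 2 ≤ N) {K θ R : ℝ} (hR : 0 < R)
    (hθ : 1 < θ) (hK : 0 ≤ K) {u : EuclideanSpace ℝ (Fin N) → ℝ}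
    (hd : ∀ x, R ≤ ‖x‖ → DifferentiableAt ℝ u x)
    (hle : ∀ x, R ≤ ‖x‖ → ‖fderiv ℝ u x‖ ≤ K * ‖x‖ ^ (-θ)) :
    ∃ M : ℝ, Tendsto u (comap (fun x : EuclideanSpace ℝ (Fin N) => ‖x‖) atTop) (𝓝 M) := by
  have hseg : ∀ (ρ : ℝ) (x y : EuclideanSpace ℝ (Fin N)), 2 * R ≤ ρ → ρ ≤ ‖x‖ → ρ ≤ ‖y‖ →
      ‖x‖ ≤ 2 * ρ → ‖y‖ ≤ 2 * ρ → 0 ≤ (inner ℝ x y : ℝ) →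
      dist (u x) (u y) ≤ K * (ρ / 2) ^ (-θ) * (4 * ρ) := by
    intro ρ x y hρ hx hy hx2 hy2 hxy
    have hρ0 : 0 < ρ := by linarith
    have hz : ∀ z ∈ segment ℝ x y, ρ / 2 ≤ ‖z‖ := fun z hz =>
      half_le_norm_of_mem_segment hρ0.le hx hy hxy hz
    have := (convex_segment x y).norm_image_sub_le_of_norm_fderiv_le (𝕜 := ℝ) (f := u)
      (C := K * (ρ / 2) ^ (-θ)) (fun z h => hd z (by linarith [hz z h]))
      (fun z h => (hle z (by linarith [hz z h])).trans ?_)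
      (right_mem_segment ℝ x y) (left_mem_segment ℝ x y)
    · rw [dist_eq_norm]
      refine this.trans ?_
      gcongr
      linarith [norm_sub_le x y]
    · exact mul_le_mul_of_nonneg_left
        (Real.rpow_le_rpow_of_nonpos (by positivity) (hz z h) (by linarith)) hK
  have hosc : ∀ (ρ : ℝ) (x y : EuclideanSpace ℝ (Fin N)), 2 * R ≤ ρ → ρ ≤ ‖x‖ → ρ ≤ ‖y‖ →
      ‖x‖ ≤ 2 * ρ → ‖y‖ ≤ 2 * ρ →
      dist (u x) (u y) ≤ 2 * (K * (ρ / 2) ^ (-θ) * (4 * ρ)) := by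
    intro ρ x y hρ hx hy hx2 hy2
    obtain ⟨w, hw, h1, h2⟩ := exists_norm_eq_inner_nonneg hN (by linarith : 0 ≤ ρ) x y
    have t1 := hseg ρ x w hρ hx hw.ge hx2 (by linarith) h1
    have t2 := hseg ρ w y hρ hw.ge hy (by linarith) hy2 h2
    linarith [dist_triangle (u x) (u w) (u y)]
  set τ : ℝ := 2 ^ (1 - θ) with hτ
  have hτ0 : 0 < τ := by positivity
  have hτ1 : τ < 1 := Real.rpow_lt_one_of_one_lt_of_neg (by norm_num) (by linarith)
  set C := 2 * (K * R ^ (-θ) * (8 * R)) with hC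
  have hbound : ∀ k : ℕ, 2 * (K * (2 * R * 2 ^ k / 2) ^ (-θ) * (4 * (2 * R * 2 ^ k)))
      = C * τ ^ k := by
    intro k
    have e : (2 : ℝ) ^ (1 - θ) = 2 * 2 ^ (-θ) := by
      rw [sub_eq_add_neg, Real.rpow_add two_pos, Real.rpow_one]
    have e2 : ((2 : ℝ) ^ k) ^ (-θ) = ((2 : ℝ) ^ (-θ)) ^ k := by
      rw [← Real.rpow_natCast, ← Real.rpow_natCast, ← Real.rpow_mul two_pos.le,
        ← Real.rpow_mul two_pos.le, mul_comm]
    rw [show 2 * R * 2 ^ k / 2 = R * 2 ^ k by ring, Real.mul_rpow hR.le (by positivity), e2, hτ, e,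
      mul_pow, hC]
    ring
  have hpow : ∀ k : ℕ, 2 * R ≤ 2 * R * 2 ^ k := fun k =>
    le_mul_of_one_le_right (by positivity) (one_le_pow₀ (by norm_num))
  set e : EuclideanSpace ℝ (Fin N) := EuclideanSpace.single ⟨0, by omega⟩ 1 with he
  have hnorm : ∀ k : ℕ, ‖(2 * R * 2 ^ k) • e‖ = 2 * R * 2 ^ k := by
    intro k
    rw [norm_smul, Real.norm_of_nonneg (by positivity), he, PiLp.norm_single, norm_one,
      mul_one]
  have hcomp : ∀ (k : ℕ) (x : EuclideanSpace ℝ (Fin N)), 2 * R * 2 ^ k ≤ ‖x‖ →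
      ‖x‖ ≤ 2 * R * 2 ^ (k + 1) → dist (u ((2 * R * 2 ^ k) • e)) (u x) ≤ C * τ ^ k := by
    intro k x h1 h2
    rw [← hbound k]
    rw [pow_succ] at h2
    have := hpow k
    refine hosc _ _ _ this (hnorm k).ge h1 ?_ (by linarith)
    rw [hnorm k]
    linarith
  have hstep : ∀ k : ℕ, dist (u ((2 * R * 2 ^ k) • e)) (u ((2 * R * 2 ^ (k + 1)) • e))
      ≤ C * τ ^ k := by
    intro k
    refine hcomp k _ ?_ (hnorm _).le
    rw [hnorm, pow_succ]
    linarith [hpow k]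
  obtain ⟨M, hM⟩ := cauchySeq_tendsto_of_complete (cauchySeq_of_le_geometric τ C hτ1 hstep)
  have hdist := dist_le_of_le_geometric_of_tendsto τ C hτ1 hstep hM
  refine ⟨M, Metric.tendsto_nhds.2 fun ε hε => ?_⟩
  have hlim : Tendsto (fun k : ℕ => C * τ ^ k + C * τ ^ k / (1 - τ)) atTop (𝓝 0) := by
    have h := (tendsto_pow_atTop_nhds_zero_of_lt_one hτ0.le hτ1).const_mul C
    simpa using h.add (h.div_const (1 - τ))
  obtain ⟨n, hn⟩ := eventually_atTop.1 (hlim.eventually_lt_const hε)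
  have hfar : ∀ᶠ x in comap (fun x : EuclideanSpace ℝ (Fin N) => ‖x‖) atTop,
      2 * R * 2 ^ n ≤ ‖x‖ := tendsto_comap.eventually (eventually_ge_atTop _)
  filter_upwards [hfar] with x hx
  have h2R : (0 : ℝ) < 2 * R := by positivity
  obtain ⟨k, hk1, hk2⟩ := exists_nat_pow_near (x := ‖x‖ / (2 * R)) (y := 2)
    ((one_le_div h2R).2 ((hpow n).trans hx)) (by norm_num)
  rw [le_div_iff₀' h2R] at hk1
  rw [div_lt_iff₀' h2R] at hk2
  have hnk : n ≤ k := by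
    have := lt_of_mul_lt_mul_left (hx.trans_lt hk2) h2R.le
    exact Nat.lt_succ_iff.1 ((pow_lt_pow_iff_right₀ (by norm_num)).1 this)
  calc dist (u x) M ≤ dist (u ((2 * R * 2 ^ k) • e)) (u x)
        + dist (u ((2 * R * 2 ^ k) • e)) M := dist_triangle_left _ _ _
    _ ≤ C * τ ^ k + C * τ ^ k / (1 - τ) := add_le_add (hcomp k x hk1 hk2.le) (hdist k)
    _ < ε := hn k hnk

/-- A solution of (E) in an exterior domain has a limit at infinity when `p-1 < q < p`. -/
theorem limit_at_infinity (N : ℕ) (hN : 2 ≤ N) (p q : ℝ) (hp : 1 < p)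
    (hq1 : p - 1 < q) (hq2 : q < p) (R : ℝ) (hR : 0 < R)
    (u : EuclideanSpace ℝ (Fin N) → ℝ)
    (hu : IsStrongSolution p q (Metric.closedBall (0 : EuclideanSpace ℝ (Fin N)) R)ᶜ u) :
    ∃ M : ℝ, Filter.Tendsto u
      (Filter.comap (fun x : EuclideanSpace ℝ (Fin N) => ‖x‖) Filter.atTop) (nhds M) := by
  have hG : IsOpen (closedBall (0 : EuclideanSpace ℝ (Fin N)) R)ᶜ := isClosed_closedBall.isOpen_compl
  have hmem : ∀ x : EuclideanSpace ℝ (Fin N), 2 * R ≤ ‖x‖ →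
      closedBall x (‖x‖ / 3) ⊆ (closedBall (0 : EuclideanSpace ℝ (Fin N)) R)ᶜ := by
    intro x hx y hy
    rw [mem_closedBall, dist_eq_norm, norm_sub_rev] at hy
    rw [mem_compl_iff, mem_closedBall, dist_zero_right, not_le]
    linarith [norm_sub_norm_le x y]
  set δ := q - p + 1 with hδ
  have hδ0 : 0 < δ := by linarith
  have hδ1 : δ < 1 := by linarith
  set C := bernsteinConst N p (2 / (q - p + 1)) ((q - p + 2) / 2) with hC
  have hC0 : 0 ≤ C := bernsteinConst_nonneg (Nat.cast_nonneg N) (by positivity)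
  refine exists_tendsto_of_norm_fderiv_le hN (K := (3 * √C) ^ (1 / δ)) (θ := 1 / δ) (R := 2 * R)
    (by positivity) ((one_lt_div hδ0).2 hδ1) (by positivity) (fun x hx => ?_) fun x hx => ?_
  · have hxG := hmem x hx (mem_closedBall_self (by positivity))
    exact (hu.1.contDiffAt (hG.mem_nhds hxG)).differentiableAt (by norm_num)
  · have hx0 : 0 < ‖x‖ := by linarith
    have key := gradSq_rpow_mul_sq_le (by omega) hp hq1 hG hu (by positivity) (hmem x hx)
    rw [← toDual_gradient, LinearIsometryEquiv.norm_map]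
    rw [gradSq_eq_norm_sq, ← hC, ← hδ] at key
    have hg : ‖gradient u x‖ ^ δ ≤ 3 * √C * ‖x‖⁻¹ := by
      refine le_of_sq_le_sq ?_ (by positivity)
      rw [mul_pow, mul_pow, Real.sq_sqrt hC0, inv_pow, ← div_eq_mul_inv,
        le_div_iff₀ (by positivity), ← Real.rpow_mul_natCast (norm_nonneg _), mul_comm δ,
        Real.rpow_natCast_mul (norm_nonneg _)]
      linarith
    calc ‖gradient u x‖ = (‖gradient u x‖ ^ δ) ^ (1 / δ) := by
          rw [← Real.rpow_mul (norm_nonneg _), mul_one_div_cancel hδ0.ne', Real.rpow_one]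
      _ ≤ (3 * √C * ‖x‖⁻¹) ^ (1 / δ) := Real.rpow_le_rpow (by positivity) hg (by positivity)
      _ = (3 * √C) ^ (1 / δ) * ‖x‖ ^ (-(1 / δ)) := by
          rw [Real.mul_rpow (by positivity) (by positivity), Real.inv_rpow hx0.le,
            Real.rpow_neg hx0.le]
end

section
/- Let N ≥ 2, 1 < p ≤ N and p − 1 < q < q_c, and let Ω ⊆ ℝ^N be an open set containing 0. Let u be a strong solution of (E) on Ω ∖ {0} with u < 0 on Ω ∖ {0}. Then there exists k ≤ 0 such that lim_{x→0} u(x)/μ_p(x) = k. -/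
open Metric Set Filter Topology MeasureTheory

/-- The fundamental solution of the p-Laplacian in `ℝ^N`. -/
noncomputable def mup (N : ℕ) (p : ℝ) (x : EuclideanSpace ℝ (Fin N)) : ℝ :=
  if p < N then ((p - 1) / ((N : ℝ) - p)) * ‖x‖ ^ ((p - (N : ℝ)) / (p - 1))
  else -Real.log ‖x‖

section Jets

variable {E : Type*} [NormedAddCommGroup E] [InnerProductSpace ℝ E]

/-- `φ` has, along every line through `x`, first derivative `l` and second derivative `Q` at `x`. -/
def LineJet (φ : E → ℝ) (x : E) (l Q : E → ℝ) : Prop :=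
  ∀ a, ∃ f' : ℝ → ℝ, (∀ᶠ t in 𝓝 (0 : ℝ), HasDerivAt (fun t : ℝ => φ (x + t • a)) (f' t) t) ∧
    f' 0 = l a ∧ HasDerivAt f' (Q a) 0

theorem second_derivative_nonneg_of_isLocalMin {f f' : ℝ → ℝ} {x c : ℝ}
    (hf : ∀ᶠ t in 𝓝 x, HasDerivAt f (f' t) t) (hf' : HasDerivAt f' c x)
    (hmin : IsLocalMin f x) : f' x = 0 ∧ 0 ≤ c := by
  have h0 : f' x = 0 := hmin.hasDerivAt_eq_zero hf.self_of_nhds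
  refine ⟨h0, ?_⟩
  by_contra! hc
  have hd : deriv f =ᶠ[𝓝 x] f' := hf.mono fun t ht => ht.deriv
  have hdd : deriv (deriv f) x = c := by rw [hd.deriv_eq, hf'.deriv]
  have hmax : IsLocalMax f x := isLocalMax_of_deriv_deriv_neg (by rw [hdd]; exact hc)
    (by rw [hf.self_of_nhds.deriv, h0]) hf.self_of_nhds.continuousAt
  have hconst : f =ᶠ[𝓝 x] fun _ => f x := by
    filter_upwards [hmin, hmax] with t h1 h2 using le_antisymm h2 h1
  have : deriv f =ᶠ[𝓝 x] fun _ => 0 := by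
    filter_upwards [hconst.eventuallyEq_nhds] with t ht
    rw [ht.deriv_eq]; simp
  have := this.deriv_eq
  rw [hdd] at this
  simp at this
  exact hc.ne this

theorem LineJet.of_isLocalMin {φ : E → ℝ} {x : E} {l Q : E → ℝ} (h : LineJet φ x l Q)
    (hmin : IsLocalMin φ x) (a : E) : l a = 0 ∧ 0 ≤ Q a := by
  obtain ⟨f', h1, h2, h3⟩ := h a
  rw [← h2]
  refine second_derivative_nonneg_of_isLocalMin h1 h3 ?_
  have hc : ContinuousAt (fun t : ℝ => x + t • a) 0 := by fun_prop
  have := hc.tendsto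
  simp only [zero_smul, add_zero] at this
  have := this.eventually hmin
  unfold IsLocalMin IsMinFilter
  simpa using this

theorem LineJet.add {φ ψ : E → ℝ} {x : E} {l m Q P : E → ℝ} (h : LineJet φ x l Q)
    (k : LineJet ψ x m P) : LineJet (fun y => φ y + ψ y) x (fun a => l a + m a)
      (fun a => Q a + P a) := by
  intro a
  obtain ⟨f', h1, h2, h3⟩ := h a
  obtain ⟨g', k1, k2, k3⟩ := k a
  refine ⟨fun t => f' t + g' t, ?_, by simp [h2, k2], h3.add k3⟩
  filter_upwards [h1, k1] with t ht kt using ht.add kt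

theorem LineJet.const_mul {φ : E → ℝ} {x : E} {l Q : E → ℝ} (h : LineJet φ x l Q) (c : ℝ) :
    LineJet (fun y => c * φ y) x (fun a => c * l a) (fun a => c * Q a) := by
  intro a
  obtain ⟨f', h1, h2, h3⟩ := h a
  refine ⟨fun t => c * f' t, ?_, by simp [h2], h3.const_mul c⟩
  filter_upwards [h1] with t ht using ht.const_mul c

theorem LineJet.add_const {φ : E → ℝ} {x : E} {l Q : E → ℝ} (h : LineJet φ x l Q) (c : ℝ) :
    LineJet (fun y => φ y + c) x l Q := by
  intro a
  obtain ⟨f', h1, h2, h3⟩ := h a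
  exact ⟨f', h1.mono fun t ht => ht.add_const c, h2, h3⟩

theorem LineJet.comp_smul {φ : E → ℝ} {x : E} {c : ℝ} {l Q : E → ℝ} (h : LineJet φ (c • x) l Q) :
    LineJet (fun y => φ (c • y)) x (fun a => l (c • a)) (fun a => Q (c • a)) := by
  intro a
  obtain ⟨f', h1, h2, h3⟩ := h (c • a)
  refine ⟨f', ?_, h2, h3⟩
  convert h1 using 5 with t
  rw [smul_add, smul_comm]

/-- The line jet of a radial function `y ↦ ψ (‖y - c‖ ^ 2)`. -/
theorem lineJet_radial {ψ ψ' : ℝ → ℝ} {k : ℝ} {x c : E}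
    (h : ∀ᶠ s in 𝓝 (‖x - c‖ ^ 2), HasDerivAt ψ (ψ' s) s)
    (h' : HasDerivAt ψ' k (‖x - c‖ ^ 2)) :
    LineJet (fun y => ψ (‖y - c‖ ^ 2)) x (fun a => 2 * ψ' (‖x - c‖ ^ 2) * inner ℝ (x - c) a)
      (fun a => 4 * k * inner ℝ (x - c) a ^ 2 + 2 * ψ' (‖x - c‖ ^ 2) * ‖a‖ ^ 2) := by
  intro a
  have key : ∀ t : ℝ, ‖x + t • a - c‖ ^ 2 = ‖x - c‖ ^ 2 + 2 * t * inner ℝ (x - c) a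
      + t ^ 2 * ‖a‖ ^ 2 := by
    intro t
    have : x + t • a - c = (x - c) + t • a := by abel
    rw [this, norm_add_sq_real, inner_smul_right, norm_smul, mul_pow, Real.norm_eq_abs, sq_abs]
    ring
  have hd : ∀ t : ℝ, HasDerivAt (fun t : ℝ => ‖x - c‖ ^ 2 + 2 * t * inner ℝ (x - c) a
      + t ^ 2 * ‖a‖ ^ 2) (2 * inner ℝ (x - c) a + 2 * t * ‖a‖ ^ 2) t := by
    intro t
    have h1 := (((hasDerivAt_id t).const_mul 2).mul_const (inner ℝ (x - c) a)).const_add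
      (‖x - c‖ ^ 2)
    have h2 := ((hasDerivAt_id t).pow 2).mul_const (‖a‖ ^ 2)
    refine (h1.add h2).congr_deriv ?_
    simp
  refine ⟨fun t => ψ' (‖x - c‖ ^ 2 + 2 * t * inner ℝ (x - c) a + t ^ 2 * ‖a‖ ^ 2) *
    (2 * inner ℝ (x - c) a + 2 * t * ‖a‖ ^ 2), ?_, ?_, ?_⟩
  · have hc := (hd 0).continuousAt.tendsto
    simp only [mul_zero, zero_mul, add_zero, ne_eq, OfNat.ofNat_ne_zero, not_false_eq_true,
      zero_pow] at hc
    filter_upwards [hc.eventually h] with t ht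
    simp only [key]
    exact HasDerivAt.comp t ht (hd t)
  · simp; ring
  · have e0 : ‖x - c‖ ^ 2 + 2 * 0 * inner ℝ (x - c) a + 0 ^ 2 * ‖a‖ ^ 2 = ‖x - c‖ ^ 2 := by simp
    have h1 : HasDerivAt (fun t : ℝ => ψ' (‖x - c‖ ^ 2 + 2 * t * inner ℝ (x - c) a
      + t ^ 2 * ‖a‖ ^ 2)) (k * (2 * inner ℝ (x - c) a + 2 * 0 * ‖a‖ ^ 2)) 0 :=
      HasDerivAt.comp (0 : ℝ) (h₂ := ψ') (by rw [e0]; exact h') (hd 0)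
    have h2 : HasDerivAt (fun t : ℝ => 2 * inner ℝ (x - c) a + 2 * t * ‖a‖ ^ 2) (2 * ‖a‖ ^ 2) 0 := by
      simpa using (((hasDerivAt_id (0 : ℝ)).const_mul 2).mul_const (‖a‖ ^ 2)).const_add
        (2 * inner ℝ (x - c) a)
    refine (h1.mul h2).congr_deriv ?_
    simp; ring

/-- The derivative of `f` in the direction `a`. -/
noncomputable def dirDeriv (a : E) (f : E → ℝ) (x : E) : ℝ := fderiv ℝ f x a

theorem hasDerivAt_line {f : E → ℝ} {x a : E} {t : ℝ} (hf : DifferentiableAt ℝ f (x + t • a)) :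
    HasDerivAt (fun t : ℝ => f (x + t • a)) (dirDeriv a f (x + t • a)) t := by
  have h1 : HasDerivAt (fun t : ℝ => x + t • a) a t := by
    simpa using ((hasDerivAt_id t).smul_const a).const_add x
  exact hf.hasFDerivAt.comp_hasDerivAt t h1

theorem ContDiffOn.dirDeriv {f : E → ℝ} {U : Set E} {m n : WithTop ℕ∞} (hf : ContDiffOn ℝ n f U)
    (hU : IsOpen U) (hmn : m + 1 ≤ n) (a : E) : ContDiffOn ℝ m (dirDeriv a f) U :=
  (hf.fderiv_of_isOpen hU hmn).clm_apply contDiffOn_const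

theorem dirDeriv_congr {f g : E → ℝ} {U : Set E} (hU : IsOpen U) (h : ∀ y ∈ U, f y = g y) {x : E}
    (hx : x ∈ U) (a : E) : dirDeriv a f x = dirDeriv a g x := by
  have : f =ᶠ[𝓝 x] g := Filter.eventuallyEq_of_mem (hU.mem_nhds hx) h
  rw [dirDeriv, dirDeriv, this.fderiv_eq]

theorem dirDeriv_comm {f : E → ℝ} {U : Set E} (hU : IsOpen U) (hf : ContDiffOn ℝ 2 f U) {x : E}
    (hx : x ∈ U) (a b : E) : dirDeriv a (dirDeriv b f) x = dirDeriv b (dirDeriv a f) x := by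
  have hfx : ContDiffAt ℝ 2 f x := hf.contDiffAt (hU.mem_nhds hx)
  have hd : DifferentiableAt ℝ (fderiv ℝ f) x :=
    (hfx.fderiv_right (m := 1) (by norm_num)).differentiableAt (by norm_num)
  have e : ∀ c d : E, dirDeriv c (dirDeriv d f) x = fderiv ℝ (fderiv ℝ f) x c d := by
    intro c d
    have h := hd.hasFDerivAt.clm_apply (hasFDerivAt_const d x)
    have h2 : HasFDerivAt (dirDeriv d f) _ x := h
    rw [dirDeriv, h2.fderiv]
    simp
  rw [e, e]
  exact (hfx.isSymmSndFDerivAt (by simp)) a b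

theorem lineJet_of_contDiffOn {f : E → ℝ} {U : Set E} (hU : IsOpen U) (hf : ContDiffOn ℝ 2 f U)
    {x : E} (hx : x ∈ U) :
    LineJet f x (fun a => dirDeriv a f x) (fun a => dirDeriv a (dirDeriv a f) x) := by
  intro a
  have h1 : ContDiffOn ℝ 1 (dirDeriv a f) U := hf.dirDeriv hU (by norm_num) a
  refine ⟨fun t => dirDeriv a f (x + t • a), ?_, by simp, ?_⟩
  · have hc : ContinuousAt (fun t : ℝ => x + t • a) 0 := by fun_prop
    have := hc.tendsto
    simp only [zero_smul, add_zero] at this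
    filter_upwards [this.eventually (hU.mem_nhds hx)] with t ht
    exact hasDerivAt_line ((hf.contDiffAt (hU.mem_nhds ht)).differentiableAt (by norm_num))
  · have := hasDerivAt_line (f := dirDeriv a f) (x := x) (a := a) (t := 0)
      (by simpa using (h1.contDiffAt (hU.mem_nhds hx)).differentiableAt (by norm_num))
    simpa using this

end Jets

section Equation

variable {N : ℕ}

theorem inner_gradient_eq_dirDeriv (u : EuclideanSpace ℝ (Fin N) → ℝ)
    (x a : EuclideanSpace ℝ (Fin N)) : inner ℝ (gradient u x) a = dirDeriv a u x := by
  simp [gradient, dirDeriv]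

theorem norm_gradient_sq (b : OrthonormalBasis (Fin N) ℝ (EuclideanSpace ℝ (Fin N)))
    (u : EuclideanSpace ℝ (Fin N) → ℝ) (x : EuclideanSpace ℝ (Fin N)) :
    ‖gradient u x‖ ^ 2 = ∑ k, dirDeriv (b k) u x ^ 2 := by
  rw [← b.sum_sq_norm_inner_left]
  simp [dirDeriv]

theorem norm_fderiv_eq_norm_gradient (u : EuclideanSpace ℝ (Fin N) → ℝ)
    (x : EuclideanSpace ℝ (Fin N)) : ‖fderiv ℝ u x‖ = ‖gradient u x‖ := by
  simp [gradient]

theorem exists_adapted_basis (i₀ : Fin N) {g : EuclideanSpace ℝ (Fin N)} (hg : g ≠ 0) :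
    ∃ b : OrthonormalBasis (Fin N) ℝ (EuclideanSpace ℝ (Fin N)), g = ‖g‖ • b i₀ := by
  have hg' : ‖g‖ ≠ 0 := norm_ne_zero_iff.2 hg
  obtain ⟨b, hb⟩ := Orthonormal.exists_orthonormalBasis_extension_of_card_eq (𝕜 := ℝ)
    (E := EuclideanSpace ℝ (Fin N)) (ι := Fin N) (by simp) (v := fun _ => ‖g‖⁻¹ • g) (s := {i₀})
    (by
      refine ⟨fun i => ?_, fun i j hij => absurd (Subsingleton.elim i j) hij⟩
      simp [norm_smul, hg'])
  refine ⟨b, ?_⟩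
  rw [hb i₀ rfl, smul_smul, mul_inv_cancel₀ hg', one_smul]

theorem trace_fderiv_pGradField (b : OrthonormalBasis (Fin N) ℝ (EuclideanSpace ℝ (Fin N))) {p : ℝ}
    {u : EuclideanSpace ℝ (Fin N) → ℝ} {U : Set (EuclideanSpace ℝ (Fin N))} (hU : IsOpen U)
    (hu : ContDiffOn ℝ 2 u U) {x : EuclideanSpace ℝ (Fin N)} (hx : x ∈ U)
    (hF : DifferentiableAt ℝ (pGradField p u) x) {z : ℝ} (hz : z = ∑ k, dirDeriv (b k) u x ^ 2)
    (hz0 : 0 < z) :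
    LinearMap.trace ℝ (EuclideanSpace ℝ (Fin N)) (fderiv ℝ (pGradField p u) x :
        EuclideanSpace ℝ (Fin N) →ₗ[ℝ] EuclideanSpace ℝ (Fin N)) =
      z ^ ((p - 4) / 2) * (z * ∑ i, dirDeriv (b i) (dirDeriv (b i) u) x + (p - 2) *
        ∑ i, ∑ j, dirDeriv (b i) u x * dirDeriv (b j) u x * dirDeriv (b i) (dirDeriv (b j) u) x) := by
  have hD : ∀ i, DifferentiableAt ℝ (dirDeriv (b i) u) x := fun i =>
    ((hu.dirDeriv hU (m := 1) (by norm_num) (b i)).contDiffAt (hU.mem_nhds hx)).differentiableAt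
      (by norm_num)
  have key : ∀ i, inner ℝ (b i) (fderiv ℝ (pGradField p u) x (b i)) =
      z ^ ((p - 4) / 2) * (z * dirDeriv (b i) (dirDeriv (b i) u) x + (p - 2) *
        ∑ j, dirDeriv (b i) u x * dirDeriv (b j) u x * dirDeriv (b i) (dirDeriv (b j) u) x) := by
    intro i
    have hF' : HasFDerivAt (pGradField p u) (fderiv ℝ (pGradField p u) x) (x + (0 : ℝ) • b i) := by
      simpa using hF.hasFDerivAt
    have hl : HasDerivAt (fun t : ℝ => x + t • b i) (b i) 0 := by
      simpa using ((hasDerivAt_id (0 : ℝ)).smul_const (b i)).const_add x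
    have h1 := (hasDerivAt_const (0 : ℝ) (b i)).inner ℝ (hF'.comp_hasDerivAt 0 hl)
    have hline : ∀ k, HasDerivAt (fun t : ℝ => dirDeriv (b k) u (x + t • b i))
        (dirDeriv (b i) (dirDeriv (b k) u) x) 0 := fun k => by
      simpa using hasDerivAt_line (f := dirDeriv (b k) u) (x := x) (a := b i) (t := 0)
        (by simpa using hD k)
    have hsum : HasDerivAt (fun t : ℝ => ∑ k, dirDeriv (b k) u (x + t • b i) ^ 2)
        (∑ k, 2 * dirDeriv (b k) u x * dirDeriv (b i) (dirDeriv (b k) u) x) 0 := by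
      refine (HasDerivAt.fun_sum fun k _ => (hline k).fun_pow 2).congr_deriv ?_
      simp
    have h2 := (hsum.rpow_const (p := (p - 2) / 2) (Or.inl (by
      simp only [zero_smul, add_zero]; rw [← hz]; exact hz0.ne'))).mul (hline i)
    have heq : (fun t : ℝ => inner ℝ (b i) (pGradField p u (x + t • b i))) =
        ((fun t : ℝ => (∑ k, dirDeriv (b k) u (x + t • b i) ^ 2) ^ ((p - 2) / 2)) *
          fun t : ℝ => dirDeriv (b i) u (x + t • b i)) := by
      funext t
      simp only [pGradField, inner_smul_right, Pi.mul_apply]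
      rw [real_inner_comm, inner_gradient_eq_dirDeriv, ← norm_gradient_sq, ← Real.rpow_natCast,
        ← Real.rpow_mul (norm_nonneg _)]
      congr 2
      push_cast
      ring
    have h1' : HasDerivAt (fun t : ℝ => inner ℝ (b i) (pGradField p u (x + t • b i))) _ 0 := h1
    rw [heq] at h1'
    have := h1'.unique h2
    simp only [zero_smul, add_zero, inner_zero_left, ← hz] at this
    rw [this, show (p - 2) / 2 - 1 = (p - 4) / 2 by ring,
      show (p - 2) / 2 = (p - 4) / 2 + 1 by ring, Real.rpow_add hz0, Real.rpow_one]
    have : ∑ j, dirDeriv (b i) u x * dirDeriv (b j) u x * dirDeriv (b i) (dirDeriv (b j) u) x =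
        dirDeriv (b i) u x * ∑ j, dirDeriv (b j) u x * dirDeriv (b i) (dirDeriv (b j) u) x := by
      rw [Finset.mul_sum]; exact Finset.sum_congr rfl fun _ _ => by ring
    rw [this]
    have : ∑ k, 2 * dirDeriv (b k) u x * dirDeriv (b i) (dirDeriv (b k) u) x =
        2 * ∑ j, dirDeriv (b j) u x * dirDeriv (b i) (dirDeriv (b j) u) x := by
      rw [Finset.mul_sum]; exact Finset.sum_congr rfl fun _ _ => by ring
    rw [this]
    ring
  rw [LinearMap.trace_eq_sum_inner _ b]
  simp only [ContinuousLinearMap.coe_coe, key]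
  rw [← Finset.mul_sum, Finset.sum_add_distrib, ← Finset.mul_sum, ← Finset.mul_sum]

theorem IsStrongSolution.isOpen_regular {p q : ℝ} {G : Set (EuclideanSpace ℝ (Fin N))}
    (hG : IsOpen G) {u : EuclideanSpace ℝ (Fin N) → ℝ} (hu : IsStrongSolution p q G u) :
    IsOpen {x | x ∈ G ∧ gradient u x ≠ 0} := by
  have h : ContinuousOn (fun x => ‖fderiv ℝ u x‖) G :=
    (hu.1.continuousOn_fderiv_of_isOpen hG le_rfl).norm
  have := h.isOpen_inter_preimage hG (isOpen_compl_singleton (x := (0 : ℝ)))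
  convert this using 1
  ext x
  simp [norm_fderiv_eq_norm_gradient]

/-- Nondivergence form of the equation at regular points. -/
theorem IsStrongSolution.nondivergence (b : OrthonormalBasis (Fin N) ℝ (EuclideanSpace ℝ (Fin N)))
    {p q : ℝ} {G : Set (EuclideanSpace ℝ (Fin N))}
    (hG : IsOpen G) {u : EuclideanSpace ℝ (Fin N) → ℝ} (hu : IsStrongSolution p q G u)
    {x : EuclideanSpace ℝ (Fin N)} (hx : x ∈ G) (hgx : gradient u x ≠ 0)
    {z : ℝ} (hz : z = ∑ k, dirDeriv (b k) u x ^ 2) :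
    z * ∑ i, dirDeriv (b i) (dirDeriv (b i) u) x + (p - 2) *
        ∑ i, ∑ j, dirDeriv (b i) u x * dirDeriv (b j) u x * dirDeriv (b i) (dirDeriv (b j) u) x
      = z ^ ((q - p + 4) / 2) := by
  have hz' : z = ‖gradient u x‖ ^ 2 := by rw [hz, norm_gradient_sq b]
  have hz0 : 0 < z := by rw [hz']; exact pow_pos (norm_pos_iff.2 hgx) 2
  have hU := hu.isOpen_regular hG
  have h1 := trace_fderiv_pGradField b hU (hu.2.1.of_le (by norm_num)) ⟨hx, hgx⟩ (hu.2.2 x hx).1 hz hz0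
  rw [(hu.2.2 x hx).2] at h1
  have h2 : ‖gradient u x‖ ^ q = z ^ (q / 2) := by
    rw [hz', ← Real.rpow_natCast, ← Real.rpow_mul (norm_nonneg _)]
    congr 1; push_cast; ring
  rw [h2] at h1
  rw [show (q - p + 4) / 2 = q / 2 - (p - 4) / 2 by ring, Real.rpow_sub hz0, h1]
  field_simp

/-- Weights of the second order part of the `p`-Laplacian in a basis whose vector of index `i₀` is
the direction of the gradient. -/
noncomputable def pWeight (p : ℝ) (i₀ i : Fin N) : ℝ := if i = i₀ then p - 1 else 1

theorem sum_pWeight_mul (p : ℝ) (i₀ : Fin N) (f : Fin N → ℝ) :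
    ∑ i, pWeight p i₀ i * f i = ∑ i, f i + (p - 2) * f i₀ := by
  have : ∀ i, pWeight p i₀ i * f i = f i + (if i = i₀ then (p - 2) * f i else 0) := by
    intro i; unfold pWeight; split_ifs <;> ring
  simp [this, Finset.sum_add_distrib]

theorem pWeight_nonneg {p : ℝ} (hp : 1 < p) (i₀ i : Fin N) : 0 ≤ pWeight p i₀ i := by
  unfold pWeight; split_ifs <;> linarith

theorem IsStrongSolution.nondivergence_adapted
    (b : OrthonormalBasis (Fin N) ℝ (EuclideanSpace ℝ (Fin N)))
    {p q : ℝ} {G : Set (EuclideanSpace ℝ (Fin N))}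
    (hG : IsOpen G) {u : EuclideanSpace ℝ (Fin N) → ℝ} (hu : IsStrongSolution p q G u)
    {x : EuclideanSpace ℝ (Fin N)} (hx : x ∈ G) {i₀ : Fin N} {κ : ℝ} (hκ : κ ≠ 0)
    (hgx : gradient u x = κ • b i₀) :
    0 < ∑ i, pWeight p i₀ i * dirDeriv (b i) (dirDeriv (b i) u) x := by
  have hg0 : gradient u x ≠ 0 := by
    rw [hgx]; exact smul_ne_zero hκ (b.orthonormal.ne_zero i₀)
  have hd : ∀ i, dirDeriv (b i) u x = if i = i₀ then κ else 0 := by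
    intro i
    rw [← inner_gradient_eq_dirDeriv, hgx, inner_smul_left, orthonormal_iff_ite.1 b.orthonormal]
    by_cases h : i = i₀
    · simp [h]
    · simp [h, Ne.symm h]
  have h := hu.nondivergence b hG hx hg0 rfl
  simp only [hd, ite_pow, ne_eq, OfNat.ofNat_ne_zero, not_false_eq_true, zero_pow,
    Finset.sum_ite_eq', Finset.mem_univ, if_true, mul_ite, mul_zero, ite_mul, zero_mul] at h
  rw [sum_pWeight_mul]
  have hpos : 0 < (κ ^ 2) ^ ((q - p + 4) / 2) := Real.rpow_pos_of_pos (by positivity) _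
  rw [← h] at hpos
  have : 0 < κ ^ 2 * (∑ i, dirDeriv (b i) (dirDeriv (b i) u) x +
      (p - 2) * dirDeriv (b i₀) (dirDeriv (b i₀) u) x) := by
    convert hpos using 1; ring
  exact (mul_pos_iff_of_pos_left (by positivity)).1 this

/-- `-u` is strictly `p`-superharmonic at points where it is touched from below by a function with
nonzero gradient. -/
theorem IsStrongSolution.touching {p q : ℝ} (hp : 1 < p) {G : Set (EuclideanSpace ℝ (Fin N))}
    (hG : IsOpen G) {u : EuclideanSpace ℝ (Fin N) → ℝ} (hu : IsStrongSolution p q G u)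
    {x : EuclideanSpace ℝ (Fin N)} (hx : x ∈ G) (i₀ : Fin N) {φ l Q : EuclideanSpace ℝ (Fin N) → ℝ}
    {g : EuclideanSpace ℝ (Fin N)} (hg : g ≠ 0) (hl : ∀ a, l a = inner ℝ g a)
    (hφ : LineJet φ x l Q) (hmin : IsLocalMin (fun y => -u y - φ y) x) :
    ∃ b : OrthonormalBasis (Fin N) ℝ (EuclideanSpace ℝ (Fin N)), g = ‖g‖ • b i₀ ∧
      ∑ i, pWeight p i₀ i * Q (b i) < 0 := by
  have hl' : ∀ a, dirDeriv a u x = - l a := by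
    intro a
    obtain ⟨f', h1, h2, -⟩ := hφ a
    have h3 := hasDerivAt_line (f := u) (x := x) (a := a) (t := 0)
      (by simpa using (hu.1.contDiffAt (hG.mem_nhds hx)).differentiableAt (by norm_num))
    have hc : ContinuousAt (fun t : ℝ => x + t • a) 0 := by fun_prop
    have hc := hc.tendsto
    simp only [zero_smul, add_zero] at hc h3
    have h4 : IsLocalMin (fun t : ℝ => -u (x + t • a) - φ (x + t • a)) 0 := by
      have := hc.eventually hmin
      unfold IsLocalMin IsMinFilter
      simpa using this
    have := h4.hasDerivAt_eq_zero (h3.neg.sub h1.self_of_nhds)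
    rw [h2] at this
    linarith
  have hgu : gradient u x = -g := by
    refine ext_inner_right ℝ fun a => ?_
    rw [inner_gradient_eq_dirDeriv, hl', hl, inner_neg_left]
  obtain ⟨b, hb⟩ := exists_adapted_basis i₀ hg
  refine ⟨b, hb, ?_⟩
  have hgx : gradient u x = (-‖g‖) • b i₀ := by rw [hgu, neg_smul, ← hb]
  have hpos := hu.nondivergence_adapted b hG hx (neg_ne_zero.2 (norm_ne_zero_iff.2 hg)) hgx
  have hju := lineJet_of_contDiffOn (hu.isOpen_regular hG) (hu.2.1.of_le (by norm_num))
    (x := x) ⟨hx, by rw [hgu]; exact neg_ne_zero.2 hg⟩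
  have hj := (hju.const_mul (-1)).add (hφ.const_mul (-1))
  have hmin' : IsLocalMin (fun y => -1 * u y + -1 * φ y) x := by
    convert hmin using 2 with y
    ring
  have hle : ∀ a, Q a ≤ -dirDeriv a (dirDeriv a u) x := by
    intro a
    have := (hj.of_isLocalMin hmin' a).2
    linarith
  have : ∑ i, pWeight p i₀ i * Q (b i) ≤
      ∑ i, pWeight p i₀ i * -dirDeriv (b i) (dirDeriv (b i) u) x :=
    Finset.sum_le_sum fun i _ => mul_le_mul_of_nonneg_left (hle _) (pWeight_nonneg hp _ _)
  simp only [mul_neg, Finset.sum_neg_distrib] at this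
  linarith

end Equation

section Bernstein

variable {N : ℕ}

theorem dirDeriv_exp_neg {w u : EuclideanSpace ℝ (Fin N) → ℝ}
    {U : Set (EuclideanSpace ℝ (Fin N))} (hU : IsOpen U) (hw : ContDiffOn ℝ 2 w U)
    (huw : ∀ y ∈ U, u y = -Real.exp (w y)) {y : EuclideanSpace ℝ (Fin N)} (hy : y ∈ U)
    (a : EuclideanSpace ℝ (Fin N)) : dirDeriv a u y = -(Real.exp (w y) * dirDeriv a w y) := by
  have hd : DifferentiableAt ℝ w y := (hw.contDiffAt (hU.mem_nhds hy)).differentiableAt (by norm_num)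
  rw [dirDeriv_congr hU huw hy]
  have h : HasFDerivAt (fun y => -Real.exp (w y)) _ y := hd.hasFDerivAt.exp.neg
  rw [dirDeriv, h.fderiv]
  simp [dirDeriv]

theorem dirDeriv_dirDeriv_exp_neg {w u : EuclideanSpace ℝ (Fin N) → ℝ}
    {U : Set (EuclideanSpace ℝ (Fin N))} (hU : IsOpen U) (hw : ContDiffOn ℝ 2 w U)
    (huw : ∀ y ∈ U, u y = -Real.exp (w y)) {y : EuclideanSpace ℝ (Fin N)} (hy : y ∈ U)
    (a b : EuclideanSpace ℝ (Fin N)) : dirDeriv a (dirDeriv b u) y =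
      -(Real.exp (w y) * (dirDeriv a (dirDeriv b w) y + dirDeriv a w y * dirDeriv b w y)) := by
  have hd : DifferentiableAt ℝ w y := (hw.contDiffAt (hU.mem_nhds hy)).differentiableAt (by norm_num)
  have hd2 : DifferentiableAt ℝ (dirDeriv b w) y :=
    ((hw.dirDeriv hU (m := 1) (by norm_num) b).contDiffAt (hU.mem_nhds hy)).differentiableAt
      (by norm_num)
  rw [dirDeriv_congr hU (fun y hy => dirDeriv_exp_neg hU hw huw hy b) hy]
  have h : HasFDerivAt (fun y => -(Real.exp (w y) * dirDeriv b w y)) _ y :=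
    (hd.hasFDerivAt.exp.mul hd2.hasFDerivAt).neg
  rw [dirDeriv, h.fderiv]
  simp [dirDeriv]
  ring

/-- The equation satisfied by `w = log (-u)`. -/
theorem IsStrongSolution.log_equation
    (b : OrthonormalBasis (Fin N) ℝ (EuclideanSpace ℝ (Fin N)))
    {p q : ℝ} {G : Set (EuclideanSpace ℝ (Fin N))}
    (hG : IsOpen G) {u w : EuclideanSpace ℝ (Fin N) → ℝ} (hu : IsStrongSolution p q G u)
    (hw : ContDiffOn ℝ 2 w {x | x ∈ G ∧ gradient u x ≠ 0})
    (huw : ∀ y ∈ {x | x ∈ G ∧ gradient u x ≠ 0}, u y = -Real.exp (w y))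
    {x : EuclideanSpace ℝ (Fin N)} (hx : x ∈ {x | x ∈ G ∧ gradient u x ≠ 0}) :
    (∑ k, dirDeriv (b k) w x ^ 2) * ∑ i, dirDeriv (b i) (dirDeriv (b i) w) x + (p - 2) *
        ∑ i, ∑ j, dirDeriv (b i) w x * dirDeriv (b j) w x * dirDeriv (b i) (dirDeriv (b j) w) x
      = -(p - 1) * (∑ k, dirDeriv (b k) w x ^ 2) ^ 2 -
        Real.exp ((q - p + 1) * w x) * (∑ k, dirDeriv (b k) w x ^ 2) ^ ((q - p + 4) / 2) := by
  have hU := hu.isOpen_regular hG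
  have h := hu.nondivergence b hG hx.1 hx.2 rfl
  simp only [dirDeriv_dirDeriv_exp_neg hU hw huw hx, dirDeriv_exp_neg hU hw huw hx] at h
  set e := Real.exp (w x) with he
  have he0 : 0 < e := Real.exp_pos _
  set z := ∑ k, dirDeriv (b k) w x ^ 2 with hz
  have hz0 : 0 ≤ z := Finset.sum_nonneg fun _ _ => sq_nonneg _
  have e1 : ∑ k, (-(e * dirDeriv (b k) w x)) ^ 2 = e ^ 2 * z := by
    rw [hz, Finset.mul_sum]; exact Finset.sum_congr rfl fun _ _ => by ring
  have e2 : ∑ i, -(e * (dirDeriv (b i) (dirDeriv (b i) w) x + dirDeriv (b i) w x *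
      dirDeriv (b i) w x)) = -(e * (∑ i, dirDeriv (b i) (dirDeriv (b i) w) x + z)) := by
    rw [hz, ← Finset.sum_add_distrib, Finset.mul_sum, ← Finset.sum_neg_distrib]
    exact Finset.sum_congr rfl fun _ _ => by ring
  have e4 : z ^ 2 = ∑ i, ∑ j, dirDeriv (b i) w x * dirDeriv (b j) w x *
      (dirDeriv (b i) w x * dirDeriv (b j) w x) := by
    rw [pow_two, hz, Finset.sum_mul_sum]
    exact Finset.sum_congr rfl fun _ _ => Finset.sum_congr rfl fun _ _ => by ring
  have e3 : ∑ i, ∑ j, -(e * dirDeriv (b i) w x) * -(e * dirDeriv (b j) w x) *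
      -(e * (dirDeriv (b i) (dirDeriv (b j) w) x + dirDeriv (b i) w x * dirDeriv (b j) w x)) =
      -(e ^ 3 * (∑ i, ∑ j, dirDeriv (b i) w x * dirDeriv (b j) w x *
        dirDeriv (b i) (dirDeriv (b j) w) x + z ^ 2)) := by
    rw [e4, ← Finset.sum_add_distrib, Finset.mul_sum, ← Finset.sum_neg_distrib]
    refine Finset.sum_congr rfl fun _ _ => ?_
    rw [← Finset.sum_add_distrib, Finset.mul_sum, ← Finset.sum_neg_distrib]
    exact Finset.sum_congr rfl fun _ _ => by ring
  rw [e1, e2, e3] at h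
  have e5 : (e ^ 2 * z) ^ ((q - p + 4) / 2) =
      e ^ 3 * (Real.exp ((q - p + 1) * w x) * z ^ ((q - p + 4) / 2)) := by
    rw [Real.mul_rpow (by positivity) hz0, ← mul_assoc]
    congr 1
    rw [he, ← Real.exp_nat_mul, ← Real.exp_nat_mul, ← Real.exp_add, ← Real.exp_mul]
    congr 1
    push_cast; ring
  rw [e5] at h
  have he3 : e ^ 3 ≠ 0 := by positivity
  apply mul_left_cancel₀ he3
  linear_combination -h

theorem hasDerivAt_line_zero {f : EuclideanSpace ℝ (Fin N) → ℝ}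
    {U : Set (EuclideanSpace ℝ (Fin N))} (hU : IsOpen U) (hf : ContDiffOn ℝ 1 f U)
    {x : EuclideanSpace ℝ (Fin N)} (hx : x ∈ U) (a : EuclideanSpace ℝ (Fin N)) :
    HasDerivAt (fun t : ℝ => f (x + t • a)) (dirDeriv a f x) 0 := by
  simpa using hasDerivAt_line (f := f) (x := x) (a := a) (t := 0)
    (by simpa using (hf.contDiffAt (hU.mem_nhds hx)).differentiableAt (by norm_num))

theorem dirDeriv_eq_of_hasDerivAt {f : EuclideanSpace ℝ (Fin N) → ℝ}
    {U : Set (EuclideanSpace ℝ (Fin N))} (hU : IsOpen U) (hf : ContDiffOn ℝ 1 f U)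
    {x : EuclideanSpace ℝ (Fin N)} (hx : x ∈ U) {a : EuclideanSpace ℝ (Fin N)} {c : ℝ}
    (h : HasDerivAt (fun t : ℝ => f (x + t • a)) c 0) : dirDeriv a f x = c :=
  (hasDerivAt_line_zero hU hf hx a).unique h

/-- A Bochner type identity for `z = |∇w|²`, in a basis adapted to `∇w`. -/
theorem bochner_identity (b : OrthonormalBasis (Fin N) ℝ (EuclideanSpace ℝ (Fin N))) {p s : ℝ}
    {U : Set (EuclideanSpace ℝ (Fin N))} (hU : IsOpen U) {w : EuclideanSpace ℝ (Fin N) → ℝ}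
    (hw : ContDiffOn ℝ 3 w U)
    (heq : ∀ y ∈ U, (∑ k, dirDeriv (b k) w y ^ 2) * ∑ i, dirDeriv (b i) (dirDeriv (b i) w) y +
        (p - 2) * ∑ i, ∑ j, dirDeriv (b i) w y * dirDeriv (b j) w y *
          dirDeriv (b i) (dirDeriv (b j) w) y
      = -(p - 1) * (∑ k, dirDeriv (b k) w y ^ 2) ^ 2 -
        Real.exp (s * w y) * (∑ k, dirDeriv (b k) w y ^ 2) ^ ((s + 3) / 2))
    {x : EuclideanSpace ℝ (Fin N)} (hx : x ∈ U) {i₀ : Fin N} {κ E : ℝ} (hκ : 0 < κ)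
    (hwx : ∀ i, dirDeriv (b i) w x = if i = i₀ then κ else 0)
    (hE : E = Real.exp (s * w x) * (κ ^ 2) ^ ((s + 1) / 2))
    {H : Fin N → Fin N → ℝ} (hH : ∀ i j, H i j = dirDeriv (b i) (dirDeriv (b j) w) x) :
    ∑ i, H i i = -(p - 1) * κ ^ 2 - E - (p - 2) * H i₀ i₀ ∧
    (∀ i, dirDeriv (b i) (fun y => ∑ k, dirDeriv (b k) w y ^ 2) x = 2 * κ * H i₀ i) ∧
    ∑ i, pWeight p i₀ i * dirDeriv (b i) (dirDeriv (b i) fun y => ∑ k, dirDeriv (b k) w y ^ 2) x =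
      2 * ∑ i, ∑ j, H i j ^ 2 - 2 * s * κ ^ 2 * E - 4 * (p - 1) * κ ^ 2 * H i₀ i₀ -
        2 * (s + 1) * E * H i₀ i₀ + 4 * (p - 2) * H i₀ i₀ ^ 2 -
        2 * (p - 2) * ∑ k, H i₀ k ^ 2 := by
  have hw2 : ContDiffOn ℝ 2 w U := hw.of_le (by norm_num)
  have c2 : ∀ i, ContDiffOn ℝ 2 (dirDeriv (b i) w) U := fun i => hw.dirDeriv hU (by norm_num) _
  have c1 : ∀ i, ContDiffOn ℝ 1 (dirDeriv (b i) w) U := fun i => (c2 i).of_le (by norm_num)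
  have c11 : ∀ i j, ContDiffOn ℝ 1 (dirDeriv (b i) (dirDeriv (b j) w)) U :=
    fun i j => (c2 j).dirDeriv hU (by norm_num) _
  have hsymm : ∀ i j, H i j = H j i := fun i j => by
    rw [hH, hH]; exact dirDeriv_comm hU hw2 hx _ _
  have hκ2 : 0 < κ ^ 2 := by positivity
  have hzx : ∑ k, dirDeriv (b k) w x ^ 2 = κ ^ 2 := by simp [hwx]
  have hpow : (κ ^ 2) ^ ((s + 3) / 2) = κ ^ 2 * (κ ^ 2) ^ ((s + 1) / 2) := by
    rw [show (s + 3) / 2 = 1 + (s + 1) / 2 by ring, Real.rpow_add hκ2, Real.rpow_one]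
  have htr : ∑ i, H i i = -(p - 1) * κ ^ 2 - E - (p - 2) * H i₀ i₀ := by
    have h := heq x hx
    rw [hzx, hpow] at h
    simp only [hwx, ← hH, ite_mul, mul_ite, zero_mul, mul_zero, Finset.sum_ite_eq',
      Finset.mem_univ, if_true] at h
    apply mul_left_cancel₀ hκ2.ne'
    rw [hE]
    linear_combination h
  have cz : ContDiffOn ℝ 2 (fun y => ∑ k, dirDeriv (b k) w y ^ 2) U :=
    ContDiffOn.sum fun k _ => (c2 k).pow 2
  have hz1 : ∀ i, ∀ y ∈ U, dirDeriv (b i) (fun y => ∑ k, dirDeriv (b k) w y ^ 2) y =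
      ∑ k, 2 * dirDeriv (b k) w y * dirDeriv (b i) (dirDeriv (b k) w) y := by
    intro i y hy
    refine dirDeriv_eq_of_hasDerivAt hU (cz.of_le (by norm_num)) hy ?_
    refine (HasDerivAt.fun_sum fun k _ =>
      (hasDerivAt_line_zero hU (c1 k) hy (b i)).fun_pow 2).congr_deriv ?_
    simp
  have hz1x : ∀ i, dirDeriv (b i) (fun y => ∑ k, dirDeriv (b k) w y ^ 2) x = 2 * κ * H i₀ i := by
    intro i
    rw [hz1 i x hx]
    simp [hwx, hsymm i₀ i, hH]
  have hz2 : ∀ i, dirDeriv (b i) (dirDeriv (b i) fun y => ∑ k, dirDeriv (b k) w y ^ 2) x =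
      2 * ∑ k, H i k ^ 2 + 2 * κ * dirDeriv (b i₀) (dirDeriv (b i) (dirDeriv (b i) w)) x := by
    intro i
    have e3 : dirDeriv (b i₀) (dirDeriv (b i) (dirDeriv (b i) w)) x =
        dirDeriv (b i) (dirDeriv (b i) (dirDeriv (b i₀) w)) x := by
      rw [dirDeriv_comm hU (c2 i) hx]
      exact dirDeriv_congr hU (fun y hy => dirDeriv_comm hU hw2 hy _ _) hx _
    rw [dirDeriv_congr hU (hz1 i) hx, e3]
    have hc : ContDiffOn ℝ 1
        (fun y => ∑ k, 2 * dirDeriv (b k) w y * dirDeriv (b i) (dirDeriv (b k) w) y) U :=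
      ContDiffOn.sum fun k _ => (contDiffOn_const.mul (c1 k)).mul (c11 i k)
    rw [dirDeriv_eq_of_hasDerivAt hU hc hx (HasDerivAt.fun_sum fun k _ =>
      ((hasDerivAt_line_zero hU (c1 k) hx (b i)).const_mul 2).fun_mul
        (hasDerivAt_line_zero hU (c11 i k) hx (b i)))]
    simp only [zero_smul, add_zero, hwx, ← hH, Finset.sum_add_distrib, mul_ite, ite_mul, mul_zero,
      zero_mul, Finset.sum_ite_eq', Finset.mem_univ, if_true, Finset.mul_sum]
    congr 1
    exact Finset.sum_congr rfl fun _ _ => by ring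
  refine ⟨htr, hz1x, ?_⟩
  have hline : Tendsto (fun t : ℝ => x + t • b i₀) (𝓝 0) (𝓝 x) := by
    have hc : ContinuousAt (fun t : ℝ => x + t • b i₀) 0 := by fun_prop
    simpa using hc.tendsto
  have hz0 := hasDerivAt_line_zero hU (cz.of_le (by norm_num)) hx (b i₀)
  have hL := (hz0.fun_mul (HasDerivAt.fun_sum fun i (_ : i ∈ Finset.univ) =>
    hasDerivAt_line_zero hU (c11 i i) hx (b i₀))).fun_add
    ((HasDerivAt.fun_sum fun i (_ : i ∈ Finset.univ) => HasDerivAt.fun_sum fun j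
      (_ : j ∈ Finset.univ) => ((hasDerivAt_line_zero hU (c1 i) hx (b i₀)).fun_mul
        (hasDerivAt_line_zero hU (c1 j) hx (b i₀))).fun_mul
        (hasDerivAt_line_zero hU (c11 i j) hx (b i₀))).const_mul (p - 2))
  have hR := ((hz0.fun_pow 2).const_mul (-(p - 1))).fun_sub
    ((((hasDerivAt_line_zero hU (hw.of_le (by norm_num)) hx (b i₀)).const_mul s).exp).fun_mul
      (hz0.rpow_const (p := (s + 3) / 2) (Or.inl (by
        simp only [zero_smul, add_zero, hzx]; exact hκ2.ne'))))
  have hLR := hL.unique (hR.congr_of_eventuallyEq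
    ((hline.eventually (hU.mem_nhds hx)).mono fun t ht => heq _ ht))
  simp only [zero_smul, add_zero, hzx] at hLR
  simp only [hz1x, hwx, ← hH, htr] at hLR
  rw [show (s + 3) / 2 - 1 = (s + 1) / 2 by ring, hpow] at hLR
  simp only [Finset.sum_add_distrib, mul_ite, ite_mul, mul_zero, zero_mul,
    Finset.sum_ite_eq', Finset.mem_univ, if_true, add_mul] at hLR
  rw [sum_pWeight_mul]
  simp only [hz2, Finset.sum_add_distrib, ← Finset.mul_sum]
  have e6 : ∑ i, H i₀ i * κ * H i i₀ = κ * ∑ i, H i₀ i ^ 2 := by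
    rw [Finset.mul_sum]
    exact Finset.sum_congr rfl fun i _ => by rw [hsymm i i₀]; ring
  have e7 : ∑ i, ∑ j, (if i = i₀ then κ * H i₀ j * H i j else 0) = κ * ∑ i, H i₀ i ^ 2 := by
    rw [Finset.sum_comm, Finset.mul_sum]
    simp only [Finset.sum_ite_eq', Finset.mem_univ, if_true]
    exact Finset.sum_congr rfl fun i _ => by ring
  rw [e6, e7] at hLR
  apply mul_left_cancel₀ hκ.ne'
  rw [hE] at hLR ⊢
  linear_combination 2 * hLR

end Bernstein

section GradientEstimate

variable {N : ℕ}

/-- The algebraic inequality behind the gradient estimate. -/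
theorem exists_bernstein_constant {n a s A : ℝ} (hn : 0 < n) (ha : 0 < a) (hs : 0 < s)
    (hsn : s * n < 2 * a) (hA : 0 ≤ A) :
    ∃ C, 0 ≤ C ∧ ∀ κ G E h T S t : ℝ, 0 < κ → t = -a * κ ^ 2 - E - (a - 1) * h → t ^ 2 ≤ n * S →
      h ^ 2 ≤ T → T ≤ 4 * κ ^ 2 * G ^ 2 →
      2 * S - 2 * s * κ ^ 2 * E - 4 * a * κ ^ 2 * h - 2 * (s + 1) * E * h + 4 * (a - 1) * h ^ 2 -
        2 * (a - 1) * T ≤ A * κ ^ 2 * G ^ 2 → κ ^ 2 ≤ C * G ^ 2 := by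
  set c := s / (2 * a - s * n) with hc
  have hd : 0 < 2 * a - s * n := by linarith
  have hc0 : 0 < c := div_pos hs hd
  set M := 2 * c * (a - 1) ^ 2 + 4 * |a - 1| + 8 * a / s + a * (s + 1) ^ 2 / s with hM
  have hM0 : 0 ≤ M := by positivity
  refine ⟨2 / (s * a) * (4 * M + 8 * |a - 1| + A), by positivity, ?_⟩
  intro κ G E h T S t hκ ht htS hhT hT hmain
  have e1 : s / a * (a * κ ^ 2 + E) ^ 2 - 2 * c * ((a - 1) * h) ^ 2 ≤ 2 * S := by
    have h1 : s / a * (a * κ ^ 2 + E) ^ 2 - 2 * c * ((a - 1) * h) ^ 2 ≤ 2 / n * t ^ 2 := by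
      have : 2 / n * t ^ 2 - (s / a * (a * κ ^ 2 + E) ^ 2 - 2 * c * ((a - 1) * h) ^ 2) =
          ((2 * a - s * n) * (a * κ ^ 2 + E) + 2 * a * ((a - 1) * h)) ^ 2 /
            (n * a * (2 * a - s * n)) := by
        have key : ∀ D : ℝ, 0 < D → ∀ s : ℝ, s = (2 * a - D) / n → 2 / n * t ^ 2 -
            (s / a * (a * κ ^ 2 + E) ^ 2 - 2 * (s / D) * ((a - 1) * h) ^ 2) =
            (D * (a * κ ^ 2 + E) + 2 * a * ((a - 1) * h)) ^ 2 / (n * a * D) := by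
          rintro D hD s rfl
          rw [ht]; field_simp; ring
        exact key _ hd s (by field_simp; ring)
      have : 0 ≤ ((2 * a - s * n) * (a * κ ^ 2 + E) + 2 * a * ((a - 1) * h)) ^ 2 /
            (n * a * (2 * a - s * n)) := by positivity
      linarith
    have h2 : 2 / n * t ^ 2 ≤ 2 / n * (n * S) := by gcongr
    have h3 : 2 / n * (n * S) = 2 * S := by field_simp
    linarith
  have e2 : s / a * (a * κ ^ 2 + E) ^ 2 =
      s * a * κ ^ 4 + 2 * s * κ ^ 2 * E + s / a * E ^ 2 := by field_simp; ring
  have e3 : 4 * a * κ ^ 2 * h ≤ s * a / 2 * κ ^ 4 + 8 * a / s * h ^ 2 := by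
    have : s * a / 2 * κ ^ 4 + 8 * a / s * h ^ 2 - 4 * a * κ ^ 2 * h =
      a / (2 * s) * (s * κ ^ 2 - 4 * h) ^ 2 := by field_simp; ring
    have : 0 ≤ a / (2 * s) * (s * κ ^ 2 - 4 * h) ^ 2 := by positivity
    linarith
  have e4 : 2 * (s + 1) * E * h ≤ s / a * E ^ 2 + a * (s + 1) ^ 2 / s * h ^ 2 := by
    have : s / a * E ^ 2 + a * (s + 1) ^ 2 / s * h ^ 2 - 2 * (s + 1) * E * h =
      1 / (a * s) * (s * E - a * (s + 1) * h) ^ 2 := by field_simp; ring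
    have : 0 ≤ 1 / (a * s) * (s * E - a * (s + 1) * h) ^ 2 := by positivity
    linarith
  have e5 : -4 * (a - 1) * h ^ 2 ≤ 4 * |a - 1| * h ^ 2 := by
    nlinarith [neg_abs_le (a - 1), sq_nonneg h]
  have hT0 : 0 ≤ T := (sq_nonneg h).trans hhT
  have e6 : 2 * (a - 1) * T ≤ 2 * |a - 1| * T := by
    nlinarith [le_abs_self (a - 1)]
  have e7 : s * a / 2 * κ ^ 4 ≤ M * h ^ 2 + 2 * |a - 1| * T + A * κ ^ 2 * G ^ 2 := by
    rw [hM]; linarith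
  have e8 : M * h ^ 2 ≤ M * (4 * κ ^ 2 * G ^ 2) := by gcongr; linarith
  have e9 : 2 * |a - 1| * T ≤ 2 * |a - 1| * (4 * κ ^ 2 * G ^ 2) := by gcongr
  have hκ2 : 0 < κ ^ 2 := by positivity
  have e10 : κ ^ 2 * (s * a / 2 * κ ^ 2) ≤ κ ^ 2 * ((4 * M + 8 * |a - 1| + A) * G ^ 2) := by
    linarith
  have e11 := le_of_mul_le_mul_left e10 hκ2
  have e12 : 2 / (s * a) * (s * a / 2 * κ ^ 2) ≤
    2 / (s * a) * ((4 * M + 8 * |a - 1| + A) * G ^ 2) := by gcongr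
  have e13 : 2 / (s * a) * (s * a / 2 * κ ^ 2) = κ ^ 2 := by field_simp
  linarith

set_option maxHeartbeats 1000000 in
/-- Bernstein's gradient estimate for negative solutions. -/
theorem exists_gradient_estimate (hN : 2 ≤ N) {p q : ℝ} (hp : 1 < p) (hq1 : p - 1 < q)
    (hq2 : q < (N : ℝ) * (p - 1) / ((N : ℝ) - 1)) :
    ∃ C, 0 ≤ C ∧ ∀ (G : Set (EuclideanSpace ℝ (Fin N))) (u : EuclideanSpace ℝ (Fin N) → ℝ),
      IsOpen G → IsStrongSolution p q G u → (∀ x ∈ G, u x < 0) →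
      ∀ x₀ ρ, 0 < ρ → closedBall x₀ ρ ⊆ G →
        ‖gradient u x₀‖ ^ 2 * ρ ^ 2 ≤ C * u x₀ ^ 2 := by
  have hN' : (2 : ℝ) ≤ N := by exact_mod_cast hN
  have hsn : (q - p + 1) * N < 2 * (p - 1) := by
    have h1 : (0 : ℝ) < N - 1 := by linarith
    rw [lt_div_iff₀ h1] at hq2
    have h2 : (q - p + 1) * (N - 1) < p - 1 := by linarith
    nlinarith
  obtain ⟨C, hC0, hC⟩ := exists_bernstein_constant (n := N) (a := p - 1) (s := q - p + 1)
    (A := 28 * (N + (p - 2))) (by linarith) (by linarith) (by linarith) hsn (by linarith)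
  refine ⟨C, hC0, ?_⟩
  intro G u hG hu hneg x₀ ρ hρ hball
  by_cases hg0 : gradient u x₀ = 0
  · rw [hg0, norm_zero, zero_pow two_ne_zero, zero_mul]; positivity
  set U := {x | x ∈ G ∧ gradient u x ≠ 0} with hUdef
  have hU : IsOpen U := hu.isOpen_regular hG
  set w : EuclideanSpace ℝ (Fin N) → ℝ := fun y => Real.log (-u y) with hw
  have huw : ∀ y ∈ U, u y = -Real.exp (w y) := by
    intro y hy
    rw [hw]; simp only
    rw [Real.exp_log (by linarith [hneg y hy.1])]; ring
  have hw3 : ContDiffOn ℝ 3 w U :=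
    (hu.2.1.neg).log fun y hy => by have := hneg y hy.1; linarith
  have hw2 : ContDiffOn ℝ 2 w U := hw3.of_le (by norm_num)
  have hdw : ∀ a, ∀ y ∈ U, dirDeriv a u y = u y * dirDeriv a w y := by
    intro a y hy
    rw [dirDeriv_exp_neg hU hw2 huw hy, huw y hy]; ring
  have hzu : ∀ b : OrthonormalBasis (Fin N) ℝ (EuclideanSpace ℝ (Fin N)), ∀ y ∈ U,
      ‖gradient u y‖ ^ 2 / u y ^ 2 = ∑ k, dirDeriv (b k) w y ^ 2 := by
    intro b y hy
    rw [norm_gradient_sq b, div_eq_iff (pow_ne_zero 2 (hneg y hy.1).ne), Finset.sum_mul]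
    refine Finset.sum_congr rfl fun k _ => ?_
    rw [hdw _ y hy]; ring
  set F : EuclideanSpace ℝ (Fin N) → ℝ :=
    fun y => (ρ ^ 2 - ‖y - x₀‖ ^ 2) ^ 2 * (‖gradient u y‖ ^ 2 / u y ^ 2) with hF
  have hFc : ContinuousOn F (closedBall x₀ ρ) := by
    have h1 : ContinuousOn (fun x => ‖gradient u x‖) G := by
      simp_rw [← norm_fderiv_eq_norm_gradient]
      exact (hu.1.continuousOn_fderiv_of_isOpen hG le_rfl).norm
    refine ContinuousOn.mul (by fun_prop) (((h1.mono hball).pow 2).div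
      ((hu.1.continuousOn.mono hball).pow 2) fun y hy => ?_)
    exact pow_ne_zero 2 (hneg y (hball hy)).ne
  obtain ⟨x, hx, hmax⟩ := (isCompact_closedBall x₀ ρ).exists_isMaxOn
    (nonempty_closedBall.2 hρ.le) hFc
  have hF0 : F x₀ = ρ ^ 4 * (‖gradient u x₀‖ ^ 2 / u x₀ ^ 2) := by
    rw [hF]; simp only [sub_self, norm_zero]; ring
  have hux₀ := hneg x₀ (hball (mem_closedBall_self hρ.le))
  have hF0pos : 0 < F x₀ := by
    rw [hF0]
    have := norm_pos_iff.2 hg0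
    have := hux₀.ne
    positivity
  have hFx : F x₀ ≤ F x := hmax (mem_closedBall_self hρ.le)
  have hFxpos : 0 < F x := hF0pos.trans_le hFx
  have hxU : x ∈ U := by
    refine ⟨hball hx, fun h => hFxpos.ne' ?_⟩
    rw [hF]; simp [h]
  have hdρ : ‖x - x₀‖ ≤ ρ := by simpa [dist_eq_norm] using hx
  set η := ρ ^ 2 - ‖x - x₀‖ ^ 2 with hη
  have hη0 : 0 < η := by
    refine lt_of_le_of_ne ?_ fun h => hFxpos.ne' ?_
    · rw [hη]; nlinarith [norm_nonneg (x - x₀)]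
    · rw [hF]; simp only; rw [← hη, ← h]; ring
  have hxlt : ‖x - x₀‖ < ρ := by
    by_contra! h
    have : ρ ^ 2 ≤ ‖x - x₀‖ ^ 2 := by gcongr
    linarith
  obtain ⟨b, hb⟩ := exists_adapted_basis (⟨0, by omega⟩ : Fin N) (neg_ne_zero.2 hxU.2)
  set i₀ : Fin N := ⟨0, by omega⟩
  have hux := hneg x hxU.1
  set κ := ‖gradient u x‖ / (-u x) with hκdef
  have hκ : 0 < κ := div_pos (norm_pos_iff.2 hxU.2) (by linarith)
  have hwx : ∀ i, dirDeriv (b i) w x = if i = i₀ then κ else 0 := by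
    intro i
    have h1 : dirDeriv (b i) u x = if i = i₀ then -‖gradient u x‖ else 0 := by
      have hb' : gradient u x = (-‖gradient u x‖) • b i₀ := by
        rw [neg_smul, ← norm_neg, ← hb, neg_neg]
      rw [← inner_gradient_eq_dirDeriv, hb', inner_smul_left,
        orthonormal_iff_ite.1 b.orthonormal, ← hb']
      by_cases h : i = i₀
      · simp [h]
      · simp [h, Ne.symm h]
    rw [hdw _ x hxU] at h1
    have : dirDeriv (b i) w x = (if i = i₀ then -‖gradient u x‖ else 0) / u x := by
      rw [← h1, mul_div_cancel_left₀ _ hux.ne]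
    rw [this]
    split_ifs
    · rw [hκdef]; field_simp
    · simp
  set z : EuclideanSpace ℝ (Fin N) → ℝ := fun y => ∑ k, dirDeriv (b k) w y ^ 2 with hz
  have hzx : z x = κ ^ 2 := by rw [hz]; simp [hwx]
  obtain ⟨htr, hz1, hz2⟩ := bochner_identity b hU (p := p) (s := q - p + 1) hw3
    (fun y hy => by
      rw [show (q - p + 1 + 3) / 2 = (q - p + 4) / 2 by ring]
      exact hu.log_equation b hG hw2 huw hy) hxU hκ hwx rfl (H := fun i j =>
        dirDeriv (b i) (dirDeriv (b j) w) x) (fun _ _ => rfl)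
  have cz : ContDiffOn ℝ 2 z U :=
    ContDiffOn.sum fun k _ => (hw3.dirDeriv hU (m := 2) (by norm_num) _).pow 2
  set K := κ ^ 2 * η ^ 2 with hK
  have hFxK : F x = K := by
    rw [hK, ← hzx, hz]; simp only; rw [← hzu b x hxU, hF]; ring
  have hjz := (lineJet_of_contDiffOn hU cz hxU).const_mul (-1)
  have hne : ∀ᶠ σ in 𝓝 (‖x - x₀‖ ^ 2), ρ ^ 2 - σ ≠ 0 := by
    have hc : ContinuousAt (fun σ : ℝ => ρ ^ 2 - σ) (‖x - x₀‖ ^ 2) := by fun_prop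
    exact hc.eventually_ne hη0.ne'
  have hjφ := lineJet_radial (x := x) (c := x₀) (ψ := fun σ => K * ((ρ ^ 2 - σ) ^ 2)⁻¹)
    (ψ' := fun σ => 2 * K * ((ρ ^ 2 - σ) ^ 3)⁻¹) (k := 6 * K * (η ^ 4)⁻¹)
    (hne.mono fun σ hσ => by
      have h1 : HasDerivAt (fun σ : ℝ => ρ ^ 2 - σ) (-1) σ := by
        simpa using (hasDerivAt_id σ).const_sub (ρ ^ 2)
      refine (((h1.fun_pow 2).fun_inv (pow_ne_zero 2 hσ)).const_mul K).congr_deriv ?_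
      field_simp; norm_num; ring)
    (by
      have h1 : HasDerivAt (fun σ : ℝ => ρ ^ 2 - σ) (-1) (‖x - x₀‖ ^ 2) := by
        simpa using (hasDerivAt_id (‖x - x₀‖ ^ 2)).const_sub (ρ ^ 2)
      refine (((h1.fun_pow 3).fun_inv (pow_ne_zero 3 hη0.ne')).const_mul (2 * K)).congr_deriv ?_
      rw [← hη]; field_simp; norm_num; ring)
  rw [← hη] at hjφ
  have hmin : IsLocalMin (fun y => K * ((ρ ^ 2 - ‖y - x₀‖ ^ 2) ^ 2)⁻¹ + -1 * z y) x := by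
    have hbx : ball x₀ ρ ∈ 𝓝 x := isOpen_ball.mem_nhds (by simpa [dist_eq_norm] using hxlt)
    filter_upwards [hU.mem_nhds hxU, hbx] with y hy hyb
    have h1 : F y ≤ K := by rw [← hFxK]; exact hmax (ball_subset_closedBall hyb)
    have h2 : ‖y - x₀‖ < ρ := by simpa [dist_eq_norm] using hyb
    have h3 : 0 < ρ ^ 2 - ‖y - x₀‖ ^ 2 := by nlinarith [norm_nonneg (y - x₀)]
    have h4 : F y = (ρ ^ 2 - ‖y - x₀‖ ^ 2) ^ 2 * z y := by
      rw [hF]; simp only; rw [hzu b y hy]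
    have h5 : z y ≤ K * ((ρ ^ 2 - ‖y - x₀‖ ^ 2) ^ 2)⁻¹ := by
      rw [← div_eq_mul_inv, le_div_iff₀ (by positivity)]; linarith
    have h6 : K * (η ^ 2)⁻¹ = z x := by rw [hzx, hK]; field_simp
    rw [← hη, h6]; linarith only [h5]
  have hlQ := fun a => (hjφ.add hjz).of_isLocalMin hmin a
  set d := x - x₀ with hd
  have hηρ : η ≤ ρ ^ 2 := by rw [hη]; nlinarith [sq_nonneg ‖d‖]
  have hDz : ∀ i, 2 * κ * dirDeriv (b i₀) (dirDeriv (b i) w) x = 4 * κ ^ 2 / η * inner ℝ d (b i) := by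
    intro i
    have := (hlQ (b i)).1
    rw [hz1 i] at this
    have h2 : 2 * (2 * K * (η ^ 3)⁻¹) = 4 * κ ^ 2 / η := by rw [hK]; field_simp; norm_num
    rw [h2] at this
    linarith
  have hsumd : ∑ i, inner ℝ d (b i) ^ 2 = ‖d‖ ^ 2 := by
    rw [← b.sum_sq_norm_inner_left]; simp
  have hT : ∑ k, dirDeriv (b i₀) (dirDeriv (b k) w) x ^ 2 ≤ 4 * κ ^ 2 * (ρ / η) ^ 2 := by
    have h1 : ∑ k, dirDeriv (b i₀) (dirDeriv (b k) w) x ^ 2 = (2 * κ / η) ^ 2 * ‖d‖ ^ 2 := by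
      rw [← hsumd, Finset.mul_sum]
      refine Finset.sum_congr rfl fun k _ => ?_
      have : dirDeriv (b i₀) (dirDeriv (b k) w) x = 2 * κ / η * inner ℝ d (b k) := by
        apply mul_left_cancel₀ (mul_pos two_pos hκ).ne'
        rw [hDz k]; ring
      rw [this]; ring
    rw [h1]
    calc (2 * κ / η) ^ 2 * ‖d‖ ^ 2 ≤ (2 * κ / η) ^ 2 * ρ ^ 2 := by gcongr
      _ = _ := by ring
  have hQ : ∀ i, dirDeriv (b i) (dirDeriv (b i) z) x ≤ 28 * κ ^ 2 * (ρ / η) ^ 2 := by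
    intro i
    have h1 := (hlQ (b i)).2
    have h2 : 4 * (6 * K * (η ^ 4)⁻¹) = 24 * κ ^ 2 / η ^ 2 := by rw [hK]; field_simp; norm_num
    have h3 : 2 * (2 * K * (η ^ 3)⁻¹) = 4 * κ ^ 2 / η := by rw [hK]; field_simp; norm_num
    rw [h2, h3, b.orthonormal.norm_eq_one] at h1
    have h4 : inner ℝ d (b i) ^ 2 ≤ ρ ^ 2 := by
      have : inner ℝ d (b i) ^ 2 ≤ ‖d‖ ^ 2 := by
        rw [← hsumd]
        exact Finset.single_le_sum (f := fun i => inner ℝ d (b i) ^ 2)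
          (fun _ _ => sq_nonneg _) (Finset.mem_univ i)
      exact this.trans (by gcongr)
    have h5 : 24 * κ ^ 2 / η ^ 2 * inner ℝ d (b i) ^ 2 ≤ 24 * κ ^ 2 / η ^ 2 * ρ ^ 2 := by gcongr
    have h6 : 4 * κ ^ 2 / η ≤ 4 * κ ^ 2 / η ^ 2 * ρ ^ 2 := by
      rw [show 4 * κ ^ 2 / η = 4 * κ ^ 2 / η ^ 2 * η by field_simp]
      gcongr
    have h7 : 28 * κ ^ 2 * (ρ / η) ^ 2 =
      24 * κ ^ 2 / η ^ 2 * ρ ^ 2 + 4 * κ ^ 2 / η ^ 2 * ρ ^ 2 := by ring_nf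
    rw [h7]; linarith
  have hwQ : ∑ i, pWeight p i₀ i * dirDeriv (b i) (dirDeriv (b i) z) x ≤
      28 * (N + (p - 2)) * κ ^ 2 * (ρ / η) ^ 2 := by
    calc _ ≤ ∑ i, pWeight p i₀ i * (28 * κ ^ 2 * (ρ / η) ^ 2) :=
          Finset.sum_le_sum fun i _ => mul_le_mul_of_nonneg_left (hQ i) (pWeight_nonneg hp _ _)
      _ = _ := by
          rw [sum_pWeight_mul]; simp; ring
  have hfin := hC κ (ρ / η) (Real.exp ((q - p + 1) * w x) * (κ ^ 2) ^ ((q - p + 1 + 1) / 2))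
    (dirDeriv (b i₀) (dirDeriv (b i₀) w) x)
    (∑ k, dirDeriv (b i₀) (dirDeriv (b k) w) x ^ 2)
    (∑ i, ∑ j, dirDeriv (b i) (dirDeriv (b j) w) x ^ 2)
    (∑ i, dirDeriv (b i) (dirDeriv (b i) w) x) hκ (by rw [htr]; ring) (by
      have h1 := sq_sum_le_card_mul_sum_sq (s := Finset.univ)
        (f := fun i => dirDeriv (b i) (dirDeriv (b i) w) x)
      rw [Finset.card_univ, Fintype.card_fin] at h1
      refine h1.trans (mul_le_mul_of_nonneg_left (Finset.sum_le_sum fun i _ => ?_) (by linarith))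
      exact Finset.single_le_sum (f := fun j => dirDeriv (b i) (dirDeriv (b j) w) x ^ 2)
        (fun _ _ => sq_nonneg _) (Finset.mem_univ i))
    (Finset.single_le_sum (f := fun j => dirDeriv (b i₀) (dirDeriv (b j) w) x ^ 2)
        (fun _ _ => sq_nonneg _) (Finset.mem_univ i₀)) hT (by
      refine le_trans (le_of_eq ?_) hwQ
      rw [hz2]; ring)
  have hK2 : K ≤ C * ρ ^ 2 := by
    calc K ≤ C * (ρ / η) ^ 2 * η ^ 2 := by rw [hK]; gcongr
      _ = C * ρ ^ 2 := by field_simp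
  rw [hF0, hFxK] at hFx
  have h1 : ρ ^ 2 * (ρ ^ 2 * (‖gradient u x₀‖ ^ 2 / u x₀ ^ 2)) ≤ ρ ^ 2 * C := by linarith
  have h2 := le_of_mul_le_mul_left h1 (by positivity)
  rw [← mul_div_assoc, div_le_iff₀ (pow_pos (neg_pos.2 hux₀) 2 |>.trans_eq (neg_sq _))] at h2
  linarith

end GradientEstimate

section Barriers

variable {N : ℕ}

/-- The profile of the fundamental solution `mup`. -/
noncomputable def muRad (N : ℕ) (p r : ℝ) : ℝ :=
  if p < N then ((p - 1) / ((N : ℝ) - p)) * r ^ ((p - (N : ℝ)) / (p - 1)) else -Real.log r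

theorem mup_eq_muRad (p : ℝ) (x : EuclideanSpace ℝ (Fin N)) : mup N p x = muRad N p ‖x‖ := rfl

theorem hasDerivAt_muRad {p β r : ℝ} (hp : 1 < p) (hpN : p ≤ N) (hβ : β * (p - 1) = N - p)
    (hr : 0 < r) : HasDerivAt (muRad N p) (-r ^ (-β - 1)) r := by
  have hp1 : p - 1 ≠ 0 := by linarith
  have hb : (p - (N : ℝ)) / (p - 1) = -β := by rw [div_eq_iff hp1]; linarith
  rcases hpN.lt_or_eq with h | h
  · have h1 : (N : ℝ) - p ≠ 0 := by linarith
    have h2 : muRad N p = fun r => ((p - 1) / ((N : ℝ) - p)) * r ^ (-β) := by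
      funext r; rw [muRad, if_pos h, hb]
    rw [h2]
    refine ((Real.hasDerivAt_rpow_const (p := -β) (Or.inl hr.ne')).const_mul _).congr_deriv ?_
    rw [← hβ]
    have : β ≠ 0 := by rintro rfl; apply h1; linarith
    field_simp
  · have h2 : muRad N p = fun r => -Real.log r := by
      funext r; rw [muRad, if_neg (by linarith)]
    have h3 : β = 0 := by
      have : β * (p - 1) = 0 := by rw [hβ, h]; ring
      exact (mul_eq_zero.1 this).resolve_right hp1
    rw [h2, h3]
    refine (Real.hasDerivAt_log hr.ne').neg.congr_deriv ?_
    rw [show (-0 - 1 : ℝ) = -1 by ring, Real.rpow_neg_one]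

theorem strictAntiOn_muRad {p : ℝ} (hp : 1 < p) (hpN : p ≤ N) :
    StrictAntiOn (muRad N p) (Ioi 0) := by
  have hβ : ((N : ℝ) - p) / (p - 1) * (p - 1) = N - p := div_mul_cancel₀ _ (by linarith)
  refine strictAntiOn_of_deriv_neg (convex_Ioi 0) (fun r hr =>
    (hasDerivAt_muRad hp hpN hβ hr).continuousAt.continuousWithinAt) fun r hr => ?_
  rw [interior_Ioi] at hr
  rw [(hasDerivAt_muRad hp hpN hβ hr).deriv, neg_lt_zero]
  exact Real.rpow_pos_of_pos hr _

theorem tendsto_muRad {p : ℝ} (hp : 1 < p) (hpN : p ≤ N) :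
    Tendsto (muRad N p) (𝓝[>] 0) atTop := by
  rcases hpN.lt_or_eq with h | h
  · have h2 : muRad N p = fun r => ((p - 1) / ((N : ℝ) - p)) * r ^ ((p - (N : ℝ)) / (p - 1)) := by
      funext r; rw [muRad, if_pos h]
    rw [h2]
    refine (tendsto_rpow_neg_nhdsGT_zero ?_).const_mul_atTop (div_pos ?_ ?_)
    · exact div_neg_of_neg_of_pos (by linarith) (by linarith)
    · linarith
    · linarith
  · have h2 : muRad N p = fun r => -Real.log r := by
      funext r; rw [muRad, if_neg (by linarith)]
    rw [h2]
    exact tendsto_neg_atBot_atTop.comp Real.tendsto_log_nhdsGT_zero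

theorem le_muRad_mul {p β r ρ : ℝ} (hp : 1 < p) (hpN : p ≤ N) (hβ : β * (p - 1) = N - p)
    (hr : 0 < r) (hρ : 0 < ρ) : ρ ^ (-β) * muRad N p r - |Real.log ρ| ≤ muRad N p (r * ρ) := by
  have hp1 : p - 1 ≠ 0 := by linarith
  rcases hpN.lt_or_eq with h | h
  · have hb : (p - (N : ℝ)) / (p - 1) = -β := by rw [div_eq_iff hp1]; linarith
    rw [muRad, muRad, if_pos h, if_pos h, hb, Real.mul_rpow hr.le hρ.le]
    have := abs_nonneg (Real.log ρ)
    linarith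
  · have h3 : β = 0 := by
      have : β * (p - 1) = 0 := by rw [hβ, h]; ring
      exact (mul_eq_zero.1 this).resolve_right hp1
    rw [muRad, muRad, if_neg (by linarith), if_neg (by linarith), h3, neg_zero, Real.rpow_zero,
      Real.log_mul hr.ne' hρ.ne']
    have := le_abs_self (Real.log ρ)
    linarith

theorem sq_rpow {t : ℝ} (ht : 0 ≤ t) (a : ℝ) : (t ^ 2) ^ a = t ^ (2 * a) := by
  rw [Real.rpow_mul ht]; norm_num

theorem lineJet_radial_power {ψ : ℝ → ℝ} {β C : ℝ} {y : EuclideanSpace ℝ (Fin N)} (hy : y ≠ 0)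
    (hψ : ∀ σ, 0 < σ → HasDerivAt ψ (-(C / 2) * σ ^ (-β / 2 - 1)) σ) :
    LineJet (fun y => ψ (‖y‖ ^ 2)) y (fun a => -(C * ‖y‖ ^ (-β - 2) * inner ℝ y a))
      (fun a => C * ‖y‖ ^ (-β - 2) * ((β + 2) / ‖y‖ ^ 2 * inner ℝ y a ^ 2 - ‖a‖ ^ 2)) := by
  have hy' : 0 < ‖y‖ := norm_pos_iff.2 hy
  have hy2 : 0 < ‖y‖ ^ 2 := by positivity
  have h := lineJet_radial (x := y) (c := 0) (ψ := ψ)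
    (ψ' := fun σ => -(C / 2) * σ ^ (-β / 2 - 1))
    (k := -(C / 2) * ((-β / 2 - 1) * (‖y‖ ^ 2) ^ (-β / 2 - 1 - 1)))
    (by rw [sub_zero]; exact (lt_mem_nhds hy2).mono hψ)
    (by
      rw [sub_zero]
      exact (Real.hasDerivAt_rpow_const (Or.inl hy2.ne')).const_mul _)
  simp only [sub_zero] at h
  rw [Real.rpow_sub_one hy2.ne' (-β / 2 - 1)] at h
  have e : (‖y‖ ^ 2) ^ (-β / 2 - 1) = ‖y‖ ^ (-β - 2) := by
    rw [sq_rpow hy'.le]; congr 1; ring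
  simp only [e] at h
  convert h using 2 with a a
  · ring
  · field_simp; ring

theorem lineJet_muRad {p β : ℝ} (hp : 1 < p) (hpN : p ≤ N) (hβ : β * (p - 1) = N - p)
    {y : EuclideanSpace ℝ (Fin N)} (hy : y ≠ 0) :
    LineJet (fun y : EuclideanSpace ℝ (Fin N) => muRad N p ‖y‖) y
      (fun a => -(1 * ‖y‖ ^ (-β - 2) * inner ℝ y a))
      (fun a => 1 * ‖y‖ ^ (-β - 2) * ((β + 2) / ‖y‖ ^ 2 * inner ℝ y a ^ 2 - ‖a‖ ^ 2)) := by
  have h := lineJet_radial_power (ψ := fun σ => muRad N p (√σ)) (β := β) (C := 1) hy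
    (fun σ hσ => by
      have h1 := (hasDerivAt_muRad hp hpN hβ (Real.sqrt_pos.2 hσ)).comp σ
        (Real.hasDerivAt_sqrt hσ.ne')
      refine h1.congr_deriv ?_
      have hs : 0 < √σ := Real.sqrt_pos.2 hσ
      have e : σ ^ (-β / 2 - 1) = √σ ^ (-β - 1) / √σ := by
        rw [← Real.rpow_sub_one hs.ne', Real.sqrt_eq_rpow, ← Real.rpow_mul hσ.le]
        congr 1; ring
      rw [e]; field_simp)
  simpa only [Real.sqrt_sq (norm_nonneg _)] using h

theorem lineJet_norm_rpow (β : ℝ) {y : EuclideanSpace ℝ (Fin N)} (hy : y ≠ 0) :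
    LineJet (fun y : EuclideanSpace ℝ (Fin N) => ‖y‖ ^ (-β)) y
      (fun a => -(β * ‖y‖ ^ (-β - 2) * inner ℝ y a))
      (fun a => β * ‖y‖ ^ (-β - 2) * ((β + 2) / ‖y‖ ^ 2 * inner ℝ y a ^ 2 - ‖a‖ ^ 2)) := by
  have h := lineJet_radial_power (ψ := fun σ => σ ^ (-β / 2)) (β := β) (C := β) hy
    (fun σ hσ => Real.hasDerivAt_rpow_const (Or.inl hσ.ne')
      |>.congr_deriv (by ring))
  convert h using 2 with y
  rw [sq_rpow (norm_nonneg _)]; congr 1; ring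

theorem lineJet_exp_norm_sq (α : ℝ) (c y : EuclideanSpace ℝ (Fin N)) :
    LineJet (fun y => Real.exp (-(α / 2) * ‖y - c‖ ^ 2)) y
      (fun a => -(α * Real.exp (-(α / 2) * ‖y - c‖ ^ 2) * inner ℝ (y - c) a))
      (fun a => α * Real.exp (-(α / 2) * ‖y - c‖ ^ 2) *
        (α * inner ℝ (y - c) a ^ 2 - ‖a‖ ^ 2)) := by
  have h1 : ∀ σ : ℝ, HasDerivAt (fun σ => Real.exp (-(α / 2) * σ))
      (-(α / 2) * Real.exp (-(α / 2) * σ)) σ := fun σ => by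
    refine (((hasDerivAt_id σ).const_mul (-(α / 2))).exp).congr_deriv ?_
    simp; ring
  have h := lineJet_radial (x := y) (c := c) (Eventually.of_forall h1)
    ((h1 (‖y - c‖ ^ 2)).const_mul (-(α / 2)))
  convert h using 2 with a a
  · ring
  · ring

/-- The sign condition behind the barriers used below. -/
theorem barrier_sum_nonneg (b : OrthonormalBasis (Fin N) ℝ (EuclideanSpace ℝ (Fin N)))
    {p β α c e : ℝ} (hβ : β * (p - 1) = N - p) (hβ0 : 0 ≤ β) (i₀ : Fin N)
    {y d g : EuclideanSpace ℝ (Fin N)} (hy : y ≠ 0) (hg : g = -(c • y) - e • d)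
    (hgb : g = ‖g‖ • b i₀) (hc : 0 ≤ c) (he : 0 ≤ e) (hdy : ‖d‖ ≤ ‖y‖)
    (hce : c = 0 ∨ e * ‖d‖ * (|p - 2| * (β + 2)) ≤ c * ‖y‖)
    (hα0 : 0 ≤ α) (hα : e ≠ 0 → N + |p - 2| + 1 ≤ α * min 1 (p - 1) * ‖d‖ ^ 2) :
    0 ≤ ∑ i, pWeight p i₀ i * (c * ((β + 2) / ‖y‖ ^ 2 * inner ℝ y (b i) ^ 2 - ‖b i‖ ^ 2) +
      e * (α * inner ℝ d (b i) ^ 2 - ‖b i‖ ^ 2)) := by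
  have hy' : 0 < ‖y‖ := norm_pos_iff.2 hy
  have hs : ∀ v : EuclideanSpace ℝ (Fin N), ∑ i, inner ℝ v (b i) ^ 2 = ‖v‖ ^ 2 := fun v => by
    rw [← b.sum_sq_norm_inner_left]; simp
  have hle : ∀ v : EuclideanSpace ℝ (Fin N), inner ℝ v (b i₀) ^ 2 ≤ ‖v‖ ^ 2 := fun v => by
    rw [← hs]
    exact Finset.single_le_sum (f := fun i => inner ℝ v (b i) ^ 2)
      (fun _ _ => sq_nonneg _) (Finset.mem_univ i₀)
  set Y := inner ℝ y (b i₀) with hY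
  set D := inner ℝ d (b i₀) with hD
  have hperp : c ^ 2 * (‖y‖ ^ 2 - Y ^ 2) = e ^ 2 * (‖d‖ ^ 2 - D ^ 2) := by
    have hsplit : ∀ v : EuclideanSpace ℝ (Fin N), ‖v‖ ^ 2 - inner ℝ v (b i₀) ^ 2 =
        ∑ i ∈ Finset.univ.erase i₀, inner ℝ v (b i) ^ 2 := fun v => by
      rw [← hs, ← Finset.add_sum_erase _ _ (Finset.mem_univ i₀)]; ring
    rw [hY, hD, hsplit, hsplit, Finset.mul_sum, Finset.mul_sum]
    refine Finset.sum_congr rfl fun i hi => ?_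
    have h0 : inner ℝ g (b i) = 0 := by
      rw [hgb, inner_smul_left, orthonormal_iff_ite.1 b.orthonormal,
        if_neg (Finset.ne_of_mem_erase hi).symm, mul_zero]
    rw [hg, inner_sub_left, inner_neg_left, inner_smul_left, inner_smul_left] at h0
    simp only [conj_trivial] at h0
    have : c * inner ℝ y (b i) = -(e * inner ℝ d (b i)) := by linarith
    rw [← mul_pow, ← mul_pow, this, neg_sq]
  rw [sum_pWeight_mul]
  simp only [b.orthonormal.norm_eq_one, Finset.sum_add_distrib, ← Finset.mul_sum,
    Finset.sum_sub_distrib, hs, ← hY, ← hD]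
  simp only [one_pow, Finset.sum_const, Finset.card_univ, Fintype.card_fin, nsmul_eq_mul, mul_one]
  have hYy := hle y
  have hDd := hle d
  rw [← hY] at hYy
  rw [← hD] at hDd
  have e1 : c * ((β + 2) / ‖y‖ ^ 2 * ‖y‖ ^ 2 - N) + (p - 2) * (c * ((β + 2) / ‖y‖ ^ 2 * Y ^ 2 - 1)) =
      -((p - 2) * (β + 2) * (c * (‖y‖ ^ 2 - Y ^ 2) / ‖y‖ ^ 2)) := by
    have : (N : ℝ) = β * (p - 1) + p := by linarith
    rw [this]; field_simp; ring
  have e2 : (p - 2) * (β + 2) * (c * (‖y‖ ^ 2 - Y ^ 2) / ‖y‖ ^ 2) ≤ e := by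
    have h3 : |p - 2| * (β + 2) * (c * (‖y‖ ^ 2 - Y ^ 2) / ‖y‖ ^ 2) ≤ e := by
      rcases hce with h0 | h0
      · rw [h0]; simpa using he
      · rcases hc.eq_or_lt with hc0 | hc0
        · rw [← hc0]; simpa using he
        have h4 : c * (‖y‖ ^ 2 - Y ^ 2) ≤ e ^ 2 * ‖d‖ ^ 2 / c := by
          rw [le_div_iff₀ hc0]; nlinarith [sq_nonneg D, sq_nonneg e]
        have h5 : 0 ≤ |p - 2| * (β + 2) := by positivity
        calc |p - 2| * (β + 2) * (c * (‖y‖ ^ 2 - Y ^ 2) / ‖y‖ ^ 2)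
            ≤ |p - 2| * (β + 2) * (e ^ 2 * ‖d‖ ^ 2 / c / ‖y‖ ^ 2) := by gcongr
          _ = e * (e * ‖d‖ * (|p - 2| * (β + 2)) * ‖d‖) / (c * ‖y‖ ^ 2) := by field_simp
          _ ≤ e * (c * ‖y‖ * ‖y‖) / (c * ‖y‖ ^ 2) := by gcongr
          _ = e := by field_simp
    refine le_trans ?_ h3
    have : 0 ≤ c * (‖y‖ ^ 2 - Y ^ 2) / ‖y‖ ^ 2 := by
      have : 0 ≤ ‖y‖ ^ 2 - Y ^ 2 := by linarith
      positivity
    gcongr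
    exact le_abs_self _
  have e3 : e ≤ e * (α * ‖d‖ ^ 2 - N) + (p - 2) * (e * (α * D ^ 2 - 1)) := by
    rcases eq_or_ne e 0 with h0 | h0
    · rw [h0]; simp
    have h1 := hα h0
    have h2 : min 1 (p - 1) * ‖d‖ ^ 2 ≤ ‖d‖ ^ 2 + (p - 2) * D ^ 2 := by
      rcases le_total 2 p with h | h
      · rw [min_eq_left (by linarith)]; nlinarith [sq_nonneg D]
      · rw [min_eq_right (by linarith)]; nlinarith [sq_nonneg D]
    have h3 : α * (min 1 (p - 1) * ‖d‖ ^ 2) ≤ α * (‖d‖ ^ 2 + (p - 2) * D ^ 2) := by gcongr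
    have h4 : 1 ≤ (α * ‖d‖ ^ 2 - N) + (p - 2) * (α * D ^ 2 - 1) := by
      have := le_abs_self (p - 2); linarith
    nlinarith
  linarith

end Barriers

section Comparison

variable {N : ℕ}

/-- `φ` is, near the point `y`, a subsolution of the `p`-Laplace equation with nonzero gradient. -/
def IsSubsolutionAt (p : ℝ) (i₀ : Fin N) (φ : EuclideanSpace ℝ (Fin N) → ℝ)
    (y : EuclideanSpace ℝ (Fin N)) : Prop :=
  ∃ (l Q : EuclideanSpace ℝ (Fin N) → ℝ) (g : EuclideanSpace ℝ (Fin N)), g ≠ 0 ∧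
    (∀ a, l a = inner ℝ g a) ∧ LineJet φ y l Q ∧ (∀ (t : ℝ) a, Q (t • a) = t ^ 2 * Q a) ∧
    ∀ b : OrthonormalBasis (Fin N) ℝ (EuclideanSpace ℝ (Fin N)), g = ‖g‖ • b i₀ →
      0 ≤ ∑ i, pWeight p i₀ i * Q (b i)

theorem IsStrongSolution.not_isLocalMin_sub {p q : ℝ} (hp : 1 < p)
    {G : Set (EuclideanSpace ℝ (Fin N))}
    (hG : IsOpen G) {u : EuclideanSpace ℝ (Fin N) → ℝ} (hu : IsStrongSolution p q G u)
    {y : EuclideanSpace ℝ (Fin N)} {r m : ℝ} (hr : 0 < r) (hm : 0 < m) (hy : r • y ∈ G)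
    (i₀ : Fin N) {φ : EuclideanSpace ℝ (Fin N) → ℝ} (hφ : IsSubsolutionAt p i₀ φ y) :
    ¬ IsLocalMin (fun y => -u (r • y) - m * φ y) y := by
  intro hmin
  obtain ⟨l, Q, g, hg, hl, hj, hQ, hsum⟩ := hφ
  have hj' : LineJet φ (r⁻¹ • (r • y)) l Q := by rwa [inv_smul_smul₀ hr.ne']
  have hj2 := (hj'.comp_smul).const_mul m
  have hmin2 : IsLocalMin (fun x => -u x - m * φ (r⁻¹ • x)) (r • y) := by
    have hc : ContinuousAt (fun x : EuclideanSpace ℝ (Fin N) => r⁻¹ • x) (r • y) := by fun_prop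
    have hc := hc.tendsto
    rw [inv_smul_smul₀ hr.ne'] at hc
    have := hc.eventually hmin
    unfold IsLocalMin IsMinFilter
    simpa [smul_inv_smul₀ hr.ne', inv_smul_smul₀ hr.ne'] using this
  have hmr : 0 < m * r⁻¹ := by positivity
  obtain ⟨b, hb, hlt⟩ := hu.touching hp hG hy i₀ (g := (m * r⁻¹) • g)
    (smul_ne_zero hmr.ne' hg) (fun a => by
      rw [hl, inner_smul_left, inner_smul_right]; simp; ring) hj2 hmin2
  have hb' : g = ‖g‖ • b i₀ := by
    rw [norm_smul, Real.norm_of_nonneg hmr.le, mul_smul (m * r⁻¹) ‖g‖ (b i₀)] at hb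
    exact smul_right_injective _ hmr.ne' hb
  have h0 := hsum b hb'
  simp only [hQ] at hlt
  have : ∑ i, pWeight p i₀ i * (m * (r⁻¹ ^ 2 * Q (b i))) =
      m * r⁻¹ ^ 2 * ∑ i, pWeight p i₀ i * Q (b i) := by
    rw [Finset.mul_sum]; exact Finset.sum_congr rfl fun _ _ => by ring
  rw [this] at hlt
  have : 0 ≤ m * r⁻¹ ^ 2 * ∑ i, pWeight p i₀ i * Q (b i) := by positivity
  linarith

/-- Comparison principle on (rescaled) annuli. -/
theorem IsStrongSolution.annulus_comparison {p q : ℝ} (hp : 1 < p)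
    {G : Set (EuclideanSpace ℝ (Fin N))}
    (hG : IsOpen G) {u : EuclideanSpace ℝ (Fin N) → ℝ} (hu : IsStrongSolution p q G u)
    {r m : ℝ} (hr : 0 < r) (hm : 0 < m) (i₀ : Fin N) {φ : EuclideanSpace ℝ (Fin N) → ℝ}
    {c : EuclideanSpace ℝ (Fin N)} {r₁ r₂ : ℝ}
    (hA : ∀ y, r₁ ≤ ‖y - c‖ → ‖y - c‖ ≤ r₂ → r • y ∈ G)
    (hφc : ContinuousOn φ {y | r₁ ≤ ‖y - c‖ ∧ ‖y - c‖ ≤ r₂})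
    (hφ : ∀ y, r₁ < ‖y - c‖ → ‖y - c‖ < r₂ → IsSubsolutionAt p i₀ φ y)
    (h₁ : ∀ y, ‖y - c‖ = r₁ → m * φ y ≤ -u (r • y))
    (h₂ : ∀ y, ‖y - c‖ = r₂ → m * φ y ≤ -u (r • y)) (y : EuclideanSpace ℝ (Fin N))
    (hy₁ : r₁ ≤ ‖y - c‖) (hy₂ : ‖y - c‖ ≤ r₂) : m * φ y ≤ -u (r • y) := by
  set A : Set (EuclideanSpace ℝ (Fin N)) := {y | r₁ ≤ ‖y - c‖ ∧ ‖y - c‖ ≤ r₂} with hAdef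
  have hcomp : IsCompact A := by
    refine (isCompact_closedBall c r₂).of_isClosed_subset ?_ fun y hy => ?_
    · have hc : Continuous fun y : EuclideanSpace ℝ (Fin N) => ‖y - c‖ := by fun_prop
      exact (isClosed_le continuous_const hc).inter (isClosed_le hc continuous_const)
    · simpa [dist_eq_norm] using hy.2
  have hcont : ContinuousOn (fun y => -u (r • y) - m * φ y) A := by
    refine ContinuousOn.sub (ContinuousOn.neg ?_) (continuousOn_const.mul hφc)
    exact hu.1.continuousOn.comp (by fun_prop) fun y hy => hA y hy.1 hy.2
  obtain ⟨x, hx, hmin⟩ := hcomp.exists_isMinOn ⟨y, hy₁, hy₂⟩ hcont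
  by_contra! hlt
  have hxy : -u (r • x) - m * φ x ≤ -u (r • y) - m * φ y := hmin ⟨hy₁, hy₂⟩
  have hx₁ : r₁ < ‖x - c‖ := lt_of_le_of_ne hx.1 fun h => by
    have := h₁ x h.symm; linarith
  have hx₂ : ‖x - c‖ < r₂ := lt_of_le_of_ne hx.2 fun h => by
    have := h₂ x h; linarith
  refine hu.not_isLocalMin_sub hp hG hr hm (hA x hx.1 hx.2) i₀ (hφ x hx₁ hx₂) ?_
  have hn : A ∈ 𝓝 x := by
    have hc : ContinuousAt (fun y : EuclideanSpace ℝ (Fin N) => ‖y - c‖) x := by fun_prop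
    filter_upwards [hc.tendsto.eventually (lt_mem_nhds hx₁),
      hc.tendsto.eventually (gt_mem_nhds hx₂)] with z h1 h2 using ⟨h1.le, h2.le⟩
  exact hmin.isLocalMin hn

theorem isSubsolutionAt_muRad {p β : ℝ} (hp : 1 < p) (hpN : p ≤ N) (hβ : β * (p - 1) = N - p)
    (hβ0 : 0 ≤ β) (i₀ : Fin N) {a k : ℝ} (ha : 0 < a) {y : EuclideanSpace ℝ (Fin N)} (hy : y ≠ 0) :
    IsSubsolutionAt p i₀ (fun y => a * muRad N p ‖y‖ + k) y := by
  have hy' : 0 < ‖y‖ := norm_pos_iff.2 hy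
  have hD : 0 < a * ‖y‖ ^ (-β - 2) := mul_pos ha (Real.rpow_pos_of_pos hy' _)
  refine ⟨_, _, -((a * ‖y‖ ^ (-β - 2)) • y), neg_ne_zero.2 (smul_ne_zero hD.ne' hy), ?_,
    ((lineJet_muRad hp hpN hβ hy).const_mul a).add_const k, ?_, ?_⟩
  · intro v; rw [inner_neg_left, inner_smul_left]; simp; ring
  · intro t v; rw [inner_smul_right, norm_smul, Real.norm_eq_abs, mul_pow, mul_pow, sq_abs]; ring
  · intro b hb
    have := barrier_sum_nonneg b (α := 0) (e := 0) (d := 0) hβ hβ0 i₀ hy (by simp) hb hD.le le_rfl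
      (by simp) (Or.inr (by simp; positivity)) le_rfl (by simp)
    convert this using 3
    ring

/-- The fundamental solution is a barrier from below near the singularity. -/
theorem IsStrongSolution.muRad_le {p q R : ℝ} (hp : 1 < p) (hpN : p ≤ N) (i₀ : Fin N)
    {G : Set (EuclideanSpace ℝ (Fin N))}
    (hG : IsOpen G) {u : EuclideanSpace ℝ (Fin N) → ℝ} (hu : IsStrongSolution p q G u)
    (hneg : ∀ x ∈ G, u x < 0) (hR : ∀ x, x ≠ 0 → ‖x‖ ≤ R → x ∈ G) {a r : ℝ} (ha : 0 ≤ a)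
    (hr : 0 < r) (h : ∀ x, ‖x‖ = r → a * (muRad N p r - muRad N p R) ≤ -u x)
    (x : EuclideanSpace ℝ (Fin N)) (hx₁ : r ≤ ‖x‖) (hx₂ : ‖x‖ ≤ R) :
    a * (muRad N p ‖x‖ - muRad N p R) ≤ -u x := by
  have hne : ∀ y : EuclideanSpace ℝ (Fin N), r ≤ ‖y‖ → y ≠ 0 := fun y hy =>
    norm_pos_iff.1 (hr.trans_le hy)
  rcases ha.eq_or_lt with ha0 | ha0
  · rw [← ha0, zero_mul]; have := hneg x (hR x (hne x hx₁) hx₂); linarith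
  have hβ : ((N : ℝ) - p) / (p - 1) * (p - 1) = N - p := div_mul_cancel₀ _ (by linarith)
  have hβ0 : 0 ≤ ((N : ℝ) - p) / (p - 1) := div_nonneg (by linarith) (by linarith)
  have key := hu.annulus_comparison hp hG one_pos one_pos i₀ (c := 0) (r₁ := r) (r₂ := R)
    (φ := fun y => a * muRad N p ‖y‖ + -(a * muRad N p R))
    (by
      intro y h1 h2
      rw [sub_zero] at h1 h2
      rw [one_smul]; exact hR y (hne y h1) h2)
    (by
      intro y hy
      have hy0 : 0 < ‖y‖ := norm_pos_iff.2 (hne y (by simpa using hy.1))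
      refine ContinuousAt.continuousWithinAt (ContinuousAt.add (ContinuousAt.mul continuousAt_const
        ?_) continuousAt_const)
      exact ContinuousAt.comp (f := fun y : EuclideanSpace ℝ (Fin N) => ‖y‖)
        (hasDerivAt_muRad hp hpN hβ hy0).continuousAt (by fun_prop))
    (fun y h1 _ => isSubsolutionAt_muRad hp hpN hβ hβ0 i₀ ha0 (hne y (by simpa using h1.le)))
    (fun y hy => by
      rw [sub_zero] at hy
      have := h y hy
      simp only [one_smul, hy]; linarith)
    (fun y hy => by
      rw [sub_zero] at hy
      simp only [one_smul, hy]
      by_cases hy0 : y = 0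
      · exfalso
        rw [hy0, norm_zero] at hy
        linarith
      have := hneg y (hR y hy0 hy.le)
      linarith) x (by simpa using hx₁) (by simpa using hx₂)
  simp only [one_smul] at key
  linarith

theorem IsStrongSolution.exists_muRad_coefficient {p q R : ℝ} (hp : 1 < p) (hpN : p ≤ N)
    (i₀ : Fin N) {G : Set (EuclideanSpace ℝ (Fin N))}
    (hG : IsOpen G) {u : EuclideanSpace ℝ (Fin N) → ℝ} (hu : IsStrongSolution p q G u)
    (hneg : ∀ x ∈ G, u x < 0) (hR0 : 0 < R) (hR : ∀ x, x ≠ 0 → ‖x‖ ≤ R → x ∈ G) :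
    ∃ γ : ℝ, 0 ≤ γ ∧
      (∀ x, x ≠ 0 → ‖x‖ ≤ R → γ * (muRad N p ‖x‖ - muRad N p R) ≤ -u x) ∧
      ∀ a, γ < a → ∀ᶠ r in 𝓝[>] (0 : ℝ),
        ∃ x, ‖x‖ = r ∧ -u x < a * (muRad N p r - muRad N p R) := by
  set A : Set ℝ := {a | 0 ≤ a ∧
    ∀ x, x ≠ 0 → ‖x‖ ≤ R → a * (muRad N p ‖x‖ - muRad N p R) ≤ -u x} with hA
  have hA0 : (0 : ℝ) ∈ A := ⟨le_rfl, fun x hx hxR => by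
    rw [zero_mul]; have := hneg x (hR x hx hxR); linarith⟩
  have hpos : ∀ r, 0 < r → r < R → 0 < muRad N p r - muRad N p R := fun r h1 h2 =>
    sub_pos.2 (strictAntiOn_muRad hp hpN h1 hR0 h2)
  have hbdd : BddAbove A := by
    set x₁ : EuclideanSpace ℝ (Fin N) := EuclideanSpace.single i₀ (R / 2) with hx₁
    have hn : ‖x₁‖ = R / 2 := by
      rw [hx₁, PiLp.norm_single, Real.norm_of_nonneg (by positivity)]
    have hx0 : x₁ ≠ 0 := norm_pos_iff.1 (by rw [hn]; positivity)
    have hm : 0 < muRad N p ‖x₁‖ - muRad N p R := hpos _ (by rw [hn]; positivity) (by linarith)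
    refine ⟨-u x₁ / (muRad N p ‖x₁‖ - muRad N p R), fun a ha => ?_⟩
    rw [le_div_iff₀ hm]
    exact ha.2 x₁ hx0 (by linarith)
  refine ⟨sSup A, le_csSup hbdd hA0, ?_, ?_⟩
  · intro x hx hxR
    rcases hxR.eq_or_lt with h | h
    · rw [h, sub_self, mul_zero]; have := hneg x (hR x hx hxR); linarith
    have hm := hpos _ (norm_pos_iff.2 hx) h
    rw [← le_div_iff₀ hm]
    refine csSup_le ⟨0, hA0⟩ fun a ha => ?_
    rw [le_div_iff₀ hm]
    exact ha.2 x hx hxR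
  · intro a ha
    have ha0 : 0 ≤ a := (le_csSup hbdd hA0).trans ha.le
    have hna : a ∉ A := fun h => absurd (le_csSup hbdd h) (not_le.2 ha)
    have hna : ∃ x, x ≠ 0 ∧ ‖x‖ ≤ R ∧ -u x < a * (muRad N p ‖x‖ - muRad N p R) := by
      by_contra! h
      exact hna ⟨ha0, h⟩
    obtain ⟨x, hx, hxR, hxa⟩ := hna
    filter_upwards [Ioo_mem_nhdsGT (norm_pos_iff.2 hx)] with r hr
    by_contra! h
    have := hu.muRad_le hp hpN i₀ hG hneg hR ha0 hr.1 h x hr.2.le hxR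
    linarith

end Comparison

section Rescaled

variable {N : ℕ}

theorem half_norm_le_of_mem_closedBall {x y : EuclideanSpace ℝ (Fin N)}
    (hy : ‖y - x‖ ≤ ‖x‖ / 2) : ‖x‖ / 2 ≤ ‖y‖ ∧ ‖y‖ ≤ 3 / 2 * ‖x‖ := by
  have h1 := norm_sub_norm_le x y
  have h2 := norm_sub_norm_le y x
  rw [norm_sub_rev] at h1
  constructor <;> linarith

/-- Harnack inequality for rescaled solutions, with a constant tending to one on small balls. -/
theorem exists_rescaled_harnack (hN : 2 ≤ N) {p q R : ℝ} (hp : 1 < p) (hq1 : p - 1 < q)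
    (hq2 : q < (N : ℝ) * (p - 1) / ((N : ℝ) - 1)) {G : Set (EuclideanSpace ℝ (Fin N))}
    (hG : IsOpen G) {u : EuclideanSpace ℝ (Fin N) → ℝ} (hu : IsStrongSolution p q G u)
    (hneg : ∀ x ∈ G, u x < 0) (hR0 : 0 < R) (hR : ∀ x, x ≠ 0 → ‖x‖ ≤ R → x ∈ G) :
    ∃ C, 0 ≤ C ∧ ∀ x : EuclideanSpace ℝ (Fin N), x ≠ 0 → ∀ᶠ r in 𝓝[>] (0 : ℝ),
      ∀ y ∈ closedBall x (‖x‖ / 2), ∀ y' ∈ closedBall x (‖x‖ / 2),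
        -u (r • y') ≤ Real.exp (C / ‖x‖ * ‖y' - y‖) * -u (r • y) := by
  obtain ⟨C, hC0, hC⟩ := exists_gradient_estimate hN hp hq1 hq2
  have hgrad : ∀ z : EuclideanSpace ℝ (Fin N), z ≠ 0 → ‖z‖ ≤ R / 2 →
      ‖fderiv ℝ u z‖ * ‖z‖ ≤ 2 * √C * -u z := by
    intro z hz hzR
    have hz0 : 0 < ‖z‖ := norm_pos_iff.2 hz
    have huz := hneg z (hR z hz (by linarith))
    have h := hC G u hG hu hneg z (‖z‖ / 2) (by positivity) fun y hy => by
      rw [mem_closedBall, dist_eq_norm] at hy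
      obtain ⟨h1, h2⟩ := half_norm_le_of_mem_closedBall hy
      exact hR y (norm_pos_iff.1 (by linarith)) (by linarith)
    rw [← norm_fderiv_eq_norm_gradient] at h
    refine abs_le_of_sq_le_sq' (a := ‖fderiv ℝ u z‖ * ‖z‖) ?_ ?_ |>.2
    · rw [mul_pow, mul_pow, mul_pow, Real.sq_sqrt hC0]; nlinarith
    · have : 0 < -u z := by linarith
      positivity
  refine ⟨4 * √C, by positivity, fun x hx => ?_⟩
  have hx0 : 0 < ‖x‖ := norm_pos_iff.2 hx
  filter_upwards [Ioo_mem_nhdsGT (show 0 < R / (4 * ‖x‖) by positivity)] with r hr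
  have hr0 : 0 < r := hr.1
  have hrx : r * ‖x‖ ≤ R / 4 := by
    have := hr.2.le
    rw [le_div_iff₀ (by positivity)] at this
    linarith
  have hmem : ∀ y ∈ closedBall x (‖x‖ / 2), r • y ≠ 0 ∧ ‖r • y‖ ≤ R / 2 ∧ ‖x‖ / 2 ≤ ‖y‖ := by
    intro y hy
    rw [mem_closedBall, dist_eq_norm] at hy
    obtain ⟨h1, h2⟩ := half_norm_le_of_mem_closedBall hy
    refine ⟨smul_ne_zero hr0.ne' (norm_pos_iff.1 (by linarith)), ?_, h1⟩
    rw [norm_smul, Real.norm_of_nonneg hr0.le]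
    nlinarith
  have hpos : ∀ y ∈ closedBall x (‖x‖ / 2), 0 < -u (r • y) := by
    intro y hy
    obtain ⟨h1, h2, -⟩ := hmem y hy
    have := hneg _ (hR _ h1 (by linarith))
    linarith
  have hlog : ∀ y ∈ closedBall x (‖x‖ / 2), ∀ y' ∈ closedBall x (‖x‖ / 2),
      ‖Real.log (-u (r • y')) - Real.log (-u (r • y))‖ ≤ 4 * √C / ‖x‖ * ‖y' - y‖ := by
    intro y hy y' hy'
    refine Convex.norm_image_sub_le_of_norm_hasFDerivWithin_le
      (f := fun y => Real.log (-u (r • y)))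
      (f' := fun y => (-u (r • y))⁻¹ • -((fderiv ℝ u (r • y)).comp
        (r • ContinuousLinearMap.id ℝ (EuclideanSpace ℝ (Fin N))))) (fun z hz => ?_) (fun z hz => ?_)
      (convex_closedBall x (‖x‖ / 2)) hy hy'
    · obtain ⟨h1, h2, -⟩ := hmem z hz
      have hd : DifferentiableAt ℝ u (r • z) :=
        (hu.1.differentiableOn one_ne_zero).differentiableAt
          (hG.mem_nhds (hR _ h1 (by linarith)))
      have hs : HasFDerivAt (fun y : EuclideanSpace ℝ (Fin N) => r • y)
          (r • ContinuousLinearMap.id ℝ (EuclideanSpace ℝ (Fin N))) z :=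
        (hasFDerivAt_id z).const_smul r
      exact (((hd.hasFDerivAt.comp z hs).neg).log (hpos z hz).ne').hasFDerivWithinAt
    · obtain ⟨h1, h2, h3⟩ := hmem z hz
      have hp := hpos z hz
      have hg := hgrad _ h1 h2
      rw [norm_smul, Real.norm_of_nonneg hr0.le] at hg
      have hb : ‖(fderiv ℝ u (r • z)).comp
          (r • ContinuousLinearMap.id ℝ (EuclideanSpace ℝ (Fin N)))‖ ≤
          ‖fderiv ℝ u (r • z)‖ * r := by
        rw [ContinuousLinearMap.comp_smul, ContinuousLinearMap.comp_id, norm_smul,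
          Real.norm_of_nonneg hr0.le, mul_comm]
      rw [norm_smul, norm_neg, norm_inv, Real.norm_of_nonneg hp.le, inv_mul_le_iff₀ hp]
      refine hb.trans ?_
      rw [mul_div_assoc', le_div_iff₀ hx0]
      have := mul_nonneg (norm_nonneg (fderiv ℝ u (r • z))) hr0.le
      nlinarith
  intro y hy y' hy'
  have h := (le_abs_self _).trans (hlog y hy y' hy')
  rw [← Real.exp_log (hpos y' hy'), ← Real.exp_log (hpos y hy), ← Real.exp_add, Real.exp_le_exp]
  linarith

theorem isSubsolutionAt_barrier {p β α γ ε k : ℝ} (hβ : β * (p - 1) = N - p)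
    (hβ0 : 0 ≤ β) (i₀ : Fin N) (hγ : 0 ≤ γ) (hε : 0 < ε) (hα0 : 0 < α)
    {x y : EuclideanSpace ℝ (Fin N)} (hy : y ≠ 0) (hxy : y - x ≠ 0) (hle : ‖y - x‖ ≤ ‖y‖)
    (hα : N + |p - 2| + 1 ≤ α * min 1 (p - 1) * ‖y - x‖ ^ 2)
    (h : γ * β = 0 ∨ ε * α * ‖y - x‖ * (|p - 2| * (β + 2) + 1) < γ * β * ‖y‖ ^ (-β - 1)) :
    IsSubsolutionAt p i₀
      (fun y => γ * ‖y‖ ^ (-β) + (ε * Real.exp (-(α / 2) * ‖y - x‖ ^ 2) + k)) y := by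
  have hy' : 0 < ‖y‖ := norm_pos_iff.2 hy
  have hd' : 0 < ‖y - x‖ := norm_pos_iff.2 hxy
  set c := γ * β * ‖y‖ ^ (-β - 2) with hc
  set e := ε * α * Real.exp (-(α / 2) * ‖y - x‖ ^ 2) with he
  have hc0 : 0 ≤ c := by positivity
  have he0 : 0 < e := by positivity
  have hE : Real.exp (-(α / 2) * ‖y - x‖ ^ 2) ≤ 1 := by
    rw [Real.exp_le_one_iff]
    have : 0 ≤ α / 2 * ‖y - x‖ ^ 2 := by positivity
    linarith
  have heα : e ≤ ε * α := mul_le_of_le_one_right (by positivity) hE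
  have hK : 0 ≤ |p - 2| * (β + 2) := by positivity
  have hce : c = 0 ∨ e * ‖y - x‖ * (|p - 2| * (β + 2) + 1) < c * ‖y‖ := by
    rcases h with h | h
    · left; rw [hc, h, zero_mul]
    · right
      have h1 : c * ‖y‖ = γ * β * ‖y‖ ^ (-β - 1) := by
        rw [hc, mul_assoc, ← Real.rpow_add_one hy'.ne']; congr 2; ring
      rw [h1]
      refine lt_of_le_of_lt ?_ h
      gcongr
  have hg0 : -(c • y) - e • (y - x) ≠ 0 := by
    intro h0
    have h1 : e • (y - x) = -(c • y) := (sub_eq_zero.1 h0).symm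
    have h2 : e * ‖y - x‖ = c * ‖y‖ := by
      have := congrArg norm h1
      rwa [norm_neg, norm_smul, norm_smul, Real.norm_of_nonneg he0.le,
        Real.norm_of_nonneg hc0] at this
    have h3 : 0 < e * ‖y - x‖ := by positivity
    rcases hce with h4 | h4
    · rw [h4, zero_mul] at h2; linarith
    · nlinarith
  refine ⟨_, _, -(c • y) - e • (y - x), hg0, ?_,
    ((lineJet_norm_rpow β hy).const_mul γ).add
      (((lineJet_exp_norm_sq α x y).const_mul ε).add_const k), ?_, ?_⟩
  · intro v; rw [inner_sub_left (-(c • y)), inner_neg_left, inner_smul_left, inner_smul_left, hc, he]; simp; ring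
  · intro t v
    rw [inner_smul_right, inner_smul_right, norm_smul, Real.norm_eq_abs, mul_pow, mul_pow, mul_pow,
      sq_abs]
    ring
  · intro b hb
    have := barrier_sum_nonneg b (α := α) hβ hβ0 i₀ hy rfl hb hc0 he0.le hle
      (hce.imp_right fun h => by
        have h3 : 0 < e * ‖y - x‖ := by positivity
        nlinarith) hα0.le fun _ => hα
    convert this using 3
    rw [hc, he]
    ring

/-- A strict lower bound on a small ball propagates to a larger one. -/
theorem IsStrongSolution.strict_bound_spreads {p q β γ : ℝ} (hp : 1 < p)
    (hβ : β * (p - 1) = N - p) (hβ0 : 0 ≤ β) (hγ : 0 ≤ γ) (i₀ : Fin N)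
    {G : Set (EuclideanSpace ℝ (Fin N))}
    (hG : IsOpen G) {u : EuclideanSpace ℝ (Fin N) → ℝ} (hu : IsStrongSolution p q G u)
    {l : Filter ℝ} {m : ℝ → ℝ} (hl : ∀ᶠ r in l, 0 < r) (hm : ∀ᶠ r in l, 0 < m r)
    (hmem : ∀ a b : ℝ, 0 < a → ∀ᶠ r in l, ∀ y : EuclideanSpace ℝ (Fin N),
      a ≤ ‖y‖ → ‖y‖ ≤ b → r • y ∈ G)
    (hlow : ∀ a b δ : ℝ, 0 < a → 0 < δ → ∀ᶠ r in l, ∀ y : EuclideanSpace ℝ (Fin N),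
      a ≤ ‖y‖ → ‖y‖ ≤ b → m r * (γ * ‖y‖ ^ (-β) - δ) ≤ -u (r • y))
    {x y : EuclideanSpace ℝ (Fin N)} {κ c : ℝ} (hx : x ≠ 0) (hκ : 0 < κ) (hc : 0 < c)
    (h : ∀ᶠ r in l, ∀ z ∈ closedBall x κ, m r * (γ * ‖z‖ ^ (-β) + c) ≤ -u (r • z))
    (hy : ‖y - x‖ < ‖x‖ / 2) :
    ∃ c', 0 < c' ∧ ∀ᶠ r in l, m r * (γ * ‖y‖ ^ (-β) + c') ≤ -u (r • y) := by
  rcases le_or_gt ‖y - x‖ κ with hyκ | hyκ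
  · exact ⟨c, hc, h.mono fun r hr => hr y (by simpa [dist_eq_norm] using hyκ)⟩
  have hx0 : 0 < ‖x‖ := norm_pos_iff.2 hx
  have hp1 : 0 < min 1 (p - 1) := lt_min one_pos (by linarith)
  set α := (N + |p - 2| + 1) / (min 1 (p - 1) * κ ^ 2) with hα
  have hα0 : 0 < α := by positivity
  set K := |p - 2| * (β + 2) + 1 with hK
  have hK0 : 0 < K := by positivity
  obtain ⟨ε, hε, hεc, hεγ⟩ : ∃ ε, 0 < ε ∧ ε ≤ c ∧
      (γ * β = 0 ∨ ε * α * (‖x‖ / 2) * K < γ * β * (2 * ‖x‖) ^ (-β - 1)) := by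
    rcases (mul_nonneg hγ hβ0).eq_or_lt with h0 | h0
    · exact ⟨c, hc, le_rfl, Or.inl h0.symm⟩
    · have hA : 0 < γ * β * (2 * ‖x‖) ^ (-β - 1) := by positivity
      set B := α * (‖x‖ / 2) * K with hB
      have hB0 : 0 < B := by positivity
      refine ⟨min c (γ * β * (2 * ‖x‖) ^ (-β - 1) / (2 * B)), by positivity, min_le_left _ _,
        Or.inr ?_⟩
      have h1 := min_le_right c (γ * β * (2 * ‖x‖) ^ (-β - 1) / (2 * B))
      rw [le_div_iff₀ (by positivity)] at h1
      have : min c (γ * β * (2 * ‖x‖) ^ (-β - 1) / (2 * B)) * α * (‖x‖ / 2) * K =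
        min c (γ * β * (2 * ‖x‖) ^ (-β - 1) / (2 * B)) * B := by rw [hB]; ring
      rw [this]
      linarith
  set F : ℝ → ℝ := fun t => Real.exp (-(α / 2) * t ^ 2) with hF
  have hF1 : ∀ t, F t ≤ 1 := fun t => by
    rw [hF, Real.exp_le_one_iff]
    have : 0 ≤ α / 2 * t ^ 2 := by positivity
    linarith
  have hF0 : ∀ t, 0 < F t := fun t => Real.exp_pos _
  have hFlt : F (‖x‖ / 2) < F ‖y - x‖ := by
    rw [hF, Real.exp_lt_exp, neg_mul, neg_mul, neg_lt_neg_iff]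
    have := norm_nonneg (y - x)
    gcongr
  set δ := ε * (F ‖y - x‖ - F (‖x‖ / 2)) / 2 with hδ
  have hδ0 : 0 < δ := by
    have : 0 < F ‖y - x‖ - F (‖x‖ / 2) := sub_pos.2 hFlt
    positivity
  refine ⟨δ, hδ0, ?_⟩
  filter_upwards [h, hl, hm, hmem (‖x‖ / 2) (3 / 2 * ‖x‖) (by positivity),
    hlow (‖x‖ / 2) (3 / 2 * ‖x‖) δ (by positivity) hδ0] with r h hr hm hmem hlow
  have key := hu.annulus_comparison hp hG hr hm i₀ (c := x) (r₁ := κ) (r₂ := ‖x‖ / 2)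
    (φ := fun y => γ * ‖y‖ ^ (-β) + (ε * F ‖y - x‖ + (-(ε * F (‖x‖ / 2)) - δ)))
    (fun z _ h2 => by
      obtain ⟨h3, h4⟩ := half_norm_le_of_mem_closedBall h2
      exact hmem z h3 h4)
    (by
      refine ContinuousOn.add (continuousOn_const.mul fun z hz => ?_) (by fun_prop)
      obtain ⟨h3, h4⟩ := half_norm_le_of_mem_closedBall hz.2
      refine ContinuousAt.continuousWithinAt (ContinuousAt.rpow_const (by fun_prop) (Or.inl ?_))
      linarith)
    (fun z h1 h2 => by
      obtain ⟨h3, h4⟩ := half_norm_le_of_mem_closedBall h2.le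
      have hz0 : 0 < ‖z‖ := by linarith
      refine isSubsolutionAt_barrier hβ hβ0 i₀ hγ hε hα0 (norm_pos_iff.1 hz0)
        (norm_pos_iff.1 (hκ.trans h1)) (by linarith) ?_ (hεγ.imp_right fun h5 => ?_)
      · have : N + |p - 2| + 1 = α * min 1 (p - 1) * κ ^ 2 := by
          rw [hα]; field_simp
        rw [this]
        gcongr
      · refine lt_of_le_of_lt (b := ε * α * (‖x‖ / 2) * K) (by gcongr) (h5.trans_le ?_)
        refine mul_le_mul_of_nonneg_left ?_ (mul_nonneg hγ hβ0)
        exact Real.rpow_le_rpow_of_nonpos hz0 (by linarith) (by linarith))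
    (fun z hz => by
      refine le_trans ?_ (h z (by simp [dist_eq_norm, hz]))
      refine mul_le_mul_of_nonneg_left ?_ hm.le
      have h1 := mul_le_of_le_one_right hε.le (hF1 ‖z - x‖)
      have h2 := mul_pos hε (hF0 (‖x‖ / 2))
      linarith)
    (fun z hz => by
      obtain ⟨h3, h4⟩ := half_norm_le_of_mem_closedBall hz.le
      refine le_trans (le_of_eq ?_) (hlow z h3 h4)
      simp only [hz]
      ring) y hyκ.le hy.le
  refine le_trans (le_of_eq ?_) key
  simp only [hδ]
  ring

end Rescaled

section UltrafilterLimit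

variable {N : ℕ}

/-- A family of functions on the punctured space satisfying a Harnack inequality, with a lower bound
in the limit and a strong minimum principle, attaining this bound somewhere on the unit sphere,
converges to the lower bound. -/
theorem tendsto_of_strong_minimum_principle (hN : 2 ≤ N) {W : Ultrafilter ℝ}
    {v : ℝ → EuclideanSpace ℝ (Fin N) → ℝ} {w : EuclideanSpace ℝ (Fin N) → ℝ} {γ C : ℝ}
    (hw : ∀ x, x ≠ 0 → ContinuousAt w x) (hwγ : ∀ x, ‖x‖ = 1 → w x = γ)
    (hharnack : ∀ x : EuclideanSpace ℝ (Fin N), x ≠ 0 → ∀ᶠ r in (W : Filter ℝ),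
      ∀ y ∈ closedBall x (‖x‖ / 2), ∀ y' ∈ closedBall x (‖x‖ / 2),
        v r y' ≤ Real.exp (C / ‖x‖ * ‖y' - y‖) * v r y)
    (hlow : ∀ x, x ≠ 0 → ∀ δ, 0 < δ → ∀ᶠ r in (W : Filter ℝ), w x - δ ≤ v r x)
    (hspread : ∀ x, x ≠ 0 → ∀ κ, 0 < κ → ∀ c, 0 < c →
      (∀ᶠ r in (W : Filter ℝ), ∀ z ∈ closedBall x κ, w z + c ≤ v r z) →
      ∀ y, ‖y - x‖ < ‖x‖ / 2 → ∃ c', 0 < c' ∧ ∀ᶠ r in (W : Filter ℝ), w y + c' ≤ v r y)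
    {ξ : ℝ → EuclideanSpace ℝ (Fin N)} (hξ : ∀ r, ‖ξ r‖ = 1)
    (hξγ : ∀ a, γ < a → ∀ᶠ r in (W : Filter ℝ), v r (ξ r) ≤ a)
    {x : EuclideanSpace ℝ (Fin N)} (hx : x ≠ 0) : Tendsto (fun r => v r x) W (𝓝 (w x)) := by
  have gap : ∀ x, x ≠ 0 → ¬ Tendsto (fun r => v r x) W (𝓝 (w x)) →
      ∃ κ, 0 < κ ∧ ∃ c, 0 < c ∧
        ∀ᶠ r in (W : Filter ℝ), ∀ z ∈ closedBall x κ, w z + c ≤ v r z := by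
    intro x hx hnot
    have hx0 : 0 < ‖x‖ := norm_pos_iff.2 hx
    rw [Metric.tendsto_nhds] at hnot
    push Not at hnot
    obtain ⟨ε, hε, hev⟩ := hnot
    have hev : ∀ᶠ r in (W : Filter ℝ), w x + ε ≤ v r x := by
      filter_upwards [hev, hlow x hx (ε / 2) (by positivity)] with r h1 h2
      rw [Real.dist_eq] at h1
      rcases le_abs.1 h1 with h | h <;> linarith
    have hcont : ContinuousAt
        (fun z => Real.exp (C / ‖x‖ * ‖x - z‖) * (w z + ε / 2)) x := by
      refine ContinuousAt.mul (by fun_prop) ((hw x hx).add continuousAt_const)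
    have hlt : Real.exp (C / ‖x‖ * ‖x - x‖) * (w x + ε / 2) < w x + ε := by
      rw [sub_self, norm_zero, mul_zero, Real.exp_zero]; linarith
    obtain ⟨κ, hκ, hsub⟩ := Metric.nhds_basis_closedBall.mem_iff.1
      (inter_mem (hcont.tendsto.eventually (gt_mem_nhds hlt))
        (closedBall_mem_nhds x (show 0 < ‖x‖ / 2 by positivity)))
    refine ⟨κ, hκ, ε / 2, by positivity, ?_⟩
    filter_upwards [hev, hharnack x hx] with r h1 h2 z hz
    have h3 := h2 z (hsub hz).2 x (mem_closedBall_self (by positivity))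
    have h4 : Real.exp (C / ‖x‖ * ‖x - z‖) * (w z + ε / 2) < w x + ε := (hsub hz).1
    exact (mul_lt_mul_iff_right₀ (Real.exp_pos _)).1 (h4.trans_le (h1.trans h3)) |>.le
  set S : Set (EuclideanSpace ℝ (Fin N)) :=
    {x | x ≠ 0 ∧ Tendsto (fun r => v r x) W (𝓝 (w x))} with hS
  set B : Set (EuclideanSpace ℝ (Fin N)) :=
    {x | x ≠ 0 ∧ ¬ Tendsto (fun r => v r x) W (𝓝 (w x))} with hB
  have hball : ∀ x ∈ B, ∀ y, ‖y - x‖ < ‖x‖ / 2 → y ∈ B := by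
    intro x hx y hy
    have hx0 : 0 < ‖x‖ := norm_pos_iff.2 hx.1
    obtain ⟨κ, hκ, c, hc, hev⟩ := gap x hx.1 hx.2
    obtain ⟨c', hc', hev'⟩ := hspread x hx.1 κ hκ c hc hev y hy
    refine ⟨norm_pos_iff.1 ?_, fun ht => ?_⟩
    · have := (half_norm_le_of_mem_closedBall hy.le).1
      linarith
    · have := ge_of_tendsto ht hev'
      linarith
  have hBo : IsOpen B := by
    rw [Metric.isOpen_iff]
    intro x hx
    have hx0 : 0 < ‖x‖ := norm_pos_iff.2 hx.1
    exact ⟨‖x‖ / 2, by positivity, fun y hy => hball x hx y (by simpa [dist_eq_norm] using hy)⟩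
  have hSo : IsOpen S := by
    rw [Metric.isOpen_iff]
    intro y hy
    have hy0 : 0 < ‖y‖ := norm_pos_iff.2 hy.1
    refine ⟨‖y‖ / 3, by positivity, fun x hx => ?_⟩
    rw [mem_ball, dist_eq_norm, norm_sub_rev] at hx
    have h1 := norm_sub_norm_le y x
    have hx0 : x ≠ 0 := norm_pos_iff.1 (by linarith)
    by_contra hxS
    have hxB : x ∈ B := ⟨hx0, fun ht => hxS ⟨hx0, ht⟩⟩
    exact (hball x hxB y (by linarith)).2 hy.2
  have hpre : IsPreconnected ({0}ᶜ : Set (EuclideanSpace ℝ (Fin N))) := by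
    refine (isConnected_compl_singleton_of_one_lt_rank ?_ 0).isPreconnected
    rw [← Module.finrank_eq_rank, finrank_euclideanSpace_fin]
    exact_mod_cast hN
  have hne : ∃ x, x ∈ S := by
    obtain ⟨ξ₀, hξ₀, hlim⟩ := (isCompact_sphere (0 : EuclideanSpace ℝ (Fin N)) 1).ultrafilter_le_nhds'
      (W.map ξ) (by
        rw [Ultrafilter.mem_map]
        exact univ_mem' fun r => by simp [hξ])
    rw [mem_sphere_zero_iff_norm] at hξ₀
    have h0 : ξ₀ ≠ 0 := norm_pos_iff.1 (by rw [hξ₀]; exact one_pos)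
    refine ⟨ξ₀, h0, by_contra fun hnot => ?_⟩
    obtain ⟨κ, hκ, c, hc, hev⟩ := gap ξ₀ h0 hnot
    have hξlim : Tendsto ξ W (𝓝 ξ₀) := hlim
    obtain ⟨r, h1, h2, h3⟩ := (hev.and ((hξγ (γ + c / 2) (by linarith)).and
      (hξlim.eventually (closedBall_mem_nhds ξ₀ hκ)))).exists
    have := h1 _ h3
    rw [hwγ _ (hξ r)] at this
    linarith
  rcases isPreconnected_iff_subset_of_disjoint.1 hpre S B hSo hBo
    (fun x hx => by
      by_cases ht : Tendsto (fun r => v r x) W (𝓝 (w x))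
      · exact Or.inl ⟨hx, ht⟩
      · exact Or.inr ⟨hx, ht⟩)
    (by
      ext x
      simp only [mem_inter_iff, mem_empty_iff_false, iff_false]
      exact fun h => h.2.2.2 h.2.1.2) with h | h
  · exact (h hx).2
  · obtain ⟨x, hx⟩ := hne
    exact ((h hx.1).2 hx.2).elim

end UltrafilterLimit

/-- Isolated singularities of negative solutions: `u/μ_p` has a limit `k ≤ 0`. -/
theorem negative_singularity (N : ℕ) (hN : 2 ≤ N) (p q : ℝ) (hp1 : 1 < p) (hpN : p ≤ N)
    (hq1 : p - 1 < q) (hq2 : q < (N : ℝ) * (p - 1) / ((N : ℝ) - 1))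
    (Ω : Set (EuclideanSpace ℝ (Fin N))) (hΩ : IsOpen Ω)
    (h0 : (0 : EuclideanSpace ℝ (Fin N)) ∈ Ω)
    (u : EuclideanSpace ℝ (Fin N) → ℝ) (hu : IsStrongSolution p q (Ω \ {0}) u)
    (hneg : ∀ x ∈ Ω \ {0}, u x < 0) :
    ∃ k : ℝ, k ≤ 0 ∧
      Filter.Tendsto (fun x => u x / mup N p x) (𝓝[≠] (0 : EuclideanSpace ℝ (Fin N)))
        (nhds k) := by
  obtain ⟨R, hR0, hRsub⟩ := Metric.nhds_basis_closedBall.mem_iff.1 (hΩ.mem_nhds h0)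
  have hG : IsOpen (Ω \ {0}) := hΩ.sdiff isClosed_singleton
  have hR : ∀ x, x ≠ 0 → ‖x‖ ≤ R → x ∈ Ω \ {0} := fun x hx hxR =>
    ⟨hRsub (by simpa using hxR), hx⟩
  let i₀ : Fin N := ⟨0, by omega⟩
  set β := ((N : ℝ) - p) / (p - 1) with hβdef
  have hβ : β * (p - 1) = N - p := div_mul_cancel₀ _ (by linarith)
  have hβ0 : 0 ≤ β := div_nonneg (by linarith) (by linarith)
  obtain ⟨γ, hγ, hlow, hup⟩ := hu.exists_muRad_coefficient hp1 hpN i₀ hG hneg hR0 hR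
  obtain ⟨C, hC0, hC⟩ := exists_rescaled_harnack hN hp1 hq1 hq2 hG hu hneg hR0 hR
  have hμ := tendsto_muRad hp1 hpN
  have hm : ∀ᶠ r in 𝓝[>] (0 : ℝ), 0 < muRad N p r := hμ.eventually_gt_atTop 0
  have hr0 : ∀ᶠ r in 𝓝[>] (0 : ℝ), 0 < r := self_mem_nhdsWithin
  have hmem : ∀ a b : ℝ, 0 < a → ∀ᶠ r in 𝓝[>] (0 : ℝ), ∀ y : EuclideanSpace ℝ (Fin N),
      a ≤ ‖y‖ → ‖y‖ ≤ b → r • y ≠ 0 ∧ ‖r • y‖ ≤ R := by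
    intro a b ha
    filter_upwards [hr0, Ioo_mem_nhdsGT (show 0 < R / (|b| + 1) by positivity)] with r hr hrR y h1 h2
    refine ⟨smul_ne_zero hr.ne' (norm_pos_iff.1 (ha.trans_le h1)), ?_⟩
    have h3 := hrR.2.le
    rw [le_div_iff₀ (by positivity)] at h3
    rw [norm_smul, Real.norm_of_nonneg hr.le]
    have := le_abs_self b
    nlinarith
  have hlowr : ∀ a b δ : ℝ, 0 < a → 0 < δ → ∀ᶠ r in 𝓝[>] (0 : ℝ),
      ∀ y : EuclideanSpace ℝ (Fin N), a ≤ ‖y‖ → ‖y‖ ≤ b →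
        muRad N p r * (γ * ‖y‖ ^ (-β) - δ) ≤ -u (r • y) := by
    intro a b δ ha hδ
    set L := |Real.log a| + |Real.log b| with hL
    filter_upwards [hr0, hmem a b ha,
      hμ.eventually_ge_atTop (γ * (L + muRad N p R) / δ)] with r hr hmem hbig y h1 h2
    obtain ⟨h3, h4⟩ := hmem y h1 h2
    have hy0 : 0 < ‖y‖ := ha.trans_le h1
    have h5 := hlow _ h3 h4
    rw [norm_smul, Real.norm_of_nonneg hr.le] at h5
    have h6 := le_muRad_mul hp1 hpN hβ hr hy0
    have h7 : |Real.log ‖y‖| ≤ L := by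
      have h8 := Real.log_le_log ha h1
      have h9 := Real.log_le_log hy0 h2
      rw [abs_le]
      have := neg_abs_le (Real.log a)
      have := le_abs_self (Real.log b)
      have := abs_nonneg (Real.log a)
      have := abs_nonneg (Real.log b)
      constructor <;> linarith
    rw [div_le_iff₀ hδ] at hbig
    have h8 : γ * (‖y‖ ^ (-β) * muRad N p r - L - muRad N p R) ≤
        γ * (muRad N p (r * ‖y‖) - muRad N p R) := by gcongr; linarith
    linarith
  have hmin : ∀ r, ∃ x : EuclideanSpace ℝ (Fin N), ‖x‖ = 1 ∧
      (0 < r → r < R → ∀ y : EuclideanSpace ℝ (Fin N), ‖y‖ = 1 → -u (r • x) ≤ -u (r • y)) := by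
    intro r
    have he : ‖(EuclideanSpace.single i₀ (1 : ℝ) : EuclideanSpace ℝ (Fin N))‖ = 1 := by simp
    by_cases hr : 0 < r ∧ r < R
    · obtain ⟨x, hx, hmin⟩ := (isCompact_sphere (0 : EuclideanSpace ℝ (Fin N)) 1).exists_isMinOn
        ⟨EuclideanSpace.single i₀ 1, by simp⟩ (f := fun y => -u (r • y)) (by
          refine ContinuousOn.neg (hu.1.continuousOn.comp (by fun_prop) fun y hy => ?_)
          have hy1 : ‖y‖ = 1 := by simpa using hy
          refine hR _ (smul_ne_zero hr.1.ne' (norm_pos_iff.1 (by rw [hy1]; exact one_pos))) ?_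
          rw [norm_smul, Real.norm_of_nonneg hr.1.le, hy1, mul_one]
          exact hr.2.le)
      exact ⟨x, by simpa using hx, fun _ _ y hy => hmin (by simpa using hy)⟩
    · exact ⟨_, he, fun h1 h2 => (hr ⟨h1, h2⟩).elim⟩
  choose ξ hξ using hmin
  have hξγ : ∀ a, γ < a → ∀ᶠ r in 𝓝[>] (0 : ℝ), -u (r • ξ r) / muRad N p r ≤ a := by
    intro a ha
    filter_upwards [hr0, hm, Ioo_mem_nhdsGT hR0, hup ((γ + a) / 2) (by linarith),
      hμ.eventually_ge_atTop (-((γ + a) / 2 * muRad N p R) / ((a - γ) / 2))]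
      with r hr hm hrR ⟨x, hx, hxu⟩ hbig
    have h1 := (hξ r).2 hr hrR.2 (r⁻¹ • x) (by
      rw [norm_smul, norm_inv, Real.norm_of_nonneg hr.le, hx, inv_mul_cancel₀ hr.ne'])
    rw [smul_inv_smul₀ hr.ne'] at h1
    rw [div_le_iff₀ (by linarith)] at hbig
    rw [div_le_iff₀ hm]
    linarith
  have hmain : ∀ W : Ultrafilter ℝ, (W : Filter ℝ) ≤ 𝓝[>] 0 →
      ∀ x : EuclideanSpace ℝ (Fin N), x ≠ 0 →
        Tendsto (fun r => -u (r • x) / muRad N p r) W (𝓝 (γ * ‖x‖ ^ (-β))) := by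
    intro W hW x hx
    refine tendsto_of_strong_minimum_principle hN (γ := γ) (C := C)
      (v := fun r x => -u (r • x) / muRad N p r) (w := fun x => γ * ‖x‖ ^ (-β))
      (fun x hx => ?_) (fun x hx => ?_) (fun x hx => ?_) (fun x hx δ hδ => ?_)
      (fun x hx κ hκ c hc h y hy => ?_) (fun r => (hξ r).1) (fun a ha => hW (hξγ a ha)) hx
    · exact continuousAt_const.mul
        (ContinuousAt.rpow_const (by fun_prop) (Or.inl (norm_pos_iff.2 hx).ne'))
    · simp [hx]
    · filter_upwards [hW (hC x hx), hW hm] with r h1 h2 y hy y' hy'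
      rw [← mul_div_assoc]
      exact div_le_div_of_nonneg_right (h1 y hy y' hy') h2.le
    · filter_upwards [hW (hlowr ‖x‖ ‖x‖ δ (norm_pos_iff.2 hx) hδ), hW hm] with r h1 h2
      rw [le_div_iff₀' h2]
      exact h1 x le_rfl le_rfl
    · obtain ⟨c', hc', hev⟩ := hu.strict_bound_spreads hp1 hβ hβ0 hγ i₀ hG (hW hr0) (hW hm)
        (fun a b ha => Filter.Eventually.filter_mono hW <| (hmem a b ha).mono
          fun r hr y h1 h2 => hR _ (hr y h1 h2).1 (hr y h1 h2).2)
        (fun a b δ ha hδ => hW (hlowr a b δ ha hδ)) hx hκ hc (by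
          filter_upwards [h, hW hm] with r h1 h2 z hz
          rw [← le_div_iff₀' h2]
          exact h1 z hz) hy
      refine ⟨c', hc', ?_⟩
      filter_upwards [hev, hW hm] with r h1 h2
      rw [le_div_iff₀' h2]
      exact h1
  refine ⟨-γ, by linarith, ?_⟩
  rw [tendsto_iff_ultrafilter]
  intro V hV
  have hnorm : Tendsto (fun x : EuclideanSpace ℝ (Fin N) => ‖x‖) V (𝓝[>] 0) :=
    tendsto_norm_nhdsNE_zero.mono_left hV
  have hne : ∀ᶠ x in (V : Filter (EuclideanSpace ℝ (Fin N))), x ≠ 0 := hV self_mem_nhdsWithin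
  obtain ⟨θ, hθ, hlim⟩ := (isCompact_sphere (0 : EuclideanSpace ℝ (Fin N)) 1).ultrafilter_le_nhds'
    (V.map fun x => ‖x‖⁻¹ • x) (by
      rw [Ultrafilter.mem_map]
      filter_upwards [hne] with x hx
      simp [norm_smul, hx])
  have hθlim : Tendsto (fun x => ‖x‖⁻¹ • x) V (𝓝 θ) := hlim
  rw [mem_sphere_zero_iff_norm] at hθ
  have hθ0 : θ ≠ 0 := norm_pos_iff.1 (by rw [hθ]; exact one_pos)
  have h1 : Tendsto (fun x : EuclideanSpace ℝ (Fin N) => -u (‖x‖ • θ) / muRad N p ‖x‖) V (𝓝 γ) := by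
    have := hmain (V.map fun x => ‖x‖) hnorm θ hθ0
    rw [hθ, Real.one_rpow, mul_one] at this
    exact tendsto_map'_iff.1 this
  have h2 : Tendsto (fun x : EuclideanSpace ℝ (Fin N) =>
      Real.exp (C / ‖θ‖ * ‖‖x‖⁻¹ • x - θ‖) * (-u (‖x‖ • θ) / muRad N p ‖x‖)) V (𝓝 γ) := by
    have hc : Continuous fun z : EuclideanSpace ℝ (Fin N) =>
        Real.exp (C / ‖θ‖ * ‖z - θ‖) := by fun_prop
    have := ((hc.tendsto θ).comp hθlim).mul h1
    simpa using this
  have h3 : Tendsto (fun x : EuclideanSpace ℝ (Fin N) => -u x / muRad N p ‖x‖) V (𝓝 γ) := by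
    refine tendsto_order.2 ⟨fun a ha => ?_, fun a ha => ?_⟩
    · filter_upwards [hne, hnorm.eventually hm,
        hnorm.eventually (hlowr 1 1 ((γ - a) / 2) one_pos (by linarith))] with x hx hm h
      have hx1 : ‖‖x‖⁻¹ • x‖ = 1 := by simp [norm_smul, hx]
      have := h (‖x‖⁻¹ • x) hx1.ge hx1.le
      rw [smul_inv_smul₀ (norm_ne_zero_iff.2 hx), hx1, Real.one_rpow, ← le_div_iff₀' hm] at this
      linarith
    · filter_upwards [hne, hnorm.eventually hm, hnorm.eventually (hC θ hθ0),
        h2.eventually (gt_mem_nhds ha),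
        hθlim.eventually (closedBall_mem_nhds θ (show 0 < ‖θ‖ / 2 by rw [hθ]; norm_num))]
        with x hx hm h h4 h5
      refine lt_of_le_of_lt ?_ h4
      have := h θ (mem_closedBall_self (by positivity)) _ h5
      rw [smul_inv_smul₀ (norm_ne_zero_iff.2 hx)] at this
      rw [← mul_div_assoc]
      exact div_le_div_of_nonneg_right this hm.le
  refine h3.neg.congr fun x => ?_
  rw [mup_eq_muRad, neg_div, neg_neg]
end
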